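/- arXiv:2401.10427 — 2 statements merged into one kernel-verified Lean document; each statement's English description precedes it below -/
import Mathlib

section
/- The natural densities δ_k of the level sets L_k = {n ∈ ℕ : ω*(n) = k} satisfy Σ_{k ≥ 1} δ_k = 1. -/
open Filter Real

/-- `ω*(n)`: the number of divisors `d` of `n` such that `d + 1` is prime. -/
def omegaStar (n : ℕ) : ℕ := (n.divisors.filter (fun d => Nat.Prime (d + 1))).card

/-!
Natural density is only finitely additive, so the point is that no mass escapes to `k = ∞`: the
sets `{n | T < ω*(n)}` must be shown to have density tending to `0`. A set having a natural density
has the same logarithmic density, so it is enough to bound sums of `1 / n`. If `T < ω*(n)`, then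
`n` is a multiple of some shifted prime `d = p - 1 ≥ T`. The sum of `1 / d` over all shifted primes
diverges, so a union bound is too crude; following Erdős and Wagstaff one exploits the prime
factors of `n`.

Fix `w`, and let `Ω_w` count prime factors up to `w` with multiplicity. Integers with `Ω_w` much
larger than its mean `log log w` are rare. The multiples of `d` with `Ω_w` not so large are rare on
average over the shifted primes `d` when `log log d` is only slightly larger than `log log w`: `d`
itself contributes about `log log w` to `Ω_w`, and so does the cofactor. Quantitatively, both
effects come from mean values of `v ^ Ω_w`, with `v = 5 / 4` and `v = 1 / 2`. Over all integers
these are Euler products, estimated by the theorem of Mertens; over shifted primes they are bounded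
by a combinatorial sieve that discards `d` if `p ∣ d + 1` and halves its weight if `p ∣ d`. With
`log₂ log₂ w = 19 k` for the block of shifted primes `d` with `20 k ≤ log₂ log₂ d < 20 (k + 1)`,
the logarithmic density of the multiples of the block decays geometrically in `k`.
-/

section

open Finset Topology

/-! ### Natural and logarithmic density -/

lemma sum_Icc_div_eq_add_sum_range (f : ℕ → ℝ) (N : ℕ) :
    ∑ n ∈ Icc 1 N, f n / n = (∑ n ∈ Icc 1 N, f n) / N +
      ∑ n ∈ range N, (∑ m ∈ Icc 1 n, f m) / n * ((n + 1 : ℕ) : ℝ)⁻¹ := by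
  induction N with
  | zero => simp
  | succ N ih =>
    rw [sum_Icc_succ_top (by omega), sum_Icc_succ_top (by omega), sum_range_succ, ih]
    rcases N.eq_zero_or_pos with rfl | hN
    · simp
    · push_cast
      field_simp
      ring

lemma tendsto_harmonic_div_log :
    Tendsto (fun N : ℕ => (harmonic N : ℝ) / log N) atTop (𝓝 1) := by
  have hlog : Tendsto (fun N : ℕ => log (N : ℝ)) atTop atTop :=
    tendsto_log_atTop.comp tendsto_natCast_atTop_atTop
  have h := (tendsto_harmonic_sub_log.div_atTop hlog).add_const 1
  rw [zero_add] at h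
  refine h.congr' ?_
  filter_upwards [hlog.eventually_gt_atTop 0] with N hN
  field_simp
  ring

theorem tendsto_sum_div_div_log {f : ℕ → ℝ} {c : ℝ}
    (hf : Tendsto (fun N : ℕ => (∑ n ∈ Icc 1 N, f n) / N) atTop (𝓝 c)) :
    Tendsto (fun N : ℕ => (∑ n ∈ Icc 1 N, f n / n) / log N) atTop (𝓝 c) := by
  have hlog : Tendsto (fun N : ℕ => log (N : ℝ)) atTop atTop :=
    tendsto_log_atTop.comp tendsto_natCast_atTop_atTop
  have hharmonic (N : ℕ) : ∑ n ∈ range N, ((n + 1 : ℕ) : ℝ)⁻¹ = harmonic N := by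
    simp [harmonic]
  set e : ℕ → ℝ := fun n => ((∑ m ∈ Icc 1 n, f m) / n - c) * ((n + 1 : ℕ) : ℝ)⁻¹ with he
  have herror : (fun N => ∑ n ∈ range N, e n) =o[atTop] fun N => (harmonic N : ℝ) := by
    simp only [← hharmonic]
    refine Asymptotics.IsLittleO.sum_range ?_ (fun n => by positivity) ?_
    · have hzero := (Asymptotics.isLittleO_one_iff ℝ).2 (tendsto_sub_nhds_zero_iff.2 hf)
      simpa [he] using hzero.mul_isBigO
        (Asymptotics.isBigO_refl (fun n : ℕ => ((n + 1 : ℕ) : ℝ)⁻¹) atTop)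
    · simp only [hharmonic]
      refine tendsto_atTop_mono (fun N => ?_) (hlog.comp (tendsto_add_atTop_nat 1))
      exact log_add_one_le_harmonic N
  have hlim := ((hf.div_atTop hlog).add
    (herror.tendsto_div_nhds_zero.mul tendsto_harmonic_div_log)).add
      (tendsto_harmonic_div_log.const_mul c)
  simp only [mul_one, zero_add] at hlim
  refine hlim.congr' ?_
  filter_upwards [eventually_gt_atTop 0] with N hN
  have hpos : (0 : ℝ) < harmonic N := by exact_mod_cast harmonic_pos hN.ne'
  rw [sum_Icc_div_eq_add_sum_range f N]
  have hsplit : ∑ n ∈ range N, (∑ m ∈ Icc 1 n, f m) / n * ((n + 1 : ℕ) : ℝ)⁻¹ =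
      ∑ n ∈ range N, e n + c * harmonic N := by
    rw [← hharmonic, mul_sum, ← sum_add_distrib]
    exact sum_congr rfl fun n _ => by simp only [he]; ring
  rw [hsplit]
  field_simp
  ring

/-- The sum of `1 / n` over the elements `n ≤ x` of `S`, whose growth relative to `log x`
measures the logarithmic density of `S`. -/
noncomputable def harmonicSum (S : Set ℕ) (x : ℕ) : ℝ :=
  ∑ n ∈ Icc 1 x, S.indicator (fun n : ℕ => (n : ℝ)⁻¹) n

lemma harmonicSum_mono {S S' : Set ℕ} {x : ℕ} (h : ∀ n ∈ Icc 1 x, n ∈ S → n ∈ S') :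
    harmonicSum S x ≤ harmonicSum S' x := by
  refine sum_le_sum fun n hn => ?_
  by_cases hS : n ∈ S
  · rw [Set.indicator_of_mem hS, Set.indicator_of_mem (h n hn hS)]
  · rw [Set.indicator_of_notMem hS]
    exact Set.indicator_nonneg (fun m _ => by positivity) n

lemma harmonicSum_union_le (S S' : Set ℕ) (x : ℕ) :
    harmonicSum (S ∪ S') x ≤ harmonicSum S x + harmonicSum S' x := by
  rw [harmonicSum, harmonicSum, harmonicSum, ← sum_add_distrib]
  refine sum_le_sum fun n _ => ?_
  rw [← Set.indicator_union_add_inter_apply]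
  exact le_add_of_nonneg_right (Set.indicator_nonneg (fun m _ => by positivity) n)

lemma harmonicSum_biUnion_le {ι : Type*} (s : Finset ι) (S : ι → Set ℕ) (x : ℕ) :
    harmonicSum (⋃ i ∈ s, S i) x ≤ ∑ i ∈ s, harmonicSum (S i) x := by
  classical
  induction s using Finset.induction_on with
  | empty => simp [harmonicSum]
  | insert i s hi ih =>
    rw [set_biUnion_insert, sum_insert hi]
    exact (harmonicSum_union_le _ _ x).trans (by gcongr)

theorem tendsto_harmonicSum_div_log {S : Set ℕ} [DecidablePred (· ∈ S)] {c : ℝ}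
    (hS : Tendsto (fun N : ℕ => (#{n ∈ Icc 1 N | n ∈ S} : ℝ) / N) atTop (𝓝 c)) :
    Tendsto (fun N : ℕ => harmonicSum S N / log N) atTop (𝓝 c) := by
  have hcard (N : ℕ) : (#{n ∈ Icc 1 N | n ∈ S} : ℝ) =
      ∑ n ∈ Icc 1 N, S.indicator (fun _ => (1 : ℝ)) n := by
    simp [Set.indicator_apply]
  simp only [hcard] at hS
  refine (tendsto_sum_div_div_log hS).congr fun N => ?_
  congr 1
  exact sum_congr rfl fun n _ => by by_cases hn : n ∈ S <;> simp [hn]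

section LevelSets

variable {f : ℕ → ℕ} {δ : ℕ → ℝ}

lemma tendsto_card_le_div
    (hδ : ∀ k, Tendsto (fun N : ℕ => (#{n ∈ Icc 1 N | f n = k} : ℝ) / N) atTop (𝓝 (δ k)))
    (T : ℕ) :
    Tendsto (fun N : ℕ => (#{n ∈ Icc 1 N | T ≤ f n} : ℝ) / N) atTop
      (𝓝 (1 - ∑ k ∈ range T, δ k)) := by
  refine (tendsto_const_nhds.sub (tendsto_finsetSum (range T) fun k _ => hδ k)).congr' ?_
  filter_upwards [eventually_gt_atTop 0] with N hN
  have hsmall : #{n ∈ Icc 1 N | f n < T} = ∑ k ∈ range T, #{n ∈ Icc 1 N | f n = k} := by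
    rw [card_eq_sum_card_fiberwise (f := f) (t := range T) fun n hn => by simp_all]
    refine sum_congr rfl fun k hk => ?_
    rw [filter_filter]
    congr 1
    ext n
    simp only [mem_filter]
    have := mem_range.1 hk
    grind
  have hcount : (#{n ∈ Icc 1 N | f n < T} : ℝ) + #{n ∈ Icc 1 N | T ≤ f n} = N := by
    have h := card_filter_add_card_filter_not (s := Icc 1 N) (fun n => f n < T)
    simp only [not_lt, Nat.card_Icc, add_tsub_cancel_right] at h
    exact_mod_cast h
  rw [← sum_div, ← Nat.cast_sum, ← hsmall]
  field_simp
  linarith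

theorem hasSum_density_of_tight
    (hδ : ∀ k, Tendsto (fun N : ℕ => (#{n ∈ Icc 1 N | f n = k} : ℝ) / N) atTop (𝓝 (δ k)))
    (htight : ∀ ε > 0, ∃ T, ∀ᶠ x : ℕ in atTop, harmonicSum {n | T ≤ f n} x ≤ ε * log x) :
    HasSum δ 1 := by
  have hnonneg (k : ℕ) : 0 ≤ δ k := ge_of_tendsto' (hδ k) fun N => by positivity
  have hmono : Monotone fun T => ∑ k ∈ range T, δ k := fun _ _ hST =>
    sum_le_sum_of_subset_of_nonneg (range_subset_range.2 hST) fun k _ _ => hnonneg k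
  rw [hasSum_iff_tendsto_nat_of_nonneg hnonneg]
  refine tendsto_atTop_isLUB hmono ⟨?_, fun b hb => le_of_forall_pos_le_add fun ε hε => ?_⟩
  · rintro _ ⟨T, rfl⟩
    exact sub_nonneg.1 (ge_of_tendsto' (tendsto_card_le_div hδ T) fun N => by positivity)
  · obtain ⟨T, hT⟩ := htight ε hε
    have htail : 1 - ∑ k ∈ range T, δ k ≤ ε := by
      refine le_of_tendsto (tendsto_harmonicSum_div_log (S := {n | T ≤ f n})
        (tendsto_card_le_div hδ T)) ?_
      filter_upwards [hT, eventually_gt_atTop 1] with x hx hx1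
      exact (div_le_iff₀ (log_pos (by exact_mod_cast hx1))).2 hx
    have hle : ∑ k ∈ range T, δ k ≤ b := hb (Set.mem_range_self T)
    linarith

end LevelSets

/-! ### Bounds of Mertens -/

section EulerProduct

variable {f : ℕ →* ℝ}

lemma sum_Icc_le_prod_primesLE (hf : ∀ n, 0 ≤ f n) (hf1 : ∀ p : ℕ, p.Prime → f p < 1) (N : ℕ) :
    ∑ n ∈ Icc 1 N, f n ≤ ∏ p ∈ N.primesLE, (1 - f p)⁻¹ := by
  have h := (EulerProduct.summable_and_hasSum_smoothNumbers_prod_primesBelow_geometric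
    (fun {p} hp => (norm_of_nonneg (hf p)).trans_lt (hf1 p hp)) (N + 1)).2
  refine le_of_eq_of_le (sum_congr rfl fun n hn => ?_) (sum_le_hasSum (Icc 1 N)
    (fun n _ => Set.indicator_nonneg (fun m _ => hf m) n) (hasSum_subtype_iff_indicator.1 h))
  have := mem_Icc.1 hn
  exact (Set.indicator_of_mem (Nat.mem_smoothNumbers_of_lt (by omega) (by omega)) _).symm

lemma prod_primesLE_le_tsum (hf : ∀ n, 0 ≤ f n) (hs : Summable f) (N : ℕ) :
    ∏ p ∈ N.primesLE, (1 - f p)⁻¹ ≤ ∑' n, f n :=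
  (EulerProduct.prod_primesBelow_geometric_eq_tsum_smoothNumbers hs (N + 1)).trans_le
    (hs.tsum_subtype_le _ _ hf)

end EulerProduct

lemma inv_prime_le_half {p : ℕ} (hp : p.Prime) : (p : ℝ)⁻¹ ≤ 1 / 2 := by
  rw [one_div]
  exact inv_anti₀ two_pos (by exact_mod_cast hp.two_le)

/-- The Mertens product `∏ (1 - 1 / p)⁻¹` over the primes `p ≤ N`, of the same order as `log N`. -/
noncomputable def mertensProd (N : ℕ) : ℝ := ∏ p ∈ N.primesLE, (1 - (p : ℝ)⁻¹)⁻¹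

lemma one_le_mertensProd (N : ℕ) : 1 ≤ mertensProd N :=
  one_le_prod fun p hp => by
    have := inv_prime_le_half (Nat.prime_of_mem_primesLE hp)
    exact (one_le_inv₀ (by linarith)).2 (by linarith [inv_nonneg.2 (Nat.cast_nonneg (α := ℝ) p)])

/-- The completely multiplicative function `n ↦ n ^ (-s)`. -/
noncomputable def rpowNegHom (s : ℝ) : ℕ →* ℝ where
  toFun n := (n : ℝ) ^ (-s)
  map_one' := by simp
  map_mul' a b := by
    push_cast
    exact mul_rpow (by positivity) (by positivity)

lemma rpowNegHom_apply (s : ℝ) (n : ℕ) : rpowNegHom s n = (n : ℝ) ^ (-s) := rfl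

lemma log_le_mertensProd (N : ℕ) : log N ≤ mertensProd N := by
  have hEuler := sum_Icc_le_prod_primesLE (f := rpowNegHom 1)
    (fun n => by rw [rpowNegHom_apply]; positivity)
    (fun p hp => by
      rw [rpowNegHom_apply, rpow_neg_one]
      linarith [inv_prime_le_half hp]) N
  simp only [rpowNegHom_apply, rpow_neg_one] at hEuler
  refine le_trans ?_ hEuler
  rcases N.eq_zero_or_pos with rfl | hN
  · simp
  · calc log N ≤ log (N + 1 : ℕ) := by gcongr; simp
      _ ≤ harmonic N := log_add_one_le_harmonic N
      _ = ∑ n ∈ Icc 1 N, (n : ℝ)⁻¹ := by simp [harmonic_eq_sum_Icc]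

lemma prod_primesLE_pow_div_dvd_factorial (n : ℕ) :
    ∏ p ∈ n.primesLE, p ^ (n / p) ∣ n.factorial := by
  refine prod_dvd_of_isRelPrime (fun p hp q hq hpq => ?_) fun p hp => ?_
  · exact Nat.coprime_iff_isRelPrime.1 (Nat.Coprime.pow _ _ ((Nat.coprime_primes
      (Nat.prime_of_mem_primesLE hp) (Nat.prime_of_mem_primesLE hq)).2 hpq))
  · rw [(Nat.prime_of_mem_primesLE hp).pow_dvd_factorial_iff (b := Nat.log p n + 2) (by omega)]
    exact (congrArg (n / ·) (pow_one p)).ge.trans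
      (single_le_sum (f := fun i => n / p ^ i) (fun _ _ => zero_le) (by simp))

lemma sum_primesLE_div_mul_log_le (n : ℕ) :
    ∑ p ∈ n.primesLE, ((n / p : ℕ) : ℝ) * log p ≤ n * log n := by
  have hpos : ∀ p ∈ n.primesLE, (0 : ℝ) < p ^ (n / p) := fun p hp => by
    have := (Nat.prime_of_mem_primesLE hp).pos
    positivity
  have hle : ∏ p ∈ n.primesLE, (p : ℝ) ^ (n / p) ≤ (n : ℝ) ^ n := by
    exact_mod_cast (Nat.le_of_dvd n.factorial_pos (prod_primesLE_pow_div_dvd_factorial n)).trans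
      n.factorial_le_pow
  have hlog := log_le_log (prod_pos hpos) hle
  rw [log_prod fun p hp => (hpos p hp).ne'] at hlog
  simpa only [log_pow] using hlog

theorem sum_primesLE_log_div_le {n : ℕ} (hn : 0 < n) :
    ∑ p ∈ n.primesLE, log p / p ≤ log n + log 4 := by
  have hn' : (0 : ℝ) < n := by exact_mod_cast hn
  have htheta : ∑ p ∈ n.primesLE, log p ≤ log 4 * n := by
    simpa only [Chebyshev.theta_eq_sum_primesLE_log, Nat.floor_natCast] using
      Chebyshev.theta_le_log4_mul_x hn'.le
  have hterm (p : ℕ) : n * (log p / p) ≤ ((n / p : ℕ) : ℝ) * log p + log p := by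
    have hfloor : (n : ℝ) / p ≤ ((n / p : ℕ) : ℝ) + 1 := by
      simpa only [Nat.floor_div_eq_div] using (Nat.lt_floor_add_one ((n : ℝ) / p)).le
    calc n * (log p / p) = n / p * log p := by ring
      _ ≤ (((n / p : ℕ) : ℝ) + 1) * log p := by gcongr
      _ = _ := by ring
  refine le_of_mul_le_mul_left ?_ hn'
  calc n * ∑ p ∈ n.primesLE, log p / p
      ≤ ∑ p ∈ n.primesLE, ((n / p : ℕ) : ℝ) * log p + ∑ p ∈ n.primesLE, log p := by
        rw [mul_sum, ← sum_add_distrib]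
        exact sum_le_sum fun p _ => hterm p
    _ ≤ n * log n + log 4 * n := add_le_add (sum_primesLE_div_mul_log_le n) htheta
    _ = n * (log n + log 4) := by ring

lemma summable_nat_rpow_neg_one_add {σ : ℝ} (hσ : 0 < σ) :
    Summable fun n : ℕ => (n : ℝ) ^ (-(1 + σ)) :=
  summable_nat_rpow.2 (by linarith)

lemma tsum_nat_rpow_neg_one_add_le {σ : ℝ} (hσ : 0 < σ) :
    ∑' n : ℕ, (n : ℝ) ^ (-(1 + σ)) ≤ 1 + 1 / σ := by
  have hs := summable_nat_rpow_neg_one_add hσ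
  have hanti : AntitoneOn (fun t : ℝ => t ^ (-(1 + σ))) (Set.Ici ((1 : ℕ) : ℝ)) :=
    fun a ha b _ hab => rpow_le_rpow_of_nonpos
      (zero_lt_one.trans_le (by simpa using ha)) hab (by linarith)
  have htail := hanti.tsum_comp_add_le_integral 1
    (integrableOn_Ioi_rpow_of_lt (by linarith) (by norm_num))
    fun t ht => rpow_nonneg (zero_le_one.trans (by simpa using (Set.mem_Ioi.1 ht).le)) _
  have hintegral : ∫ t in Set.Ioi ((1 : ℕ) : ℝ), t ^ (-(1 + σ)) = 1 / σ := by
    rw [integral_Ioi_rpow_of_lt (by linarith) (by norm_num)]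
    simp [neg_div]
  rw [hintegral] at htail
  rw [hs.tsum_eq_zero_add, ((summable_nat_add_iff 1).2 hs).tsum_eq_zero_add]
  simp only [Nat.cast_zero, zero_rpow (by linarith : -(1 + σ) ≠ 0), zero_add, Nat.cast_one,
    one_rpow]
  gcongr

lemma one_sub_inv_inv_le_mul_exp {x σ : ℝ} (hx : 2 ≤ x) (hσ : 0 ≤ σ) :
    (1 - x⁻¹)⁻¹ ≤ (1 - x ^ (-(1 + σ)))⁻¹ * exp (2 * σ * (log x / x)) := by
  have hx0 : 0 < x := by linarith
  have hlog : 0 ≤ log x := log_nonneg (by linarith)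
  set a := x⁻¹ with ha
  set t := σ * log x with ht
  have ha2 : a ≤ 1 / 2 := by rw [one_div]; exact inv_anti₀ two_pos hx
  have ha0 : 0 < a := inv_pos.2 hx0
  have ht0 : 0 ≤ t := by positivity
  have hpow : x ^ (-(1 + σ)) = a * exp (-t) := by
    rw [neg_add, rpow_add hx0, rpow_neg_one, rpow_def_of_pos hx0, ht, ha]
    ring_nf
  have hexp : 1 - t ≤ exp (-t) := by linarith [add_one_le_exp (-t)]
  have hexp1 : exp (-t) ≤ 1 := exp_le_one_iff.2 (by linarith)
  have hden : 0 < 1 - a * exp (-t) := by nlinarith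
  rw [hpow, show 2 * σ * (log x / x) = 2 * (a * t) by rw [ha, ht]; ring, ← div_eq_inv_mul,
    inv_le_comm₀ (by linarith) (by positivity), inv_div, div_le_iff₀ (exp_pos _)]
  have hat : 0 ≤ a * t := by positivity
  calc 1 - a * exp (-t) ≤ (1 - a) * (2 * (a * t) + 1) := by nlinarith
    _ ≤ (1 - a) * exp (2 * (a * t)) := by
      gcongr
      · linarith
      · exact add_one_le_exp _

/-- Rankin's trick: compare `∏ (1 - 1 / p)⁻¹` with `ζ (1 + σ)` at `σ = 1 / log N`. -/
theorem mertensProd_le {N : ℕ} (hN : 2 ≤ N) : mertensProd N ≤ 3 * exp 6 * log N := by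
  have hlog2 : 1 / 2 < log 2 := by linarith [log_two_gt_d9]
  have hlogN : log 2 ≤ log N := log_le_log two_pos (by exact_mod_cast hN)
  have hpos : 0 < log N := by linarith
  set σ := 1 / log N with hσ
  have hσ0 : 0 < σ := by positivity
  have hzeta : ∏ p ∈ N.primesLE, (1 - (p : ℝ) ^ (-(1 + σ)))⁻¹ ≤ 1 + log N := by
    have h := prod_primesLE_le_tsum (f := rpowNegHom (1 + σ))
      (fun n => by rw [rpowNegHom_apply]; positivity) (summable_nat_rpow_neg_one_add hσ0) N
    simpa only [rpowNegHom_apply, hσ, one_div_one_div] using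
      h.trans (tsum_nat_rpow_neg_one_add_le hσ0)
  have hsum : 2 * σ * ∑ p ∈ N.primesLE, log p / p ≤ 6 := by
    have hlog4 : log 4 = 2 * log 2 := by
      rw [show (4 : ℝ) = 2 ^ 2 by norm_num, log_pow, Nat.cast_two]
    calc 2 * σ * ∑ p ∈ N.primesLE, log p / p ≤ 2 * σ * (3 * log N) := by
          gcongr
          linarith [sum_primesLE_log_div_le (show 0 < N by omega)]
      _ = 6 := by rw [hσ]; field_simp; norm_num
  calc mertensProd N
      ≤ ∏ p ∈ N.primesLE, ((1 - (p : ℝ) ^ (-(1 + σ)))⁻¹ * exp (2 * σ * (log p / p))) := by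
        refine prod_le_prod (fun p hp => ?_) fun p hp => one_sub_inv_inv_le_mul_exp ?_ hσ0.le
        · exact inv_nonneg.2 (by linarith [inv_prime_le_half (Nat.prime_of_mem_primesLE hp)])
        · exact_mod_cast Nat.two_le_of_mem_primesLE hp
    _ = (∏ p ∈ N.primesLE, (1 - (p : ℝ) ^ (-(1 + σ)))⁻¹) *
        exp (2 * σ * ∑ p ∈ N.primesLE, log p / p) := by
        rw [prod_mul_distrib, mul_sum, exp_sum]
    _ ≤ (1 + log N) * exp 6 := by gcongr
    _ ≤ 3 * log N * exp 6 := by gcongr; linarith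
    _ = 3 * exp 6 * log N := by ring

theorem exists_mertensProd_rpow_le (b : ℝ) :
    ∃ C > 0, ∀ N : ℕ, 2 ≤ N → ∀ s ≤ b, mertensProd N ^ s ≤ C * log N ^ s := by
  have hC : (1 : ℝ) ≤ 3 * exp 6 := by linarith [add_one_le_exp 6]
  refine ⟨(3 * exp 6) ^ |b|, by positivity, fun N hN s hs => ?_⟩
  have hlog : 0 < log N := log_pos (by exact_mod_cast hN)
  rcases le_total s 0 with hs0 | hs0
  · calc mertensProd N ^ s ≤ log N ^ s :=
          rpow_le_rpow_of_nonpos hlog (log_le_mertensProd N) hs0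
      _ ≤ (3 * exp 6) ^ |b| * log N ^ s :=
          le_mul_of_one_le_left (by positivity) (one_le_rpow hC (abs_nonneg b))
  · calc mertensProd N ^ s ≤ (3 * exp 6 * log N) ^ s :=
          rpow_le_rpow (zero_le_one.trans (one_le_mertensProd N)) (mertensProd_le hN) hs0
      _ = (3 * exp 6) ^ s * log N ^ s := mul_rpow (by positivity) hlog.le
      _ ≤ (3 * exp 6) ^ |b| * log N ^ s := by
          gcongr
          exact hs.trans (le_abs_self b)

/-! ### Mean values of `v ^ Ω_w` -/

/-- `Ω_w n`, the number of prime factors of `n` that are at most `w`, with multiplicity. -/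
def cardFactorsLE (w n : ℕ) : ℕ := ∑ p ∈ w.primesLE, n.factorization p

lemma cardFactorsLE_mul (w : ℕ) {a b : ℕ} (ha : a ≠ 0) (hb : b ≠ 0) :
    cardFactorsLE w (a * b) = cardFactorsLE w a + cardFactorsLE w b := by
  simp [cardFactorsLE, Nat.factorization_mul ha hb, sum_add_distrib]

lemma cardFactorsLE_prime (w : ℕ) {p : ℕ} (hp : p.Prime) :
    cardFactorsLE w p = if p ≤ w then 1 else 0 := by
  simp [cardFactorsLE, Finsupp.single_apply, Nat.mem_primesLE, hp]

/-- The completely multiplicative function `n ↦ v ^ Ω_w n / n`. -/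
noncomputable def weightHom (v : ℝ) (w : ℕ) : ℕ →* ℝ where
  toFun n := v ^ cardFactorsLE w n / n
  map_one' := by simp [cardFactorsLE]
  map_mul' a b := by
    rcases eq_or_ne a 0 with rfl | ha
    · simp
    rcases eq_or_ne b 0 with rfl | hb
    · simp
    rw [cardFactorsLE_mul w ha hb, pow_add]
    push_cast
    rw [mul_div_mul_comm]

lemma weightHom_apply (v : ℝ) (w n : ℕ) : weightHom v w n = v ^ cardFactorsLE w n / n := rfl

lemma weightHom_nonneg {v : ℝ} (hv : 0 ≤ v) (w n : ℕ) : 0 ≤ weightHom v w n := by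
  rw [weightHom_apply]
  positivity

lemma weightHom_prime (v : ℝ) (w : ℕ) {p : ℕ} (hp : p.Prime) :
    weightHom v w p = if p ≤ w then v * (p : ℝ)⁻¹ else (p : ℝ)⁻¹ := by
  rw [weightHom_apply, cardFactorsLE_prime w hp]
  split_ifs <;> simp [div_eq_mul_inv]

lemma inv_one_sub_mul_le {a v : ℝ} (ha : 0 ≤ a) (ha' : a ≤ 1 / 2) (hv : 0 ≤ v) (hv' : v ≤ 3 / 2) :
    (1 - v * a)⁻¹ ≤ (1 - a)⁻¹ ^ v * exp (9 * a ^ 2) := by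
  set t := v * a
  have ht0 : 0 ≤ t := by positivity
  have hta : t ≤ 3 / 2 * a := mul_le_mul_of_nonneg_right hv' ha
  have hexp : exp a ≤ (1 - a)⁻¹ := by
    simpa using exp_bound_div_one_sub_of_interval ha (by linarith : a < 1)
  calc (1 - t)⁻¹ ≤ t + 4 * t ^ 2 + 1 := by
        rw [inv_le_iff_one_le_mul₀ (by linarith)]
        nlinarith [mul_nonneg (sq_nonneg t) (by linarith : 0 ≤ 3 - 4 * t)]
    _ ≤ exp (t + 4 * t ^ 2) := add_one_le_exp _
    _ ≤ exp (a * v + 9 * a ^ 2) := by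
        have := pow_le_pow_left₀ ht0 hta 2
        exact exp_le_exp.2 (by linarith)
    _ = exp a ^ v * exp (9 * a ^ 2) := by rw [exp_add, exp_mul]
    _ ≤ (1 - a)⁻¹ ^ v * exp (9 * a ^ 2) := by gcongr

lemma sum_primesLE_inv_sq_le (w : ℕ) : ∑ p ∈ w.primesLE, ((p : ℝ)⁻¹) ^ 2 ≤ 2 := by
  have hterm (n : ℕ) : ((n : ℝ)⁻¹) ^ 2 = (n : ℝ) ^ (-(1 + 1) : ℝ) := by
    rw [rpow_neg n.cast_nonneg, one_add_one_eq_two, rpow_two, inv_pow]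
  simp only [hterm]
  calc ∑ p ∈ w.primesLE, (p : ℝ) ^ (-(1 + 1) : ℝ) ≤ ∑' n : ℕ, (n : ℝ) ^ (-(1 + 1) : ℝ) :=
        (summable_nat_rpow_neg_one_add one_pos).sum_le_tsum _ fun n _ => by positivity
    _ ≤ 1 + 1 / 1 := tsum_nat_rpow_neg_one_add_le one_pos
    _ = 2 := by norm_num

section Mean

variable {v : ℝ} (hv : 0 ≤ v) (hv' : v ≤ 3 / 2)
include hv hv'

lemma inv_one_sub_weightHom_prime_le (w : ℕ) {p : ℕ} (hp : p.Prime) :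
    (1 - weightHom v w p)⁻¹ ≤ (1 - (p : ℝ)⁻¹)⁻¹ *
      if p ≤ w then (1 - (p : ℝ)⁻¹)⁻¹ ^ (v - 1) * exp (9 * ((p : ℝ)⁻¹) ^ 2) else 1 := by
  rw [weightHom_prime v w hp]
  split_ifs with hpw
  · have ha := inv_prime_le_half hp
    have hpos : 0 < (1 - (p : ℝ)⁻¹)⁻¹ := inv_pos.2 (by linarith)
    rw [← mul_assoc, mul_comm (1 - (p : ℝ)⁻¹)⁻¹, ← rpow_add_one hpos.ne', sub_add_cancel]
    exact inv_one_sub_mul_le (by positivity) ha hv hv'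
  · rw [mul_one]

lemma prod_inv_one_sub_weightHom_le {w x : ℕ} (hwx : w ≤ x) :
    ∏ p ∈ x.primesLE, (1 - weightHom v w p)⁻¹ ≤
      mertensProd x * (mertensProd w ^ (v - 1) * exp 18) := by
  have hweight : ∀ p ∈ x.primesLE, 0 ≤ (1 - weightHom v w p)⁻¹ := fun p hp => by
    have ha := inv_prime_le_half (Nat.prime_of_mem_primesLE hp)
    have : 0 ≤ (p : ℝ)⁻¹ := by positivity
    rw [weightHom_prime v w (Nat.prime_of_mem_primesLE hp), inv_nonneg]
    split_ifs <;> nlinarith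
  have hfilter : {p ∈ x.primesLE | p ≤ w} = w.primesLE := by
    ext p
    simp only [mem_filter, Nat.mem_primesLE]
    grind
  have hinv : ∀ p ∈ w.primesLE, 0 ≤ (1 - (p : ℝ)⁻¹)⁻¹ := fun p hp =>
    inv_nonneg.2 (by linarith [inv_prime_le_half (Nat.prime_of_mem_primesLE hp)])
  refine (prod_le_prod hweight fun p hp => inv_one_sub_weightHom_prime_le hv hv' w
    (Nat.prime_of_mem_primesLE hp)).trans ?_
  rw [prod_mul_distrib, ← prod_filter, hfilter, prod_mul_distrib, finsetProd_rpow _ _ hinv,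
    ← exp_sum, ← mul_sum]
  have hexp : 9 * ∑ p ∈ w.primesLE, ((p : ℝ)⁻¹) ^ 2 ≤ 18 := by
    linarith [sum_primesLE_inv_sq_le w]
  have hx := one_le_mertensProd x
  have hw := one_le_mertensProd w
  change mertensProd x * (mertensProd w ^ (v - 1) * _) ≤ _
  gcongr

end Mean

theorem exists_sum_weightHom_le : ∃ C > 0, ∀ v : ℝ, 0 ≤ v → v ≤ 3 / 2 → ∀ w x : ℕ, 2 ≤ w → w ≤ x →
    ∑ n ∈ Icc 1 x, weightHom v w n ≤ C * log x * log w ^ (v - 1) := by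
  obtain ⟨C, hC, hM⟩ := exists_mertensProd_rpow_le 1
  refine ⟨C * C * exp 18, by positivity, fun v hv hv' w x hw hwx => ?_⟩
  have hprime (p : ℕ) (hp : p.Prime) : weightHom v w p < 1 := by
    have ha := inv_prime_le_half hp
    rw [weightHom_prime v w hp]
    split_ifs <;> nlinarith
  have hx : mertensProd x ≤ C * log x := by simpa using hM x (hw.trans hwx) 1 le_rfl
  have hw1 := one_le_mertensProd w
  calc ∑ n ∈ Icc 1 x, weightHom v w n ≤ ∏ p ∈ x.primesLE, (1 - weightHom v w p)⁻¹ :=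
        sum_Icc_le_prod_primesLE (weightHom_nonneg hv w) hprime x
    _ ≤ mertensProd x * (mertensProd w ^ (v - 1) * exp 18) :=
        prod_inv_one_sub_weightHom_le hv hv' hwx
    _ ≤ (C * log x) * (C * log w ^ (v - 1) * exp 18) := by
        gcongr
        exact hM w hw _ (by linarith)
    _ = C * C * exp 18 * log x * log w ^ (v - 1) := by ring

/-! ### Truncated inclusion–exclusion -/

section Bonferroni

variable {ι : Type*}

/-- The expansion of `∏ i ∈ s, (1 + f i)` over subsets of `s`, truncated to the subsets with at
most `k` elements. -/
def truncProd (f : ι → ℝ) (s : Finset ι) (k : ℕ) : ℝ := ∑ t ∈ s.powerset with #t ≤ k, ∏ i ∈ t, f i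

lemma truncProd_zero (f : ι → ℝ) (s : Finset ι) : truncProd f s 0 = 1 := by
  have hfilter : {t ∈ s.powerset | #t ≤ 0} = {∅} := by
    ext t
    simp +contextual [iff_def]
  rw [truncProd, hfilter, sum_singleton, prod_empty]

lemma truncProd_insert_succ [DecidableEq ι] (f : ι → ℝ) {s : Finset ι} {i : ι} (hi : i ∉ s)
    (k : ℕ) :
    truncProd f (insert i s) (k + 1) = truncProd f s (k + 1) + f i * truncProd f s k := by
  simp only [truncProd, sum_filter]
  rw [sum_powerset_insert hi, mul_sum]
  congr 1
  refine sum_congr rfl fun t ht => ?_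
  have hit : i ∉ t := fun h => hi (mem_powerset.1 ht h)
  simp only [card_insert_of_notMem hit, prod_insert hit, Nat.add_le_add_iff_right, mul_ite,
    mul_zero]

theorem neg_one_pow_mul_truncProd_sub_prod_nonneg {g : ι → ℝ} {s : Finset ι}
    (hg : ∀ i ∈ s, 0 ≤ g i) (hg' : ∀ i ∈ s, g i ≤ 1) (k : ℕ) :
    0 ≤ (-1) ^ k * (truncProd (fun i => -g i) s k - ∏ i ∈ s, (1 - g i)) := by
  classical
  induction s using Finset.induction_on generalizing k with
  | empty => cases k <;> simp [truncProd, sum_filter]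
  | insert i s hi ih =>
    cases k with
    | zero =>
      rw [truncProd_zero, pow_zero, one_mul, sub_nonneg]
      exact prod_le_one (fun j hj => by linarith [hg' j hj]) fun j hj => by linarith [hg j hj]
    | succ k =>
      simp only [mem_insert, forall_eq_or_imp] at hg hg'
      have hsucc := ih hg.2 hg'.2 (k + 1)
      have hk := mul_nonneg hg.1 (ih hg.2 hg'.2 k)
      rw [truncProd_insert_succ _ hi, prod_insert hi]
      rw [pow_succ] at hsucc ⊢
      linarith

lemma prod_one_sub_le_truncProd {g : ι → ℝ} {s : Finset ι} (hg : ∀ i ∈ s, 0 ≤ g i)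
    (hg' : ∀ i ∈ s, g i ≤ 1) {k : ℕ} (hk : Even k) :
    ∏ i ∈ s, (1 - g i) ≤ truncProd (fun i => -g i) s k := by
  simpa [hk.neg_one_pow] using neg_one_pow_mul_truncProd_sub_prod_nonneg hg hg' k

variable {b : ι → ℝ} {s : Finset ι} (hb : ∀ i ∈ s, 0 ≤ b i) {z : ℝ} (hz : 1 ≤ z) (k : ℕ)
include hb hz

lemma truncProd_le_pow_mul_prod : truncProd b s k ≤ z ^ k * ∏ i ∈ s, (1 + b i / z) := by
  have : 0 < z := by linarith
  rw [prod_one_add, mul_sum, truncProd, sum_filter]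
  refine sum_le_sum fun t ht => ?_
  have hprod : 0 ≤ ∏ i ∈ t, b i := prod_nonneg fun i hi => hb i (mem_powerset.1 ht hi)
  rw [prod_div_distrib, prod_const]
  split_ifs with hcard
  · rw [mul_div_left_comm]
    exact le_mul_of_one_le_right hprod
      ((one_le_div₀ (by positivity)).2 (pow_le_pow_right₀ hz hcard))
  · positivity

lemma truncProd_neg_le :
    truncProd (fun i => -b i) s k ≤ ∏ i ∈ s, (1 - b i) + (z ^ k)⁻¹ * ∏ i ∈ s, (1 + z * b i) := by
  have : 0 < z := by linarith
  simp only [sub_eq_add_neg]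
  rw [prod_one_add, prod_one_add, mul_sum, ← sum_add_distrib, truncProd, sum_filter]
  refine sum_le_sum fun t ht => ?_
  have hprod : 0 ≤ ∏ i ∈ t, b i := prod_nonneg fun i hi => hb i (mem_powerset.1 ht hi)
  rw [prod_mul_distrib, prod_const]
  split_ifs with hcard
  · exact le_add_of_nonneg_right (by positivity)
  · have hle : ∏ i ∈ t, b i ≤ (z ^ k)⁻¹ * (z ^ #t * ∏ i ∈ t, b i) := by
      rw [← mul_assoc, inv_mul_eq_div]
      exact le_mul_of_one_le_left hprod
        ((one_le_div₀ (by positivity)).2 (pow_le_pow_right₀ hz (by omega)))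
    have habs := neg_abs_le (∏ i ∈ t, -b i)
    rw [abs_prod, prod_congr rfl fun i hi => by
      rw [abs_neg, abs_of_nonneg (hb i (mem_powerset.1 ht hi))]] at habs
    linarith

end Bonferroni

/-! ### Sums of periodic functions -/

section Periodic

variable {F : ℕ → ℝ} {q : ℕ}

lemma sum_Ico_add_of_periodic (hF : F.Periodic q) (a : ℕ) :
    ∑ d ∈ Ico a (a + q), F d = ∑ d ∈ range q, F d := by
  rw [← Nat.image_Ico_mod a q, sum_image (Nat.mod_injOn_Ico a q)]
  exact sum_congr rfl fun d _ => (hF.map_mod_nat d).symm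

lemma sum_Ico_add_mul_of_periodic (hF : F.Periodic q) (a m : ℕ) :
    ∑ d ∈ Ico a (a + m * q), F d = m * ∑ d ∈ range q, F d := by
  induction m with
  | zero => simp
  | succ m ih =>
    rw [← sum_Ico_consecutive _ (Nat.le_add_right a (m * q)) (by gcongr; omega), ih,
      Nat.succ_mul, ← add_assoc, sum_Ico_add_of_periodic hF]
    push_cast
    ring

lemma abs_sum_Ico_sub_le_of_periodic (hF : F.Periodic q) (hF0 : ∀ d, 0 ≤ F d) (hq : 0 < q)
    (a M : ℕ) :
    |∑ d ∈ Ico a (a + M), F d - M / q * ∑ d ∈ range q, F d| ≤ ∑ d ∈ range q, F d := by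
  set A := ∑ d ∈ range q, F d
  have hA : 0 ≤ A := sum_nonneg fun d _ => hF0 d
  have hlower : ((M / q : ℕ) : ℝ) * A ≤ ∑ d ∈ Ico a (a + M), F d := by
    rw [← sum_Ico_add_mul_of_periodic hF a]
    refine sum_le_sum_of_subset_of_nonneg (Ico_subset_Ico_right ?_) fun d _ _ => hF0 d
    exact Nat.add_le_add_left (Nat.div_mul_le_self M q) a
  have hupper : ∑ d ∈ Ico a (a + M), F d ≤ ((M / q + 1 : ℕ) : ℝ) * A := by
    rw [← sum_Ico_add_mul_of_periodic hF a]
    refine sum_le_sum_of_subset_of_nonneg (Ico_subset_Ico_right ?_) fun d _ _ => hF0 d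
    exact Nat.add_le_add_left (Nat.lt_mul_of_div_lt (Nat.lt_succ_self _) hq).le a
  have hfloor : (M : ℝ) / q ≤ (M / q : ℕ) + 1 := by
    simpa only [Nat.floor_div_eq_div] using (Nat.lt_floor_add_one ((M : ℝ) / q)).le
  have hfloor' : ((M / q : ℕ) : ℝ) ≤ M / q := Nat.cast_div_le
  push_cast at hupper
  rw [abs_le]
  constructor <;> nlinarith

lemma sum_range_mul_of_coprime {G : ℕ → ℝ} {r : ℕ} (hF : F.Periodic q) (hG : G.Periodic r)
    (hq : 0 < q) (hr : 0 < r) (hqr : q.Coprime r) :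
    ∑ d ∈ range (q * r), F d * G d = (∑ d ∈ range q, F d) * ∑ d ∈ range r, G d := by
  rw [sum_mul_sum, ← sum_product']
  refine sum_nbij (fun d => (d % q, d % r)) (fun d _ => ?_) (fun c hc d hd hcd => ?_) ?_
    fun d _ => ?_
  · simp [Nat.mod_lt _ hq, Nat.mod_lt _ hr]
  · simp only [coe_range, Set.mem_Iio, Prod.mk.injEq] at hc hd hcd
    exact ((Nat.modEq_and_modEq_iff_modEq_mul hqr).1 hcd).eq_of_lt_of_lt hc hd
  · rintro ⟨a, b⟩ hab
    simp only [coe_product, coe_range, Set.mem_prod, Set.mem_Iio] at hab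
    obtain ⟨c, hca, hcb⟩ := Nat.chineseRemainder hqr a b
    refine ⟨c % (q * r), by simp [Nat.mod_lt _ (Nat.mul_pos hq hr)], ?_⟩
    simp only [Prod.mk.injEq, Nat.mod_mul_right_mod, Nat.mod_mul_left_mod]
    exact ⟨Nat.mod_eq_of_modEq hca hab.1, Nat.mod_eq_of_modEq hcb hab.2⟩
  · simp only [hF.map_mod_nat, hG.map_mod_nat]

end Periodic

/-! ### A weighted combinatorial sieve -/

section Sieve

variable {ι : Type*} {s : Finset ι} {q : ι → ℕ} {g : ι → ℕ → ℝ}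

lemma periodic_prod (hg : ∀ i ∈ s, (g i).Periodic (q i)) :
    (fun d => ∏ i ∈ s, g i d).Periodic (∏ i ∈ s, q i) := fun d => by
  refine prod_congr rfl fun i hi => ?_
  obtain ⟨m, hm⟩ := dvd_prod_of_mem q hi
  rw [hm, mul_comm]
  exact (hg i hi).nat_mul m d

variable (hg : ∀ i ∈ s, (g i).Periodic (q i)) (hq : ∀ i ∈ s, 0 < q i)
  (hcop : (s : Set ι).Pairwise fun i j => (q i).Coprime (q j))
include hg hq hcop

lemma sum_range_prod_of_pairwise_coprime :
    ∑ d ∈ range (∏ i ∈ s, q i), ∏ i ∈ s, g i d = ∏ i ∈ s, ∑ d ∈ range (q i), g i d := by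
  classical
  induction s using Finset.induction_on with
  | empty => simp
  | insert i s hi ih =>
    have hcop' : ∀ j ∈ s, (q i).Coprime (q j) := fun j hj =>
      hcop (mem_insert_self i s) (mem_insert_of_mem hj) (ne_of_mem_of_not_mem hj hi).symm
    simp only [mem_insert, forall_eq_or_imp] at hg hq
    simp only [prod_insert hi]
    rw [sum_range_mul_of_coprime hg.1 (periodic_prod hg.2) hq.1 (prod_pos hq.2)
      (Nat.Coprime.prod_right hcop'), ih hg.2 hq.2 (hcop.mono (by simp))]

variable {A : ι → ℝ} (hA : ∀ i ∈ s, ∑ d ∈ range (q i), g i d = A i)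
  (hg0 : ∀ i ∈ s, ∀ d, 0 ≤ g i d)
include hA hg0

lemma sum_Ico_prod_neg_le (Y M : ℕ) :
    ∑ d ∈ Ico Y (Y + M), ∏ i ∈ s, -g i d ≤ M * ∏ i ∈ s, -(A i / q i) + ∏ i ∈ s, A i := by
  have habs := abs_sum_Ico_sub_le_of_periodic (periodic_prod hg)
    (fun d => prod_nonneg fun i hi => hg0 i hi d) (prod_pos hq) Y M
  rw [sum_range_prod_of_pairwise_coprime hg hq hcop, prod_congr rfl hA] at habs
  have hmean : (M : ℝ) / (∏ i ∈ s, q i : ℕ) * ∏ i ∈ s, A i = M * ∏ i ∈ s, A i / q i := by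
    rw [prod_div_distrib]
    push_cast
    ring
  rw [hmean, abs_le] at habs
  simp only [prod_neg, ← mul_sum]
  rcases neg_one_pow_eq_or ℝ #s with hsign | hsign <;> rw [hsign] <;> linarith

theorem sum_Ico_prod_one_sub_le (hg1 : ∀ i ∈ s, ∀ d, g i d ≤ 1) {z : ℝ} (hz : 1 ≤ z) {R : ℕ}
    (hR : Even R) (Y M : ℕ) :
    ∑ d ∈ Ico Y (Y + M), ∏ i ∈ s, (1 - g i d) ≤
      M * (∏ i ∈ s, (1 - A i / q i) + (z ^ R)⁻¹ * ∏ i ∈ s, (1 + z * (A i / q i))) +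
        truncProd A s R := by
  have hA0 : ∀ i ∈ s, 0 ≤ A i / q i := fun i hi =>
    div_nonneg (hA i hi ▸ sum_nonneg fun d _ => hg0 i hi d) (Nat.cast_nonneg _)
  calc ∑ d ∈ Ico Y (Y + M), ∏ i ∈ s, (1 - g i d)
      ≤ ∑ d ∈ Ico Y (Y + M), truncProd (fun i => -g i d) s R := sum_le_sum fun d _ =>
        prod_one_sub_le_truncProd (fun i hi => hg0 i hi d) (fun i hi => hg1 i hi d) hR
    _ ≤ M * truncProd (fun i => -(A i / q i)) s R + truncProd A s R := by
        simp only [truncProd]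
        rw [sum_comm, mul_sum, ← sum_add_distrib]
        refine sum_le_sum fun t ht => ?_
        have hts : t ⊆ s := mem_powerset.1 (mem_filter.1 ht).1
        exact sum_Ico_prod_neg_le (fun i hi => hg i (hts hi)) (fun i hi => hq i (hts hi))
          (hcop.mono (coe_subset.2 hts)) (fun i hi => hA i (hts hi)) (fun i hi => hg0 i (hts hi))
          Y M
    _ ≤ _ := by
        gcongr
        exact truncProd_neg_le hA0 hz R

end Sieve

/-! ### Sifting shifted primes -/

/-- The proportion of `d` removed when sifting by the prime `p`: everything if `p ∣ d + 1`, as only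
prime `d + 1` matter, and half if `p ∣ d`, so `∏ (1 - siftWeight p d)` mimics `2 ^ (-Ω_w d)`. -/
noncomputable def siftWeight (p d : ℕ) : ℝ := if p ∣ d + 1 then 1 else if p ∣ d then 1 / 2 else 0

lemma siftWeight_nonneg (p d : ℕ) : 0 ≤ siftWeight p d := by
  rw [siftWeight]
  positivity

lemma siftWeight_le_one (p d : ℕ) : siftWeight p d ≤ 1 := by
  rw [siftWeight]
  split_ifs <;> norm_num

lemma periodic_siftWeight (p : ℕ) : (siftWeight p).Periodic p := fun d => by
  simp only [siftWeight, add_right_comm d p 1, Nat.dvd_add_self_right]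

lemma sum_range_siftWeight {p : ℕ} (hp : p.Prime) : ∑ d ∈ range p, siftWeight p d = 3 / 2 := by
  obtain ⟨n, rfl⟩ := Nat.exists_eq_add_of_le' hp.two_le
  have hzero : siftWeight (n + 2) 0 = 1 / 2 := by simp [siftWeight]
  have hlast : siftWeight (n + 2) (n + 1) = 1 := by simp [siftWeight]
  have hmid : ∀ d ∈ range n, siftWeight (n + 2) (d + 1) = 0 := fun d hd => by
    rw [mem_range] at hd
    rw [siftWeight, if_neg (Nat.not_dvd_of_pos_of_lt (by omega) (by omega)),
      if_neg (Nat.not_dvd_of_pos_of_lt (by omega) (by omega))]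
  rw [sum_range_succ, sum_range_succ', sum_eq_zero hmid, hzero, hlast]
  norm_num

lemma half_pow_cardFactorsLE_le {w d : ℕ} (hwd : w ≤ d) (hd : (d + 1).Prime) :
    (1 / 2 : ℝ) ^ cardFactorsLE w d ≤ ∏ p ∈ w.primesLE, (1 - siftWeight p d) := by
  rw [cardFactorsLE, ← prod_pow_eq_pow_sum]
  refine prod_le_prod (fun p _ => by positivity) fun p hp => ?_
  have hpp := Nat.prime_of_mem_primesLE hp
  have hpw := Nat.le_of_mem_primesLE hp
  have hndvd : ¬p ∣ d + 1 := fun h => by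
    have := (Nat.prime_dvd_prime_iff_eq hpp hd).1 h
    omega
  rw [siftWeight, if_neg hndvd]
  split_ifs with hpd
  · have hd0 : d ≠ 0 := by have := hpp.pos; omega
    have := pow_le_pow_of_le_one (by norm_num : (0 : ℝ) ≤ 1 / 2) (by norm_num)
      (hpp.factorization_pos_of_dvd hd0 hpd)
    linarith
  · rw [sub_zero]
    exact pow_le_one₀ (by norm_num) (by norm_num)

lemma prod_primesLE_one_sub_div_le {s : ℝ} (hs : 1 ≤ s) (hs' : s ≤ 2) (w : ℕ) :
    ∏ p ∈ w.primesLE, (1 - s / p) ≤ mertensProd w ^ (-s) := by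
  have hhalf : ∀ p ∈ w.primesLE, (p : ℝ)⁻¹ ≤ 1 / 2 := fun p hp =>
    inv_prime_le_half (Nat.prime_of_mem_primesLE hp)
  rw [mertensProd, ← finsetProd_rpow _ _ fun p hp => inv_nonneg.2 (by linarith [hhalf p hp])]
  refine prod_le_prod (fun p hp => ?_) fun p hp => ?_
  · rw [div_eq_mul_inv]
    nlinarith [hhalf p hp]
  · have ha := hhalf p hp
    rw [rpow_neg_eq_inv_rpow, inv_inv, div_eq_mul_inv]
    have := one_add_mul_self_le_rpow_one_add (by linarith : -1 ≤ -(p : ℝ)⁻¹) hs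
    rw [← sub_eq_add_neg] at this
    linarith

lemma prod_primesLE_one_add_div_le {s : ℝ} (hs : 0 ≤ s) (w : ℕ) :
    ∏ p ∈ w.primesLE, (1 + s / p) ≤ mertensProd w ^ s := by
  have hhalf : ∀ p ∈ w.primesLE, (p : ℝ)⁻¹ ≤ 1 / 2 := fun p hp =>
    inv_prime_le_half (Nat.prime_of_mem_primesLE hp)
  rw [mertensProd, ← finsetProd_rpow _ _ fun p hp => inv_nonneg.2 (by linarith [hhalf p hp])]
  refine prod_le_prod (fun p _ => by positivity) fun p hp => ?_
  have ha := hhalf p hp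
  have hexp : exp (p : ℝ)⁻¹ ≤ (1 - (p : ℝ)⁻¹)⁻¹ := by
    simpa using exp_bound_div_one_sub_of_interval (by positivity) (by linarith : (p : ℝ)⁻¹ < 1)
  calc 1 + s / p ≤ exp ((p : ℝ)⁻¹ * s) := by
        rw [div_eq_mul_inv, mul_comm, add_comm]
        exact add_one_le_exp _
    _ = exp (p : ℝ)⁻¹ ^ s := exp_mul _ _
    _ ≤ (1 - (p : ℝ)⁻¹)⁻¹ ^ s := by gcongr

lemma truncProd_primesLE_const_le {w : ℕ} (hw : 1 ≤ w) {c : ℝ} (hc : 0 ≤ c) (k : ℕ) :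
    truncProd (fun _ => c) w.primesLE k ≤ exp c * w ^ k := by
  have hw' : (1 : ℝ) ≤ w := by exact_mod_cast hw
  have hcard : (#w.primesLE : ℝ) ≤ w := by
    rw [Nat.primesLE_eq_filter_Icc_one]
    exact_mod_cast (card_filter_le _ _).trans (by simp)
  calc truncProd (fun _ => c) w.primesLE k ≤ w ^ k * ∏ _p ∈ w.primesLE, (1 + c / w) :=
        truncProd_le_pow_mul_prod (fun _ _ => hc) hw' k
    _ ≤ w ^ k * ∏ _p ∈ w.primesLE, exp (c / w) := by
        gcongr
        rw [add_comm]
        exact add_one_le_exp _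
    _ = exp (#w.primesLE * (c / w)) * w ^ k := by
        rw [prod_const, ← exp_nat_mul, mul_comm]
    _ ≤ exp c * w ^ k := by
        gcongr
        rw [mul_div_left_comm]
        exact mul_le_of_le_one_right hc ((div_le_one₀ (by linarith)).2 hcard)

theorem sum_shiftedPrime_half_pow_le {w R Y : ℕ} (hw : 1 ≤ w) (hR : Even R) (hwY : w ≤ Y) :
    ∑ d ∈ Ico Y (Y + Y) with (d + 1).Prime, (1 / 2 : ℝ) ^ cardFactorsLE w d ≤
      Y * (mertensProd w ^ (-(3 / 2) : ℝ) + (2 ^ R)⁻¹ * mertensProd w ^ (3 : ℝ)) +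
        exp (3 / 2) * w ^ R := by
  have hprime (p : ℕ) (hp : p ∈ w.primesLE) : p.Prime := Nat.prime_of_mem_primesLE hp
  calc ∑ d ∈ Ico Y (Y + Y) with (d + 1).Prime, (1 / 2 : ℝ) ^ cardFactorsLE w d
      ≤ ∑ d ∈ Ico Y (Y + Y), ∏ p ∈ w.primesLE, (1 - siftWeight p d) := by
        rw [sum_filter]
        refine sum_le_sum fun d hd => ?_
        split_ifs with hdp
        · exact half_pow_cardFactorsLE_le (hwY.trans (mem_Ico.1 hd).1) hdp
        · exact prod_nonneg fun p _ => sub_nonneg.2 (siftWeight_le_one p d)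
    _ ≤ Y * (∏ p ∈ w.primesLE, (1 - 3 / 2 / (p : ℝ)) +
          (2 ^ R)⁻¹ * ∏ p ∈ w.primesLE, (1 + 2 * (3 / 2 / (p : ℝ)))) +
        truncProd (fun _ => 3 / 2) w.primesLE R :=
        sum_Ico_prod_one_sub_le (q := id) (fun p _ => periodic_siftWeight p)
          (fun p hp => (hprime p hp).pos)
          (fun p hp r hr hpr => (Nat.coprime_primes (hprime p hp) (hprime r hr)).2 hpr)
          (fun p hp => sum_range_siftWeight (hprime p hp)) (fun p _ => siftWeight_nonneg p)
          (fun p _ => siftWeight_le_one p) one_le_two hR Y Y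
    _ ≤ _ := by
        have htwice (p : ℕ) : 2 * (3 / 2 / (p : ℝ)) = 3 / p := by ring
        simp only [htwice]
        gcongr
        · exact prod_primesLE_one_sub_div_le (by norm_num) (by norm_num) w
        · exact prod_primesLE_one_add_div_le (by norm_num) w
        · exact truncProd_primesLE_const_le hw (by norm_num) R

theorem exists_sum_shiftedPrime_weightHom_le : ∃ C > 0, ∀ w R Y : ℕ, 2 ≤ w → Even R → w ≤ Y →
    log w ^ (9 / 2 : ℝ) ≤ 2 ^ R → w ^ R * log w ^ (3 / 2 : ℝ) ≤ Y →
    ∑ d ∈ Ico Y (Y + Y) with (d + 1).Prime, weightHom (1 / 2) w d ≤ C * log w ^ (-(3 / 2) : ℝ) := by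
  obtain ⟨C, hC, hM⟩ := exists_mertensProd_rpow_le 3
  refine ⟨C + C + exp (3 / 2), by positivity, fun w R Y hw hR hwY hlogR hlogY => ?_⟩
  have hY : (0 : ℝ) < Y := by exact_mod_cast (by omega : 0 < Y)
  have hlog : 0 < log w := log_pos (by exact_mod_cast hw)
  have hmid : (2 ^ R)⁻¹ * mertensProd w ^ (3 : ℝ) ≤ C * log w ^ (-(3 / 2) : ℝ) := by
    rw [inv_mul_le_iff₀ (by positivity)]
    calc mertensProd w ^ (3 : ℝ) ≤ C * log w ^ (3 : ℝ) := hM w hw 3 le_rfl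
      _ = log w ^ (9 / 2 : ℝ) * (C * log w ^ (-(3 / 2) : ℝ)) := by
          rw [mul_left_comm, ← rpow_add hlog]
          norm_num
      _ ≤ 2 ^ R * (C * log w ^ (-(3 / 2) : ℝ)) := by gcongr
  have herr : (w : ℝ) ^ R ≤ Y * log w ^ (-(3 / 2) : ℝ) := by
    rwa [rpow_neg hlog.le, ← div_eq_mul_inv, le_div_iff₀ (by positivity)]
  calc ∑ d ∈ Ico Y (Y + Y) with (d + 1).Prime, weightHom (1 / 2) w d
      ≤ (∑ d ∈ Ico Y (Y + Y) with (d + 1).Prime, (1 / 2 : ℝ) ^ cardFactorsLE w d) / Y := by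
        rw [sum_div]
        refine sum_le_sum fun d hd => ?_
        have hYd : Y ≤ d := (mem_Ico.1 (mem_filter.1 hd).1).1
        rw [weightHom_apply]
        gcongr
    _ ≤ (Y * (C * log w ^ (-(3 / 2) : ℝ) + C * log w ^ (-(3 / 2) : ℝ)) +
          exp (3 / 2) * (Y * log w ^ (-(3 / 2) : ℝ))) / Y := by
        gcongr
        refine (sum_shiftedPrime_half_pow_le (by omega) hR hwY).trans ?_
        gcongr
        exact hM w hw _ (by norm_num)
    _ = (C + C + exp (3 / 2)) * log w ^ (-(3 / 2) : ℝ) := by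
        field_simp

/-! ### Blocks of shifted primes -/

/-- The sifting level `w` used for the `k`-th block of shifted primes, so that `log w ≍ 2 ^ (19 k)`
while `log d ≍ 2 ^ (20 k)` to `2 ^ (20 (k + 1))` for the shifted primes `d` in the block. -/
def siftLevel (k : ℕ) : ℕ := 2 ^ 2 ^ (19 * k)

/-- The `k`-th block of shifted primes `d = p - 1`, a doubly exponential range. -/
def shiftedPrimeBlock (k : ℕ) : Finset ℕ :=
  {d ∈ Ico (2 ^ 2 ^ (20 * k)) (2 ^ 2 ^ (20 * (k + 1))) | (d + 1).Prime}

lemma two_le_siftLevel (k : ℕ) : 2 ≤ siftLevel k :=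
  Nat.le_self_pow (by positivity) 2

lemma log_siftLevel (k : ℕ) : log (siftLevel k) = 2 ^ (19 * k) * log 2 := by
  simp [siftLevel]

lemma log_siftLevel_rpow_le {s : ℝ} (hs : 0 ≤ s) {k n : ℕ} (hn : 19 * k * s ≤ n) :
    log (siftLevel k) ^ s ≤ 2 ^ n := by
  have hlog : log (siftLevel k) ≤ (2 : ℝ) ^ (19 * k : ℝ) := by
    rw [log_siftLevel]
    exact_mod_cast mul_le_of_le_one_right (by positivity) (by linarith [log_two_lt_d9])
  calc log (siftLevel k) ^ s ≤ ((2 : ℝ) ^ (19 * k : ℝ)) ^ s :=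
        rpow_le_rpow (log_natCast_nonneg _) hlog hs
    _ = 2 ^ (19 * k * s) := (rpow_mul zero_le_two _ _).symm
    _ ≤ 2 ^ (n : ℝ) := rpow_le_rpow_of_exponent_le one_le_two hn
    _ = 2 ^ n := rpow_natCast _ _

lemma log_siftLevel_rpow_neg_two_le (k : ℕ) :
    log (siftLevel k) ^ (-2 : ℝ) ≤ 4 * (2 ^ (38 * k))⁻¹ := by
  have hlog : 2 ^ (19 * k) / 2 ≤ log (siftLevel k) := by
    rw [log_siftLevel, div_eq_mul_one_div]
    gcongr
    linarith [log_two_gt_d9]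
  calc log (siftLevel k) ^ (-2 : ℝ) ≤ (2 ^ (19 * k) / 2) ^ (-2 : ℝ) :=
        rpow_le_rpow_of_nonpos (by positivity) hlog (by norm_num)
    _ = 4 * (2 ^ (38 * k))⁻¹ := by
        rw [rpow_neg (by positivity), rpow_two, div_pow, ← pow_mul, inv_div,
          (by ring : 19 * k * 2 = 38 * k)]
        norm_num [div_eq_mul_inv]

lemma sum_Ico_eq_sum_sum_Ico_of_monotone {u : ℕ → ℕ} (hu : Monotone u) {a b : ℕ} (hab : a ≤ b)
    (f : ℕ → ℝ) :
    ∑ d ∈ Ico (u a) (u b), f d = ∑ i ∈ Ico a b, ∑ d ∈ Ico (u i) (u (i + 1)), f d := by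
  induction b, hab using Nat.le_induction with
  | base => simp
  | succ b hab ih =>
    rw [sum_Ico_succ_top hab, ← ih, sum_Ico_consecutive f (hu hab) (hu b.le_succ)]

lemma eventually_mul_le_two_pow (c : ℕ) : ∀ᶠ k : ℕ in atTop, c * k ≤ 2 ^ k := by
  have hlim := (tendsto_pow_const_div_const_pow_of_one_lt 1 (one_lt_two (α := ℝ))).const_mul (c : ℝ)
  rw [mul_zero] at hlim
  filter_upwards [hlim.eventually_le_const one_pos] with k hk
  rw [pow_one, ← mul_div_assoc, div_le_one₀ (by positivity)] at hk
  exact_mod_cast hk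

lemma exists_sum_dyadic_shiftedPrime_le : ∃ C > 0, ∀ᶠ k in atTop, ∀ i : ℕ, 2 ^ (20 * k) ≤ i →
    ∑ d ∈ Ico (2 ^ i) (2 ^ (i + 1)) with (d + 1).Prime, weightHom (1 / 2) (siftLevel k) d ≤
      C * log (siftLevel k) ^ (-(3 / 2) : ℝ) := by
  obtain ⟨C, hC, hsieve⟩ := exists_sum_shiftedPrime_weightHom_le
  refine ⟨C, hC, ?_⟩
  filter_upwards [eventually_mul_le_two_pow 115] with k hk i hi
  have hexp : 2 ^ (20 * k) = 2 ^ k * 2 ^ (19 * k) := by rw [← pow_add]; congr 1; ring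
  rw [hexp] at hi
  rw [pow_succ 2 i, mul_two]
  refine hsieve _ (86 * k) _ (two_le_siftLevel k) ⟨43 * k, by ring⟩ ?_ ?_ ?_
  · exact Nat.pow_le_pow_right two_pos (by nlinarith [Nat.one_le_two_pow (n := k)])
  · exact log_siftLevel_rpow_le (by norm_num) (by push_cast; linarith)
  · calc (siftLevel k : ℝ) ^ (86 * k) * log (siftLevel k) ^ (3 / 2 : ℝ)
        ≤ (siftLevel k : ℝ) ^ (86 * k) * 2 ^ (29 * k) := by
          gcongr
          exact log_siftLevel_rpow_le (by norm_num) (by push_cast; linarith)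
      _ = 2 ^ (2 ^ (19 * k) * (86 * k) + 29 * k) := by
          rw [siftLevel, Nat.cast_pow, Nat.cast_ofNat, ← pow_mul, ← pow_add]
      _ ≤ (2 : ℝ) ^ i := by
          gcongr
          · exact one_le_two
          · nlinarith [Nat.one_le_two_pow (n := 19 * k)]
      _ = ((2 ^ i : ℕ) : ℝ) := by push_cast; rfl

theorem exists_sum_shiftedPrimeBlock_le : ∃ C > 0, ∀ᶠ k in atTop,
    ∑ d ∈ shiftedPrimeBlock k, weightHom (1 / 2) (siftLevel k) d ≤
      C * 2 ^ (20 * k) * log (siftLevel k) ^ (-(3 / 2) : ℝ) := by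
  obtain ⟨C, hC, hdyadic⟩ := exists_sum_dyadic_shiftedPrime_le
  refine ⟨2 ^ 20 * C, by positivity, hdyadic.mono fun k hk => ?_⟩
  have hcard : ((2 ^ (20 * (k + 1)) - 2 ^ (20 * k) : ℕ) : ℝ) ≤ 2 ^ 20 * 2 ^ (20 * k) := by
    rw [← pow_add, (by ring : 20 + 20 * k = 20 * (k + 1))]
    exact_mod_cast Nat.sub_le _ _
  rw [shiftedPrimeBlock, sum_filter, sum_Ico_eq_sum_sum_Ico_of_monotone
    (pow_right_mono₀ one_le_two) (Nat.pow_le_pow_right two_pos (by omega))]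
  simp only [← sum_filter]
  calc _ ≤ ((2 ^ (20 * (k + 1)) - 2 ^ (20 * k) : ℕ) : ℝ) *
          (C * log (siftLevel k) ^ (-(3 / 2) : ℝ)) := by
        simpa using sum_le_card_nsmul _ _ _ fun i hi => hk i (mem_Ico.1 hi).1
    _ ≤ 2 ^ 20 * 2 ^ (20 * k) * (C * log (siftLevel k) ^ (-(3 / 2) : ℝ)) := by gcongr
    _ = _ := by ring

/-! ### Multiples of shifted primes -/

/-- The set of multiples of the elements of `D`. -/
def multiplesOf (D : Set ℕ) : Set ℕ := {n | ∃ d ∈ D, d ∣ n}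

lemma sum_multiplesOf_le {f : ℕ →* ℝ} (hf : ∀ n, 0 ≤ f n) (D : Finset ℕ) (x : ℕ) :
    ∑ n ∈ Icc 1 x, (multiplesOf D).indicator f n ≤
      (∑ d ∈ D, f d) * ∑ m ∈ Icc 1 x, f m := by
  classical
  simp only [Set.indicator_apply]
  rw [← sum_filter, sum_mul_sum, ← sum_product']
  calc ∑ n ∈ Icc 1 x with n ∈ multiplesOf D, f n
      ≤ ∑ n ∈ (D ×ˢ Icc 1 x).image fun y => y.1 * y.2, f n := by
        refine sum_le_sum_of_subset_of_nonneg (fun n hn => ?_) fun n _ _ => hf n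
        obtain ⟨hnx, d, hd, m, rfl⟩ := mem_filter.1 hn
        obtain ⟨hpos, hle⟩ := mem_Icc.1 hnx
        have hd0 : 0 < d := Nat.pos_of_mul_pos_right hpos
        have hm0 : 0 < m := Nat.pos_of_mul_pos_left hpos
        refine mem_image.2 ⟨(d, m), mem_product.2 ⟨hd, mem_Icc.2 ⟨hm0, ?_⟩⟩, rfl⟩
        exact (Nat.le_mul_of_pos_left m hd0).trans hle
    _ ≤ ∑ y ∈ D ×ˢ Icc 1 x, f (y.1 * y.2) := sum_image_le_of_nonneg fun n _ => hf n
    _ = ∑ y ∈ D ×ˢ Icc 1 x, f y.1 * f y.2 := by simp only [map_mul]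

lemma harmonicSum_le_mul_sum_weightHom {S : Set ℕ} {c v : ℝ} {w : ℕ}
    (h : ∀ n ∈ S, 1 ≤ c * v ^ cardFactorsLE w n) (x : ℕ) :
    harmonicSum S x ≤ c * ∑ n ∈ Icc 1 x, S.indicator (weightHom v w) n := by
  rw [harmonicSum, mul_sum]
  refine sum_le_sum fun n _ => ?_
  by_cases hn : n ∈ S
  · rw [Set.indicator_of_mem hn, Set.indicator_of_mem hn, weightHom_apply, ← mul_div_assoc,
      inv_eq_one_div]
    gcongr
    exact h n hn
  · simp [hn]

lemma harmonicSum_setOf_cardFactorsLE_le (D : Finset ℕ) (w m x : ℕ) :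
    harmonicSum {n ∈ multiplesOf D | cardFactorsLE w n ≤ m} x ≤
      2 ^ m * ((∑ d ∈ D, weightHom (1 / 2) w d) * ∑ n ∈ Icc 1 x, weightHom (1 / 2) w n) := by
  have hnonneg := weightHom_nonneg (by norm_num : (0 : ℝ) ≤ 1 / 2) w
  refine (harmonicSum_le_mul_sum_weightHom (c := 2 ^ m) (v := 1 / 2) (w := w) (fun n hn => ?_)
    x).trans ?_
  · calc (1 : ℝ) = 2 ^ cardFactorsLE w n * (1 / 2) ^ cardFactorsLE w n := by
          rw [← mul_pow]; norm_num
      _ ≤ 2 ^ m * (1 / 2) ^ cardFactorsLE w n := by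
          gcongr
          exacts [one_le_two, hn.2]
  · gcongr
    refine (sum_le_sum fun n _ => ?_).trans (sum_multiplesOf_le hnonneg D x)
    exact Set.indicator_le_indicator_of_subset (Set.sep_subset _ _) hnonneg n

lemma harmonicSum_setOf_lt_cardFactorsLE_le {v : ℝ} (hv : 1 ≤ v) (w m x : ℕ) :
    harmonicSum {n | m < cardFactorsLE w n} x ≤ (v ^ m)⁻¹ * ∑ n ∈ Icc 1 x, weightHom v w n := by
  have hv0 : 0 < v := by linarith
  refine (harmonicSum_le_mul_sum_weightHom (c := (v ^ m)⁻¹) (v := v) (w := w) (fun n hn => ?_)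
    x).trans ?_
  · rw [inv_mul_eq_div, one_le_div₀ (by positivity)]
    exact pow_le_pow_right₀ hv (le_of_lt hn)
  · gcongr with n
    exact Set.indicator_le_self' (fun _ _ => weightHom_nonneg hv0.le w _) n

/-- The threshold `17 k` balances two error terms: `2 ^ (17 k) * 2 ^ (20 k)` is beaten by
`(log w) ^ 2 ≍ 2 ^ (38 k)` here, and `(log w) ^ (1 / 4) ≤ 2 ^ (5 k)` by `(5 / 4) ^ (17 k)` below. -/
lemma exists_harmonicSum_multiplesOf_block_low_le : ∃ C > 0, ∀ᶠ k in atTop, ∀ x,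
    siftLevel k ≤ x → harmonicSum {n ∈ multiplesOf (shiftedPrimeBlock k) |
      cardFactorsLE (siftLevel k) n ≤ 17 * k} x ≤ C * (3 / 4) ^ k * log x := by
  obtain ⟨C₁, hC₁, hblock⟩ := exists_sum_shiftedPrimeBlock_le
  obtain ⟨C₂, hC₂, hmean⟩ := exists_sum_weightHom_le
  refine ⟨C₁ * C₂ * 4, by positivity, hblock.mono fun k hk x hx => ?_⟩
  set w := siftLevel k
  have hlog : 0 < log w := log_pos (by exact_mod_cast two_le_siftLevel k)
  calc _ ≤ 2 ^ (17 * k) * ((∑ d ∈ shiftedPrimeBlock k, weightHom (1 / 2) w d) *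
          ∑ n ∈ Icc 1 x, weightHom (1 / 2) w n) := harmonicSum_setOf_cardFactorsLE_le _ _ _ _
    _ ≤ 2 ^ (17 * k) * (C₁ * 2 ^ (20 * k) * log w ^ (-(3 / 2) : ℝ) *
          (C₂ * log x * log w ^ (1 / 2 - 1 : ℝ))) := by
        gcongr
        · exact sum_nonneg fun n _ => weightHom_nonneg (by norm_num) w n
        · exact hmean _ (by norm_num) (by norm_num) w x (two_le_siftLevel k) hx
    _ = C₁ * C₂ * log x * (2 ^ (37 * k) * log w ^ (-2 : ℝ)) := by
        rw [(by norm_num : (-2 : ℝ) = -(3 / 2) + (1 / 2 - 1)), rpow_add hlog,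
          (by ring : 37 * k = 17 * k + 20 * k), pow_add]
        ring
    _ ≤ C₁ * C₂ * log x * (2 ^ (37 * k) * (4 * (2 ^ (38 * k))⁻¹)) := by
        gcongr
        exact log_siftLevel_rpow_neg_two_le k
    _ = C₁ * C₂ * 4 * (1 / 2) ^ k * log x := by
        rw [(by ring : 38 * k = 37 * k + k), pow_add, one_div, inv_pow]
        field_simp
    _ ≤ C₁ * C₂ * 4 * (3 / 4) ^ k * log x := by
        gcongr ?_ * ?_ ^ k * _
        norm_num

lemma exists_harmonicSum_setOf_lt_cardFactorsLE_siftLevel_le : ∃ C > 0, ∀ k x : ℕ,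
    siftLevel k ≤ x → harmonicSum {n | 17 * k < cardFactorsLE (siftLevel k) n} x ≤
      C * (3 / 4) ^ k * log x := by
  obtain ⟨C, hC, hmean⟩ := exists_sum_weightHom_le
  refine ⟨C, hC, fun k x hx => ?_⟩
  calc _ ≤ ((5 / 4) ^ (17 * k))⁻¹ * ∑ n ∈ Icc 1 x, weightHom (5 / 4) (siftLevel k) n :=
        harmonicSum_setOf_lt_cardFactorsLE_le (by norm_num) _ _ _
    _ ≤ ((5 / 4) ^ (17 * k))⁻¹ * (C * log x * log (siftLevel k) ^ (5 / 4 - 1 : ℝ)) := by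
        gcongr
        exact hmean _ (by norm_num) (by norm_num) _ x (two_le_siftLevel k) hx
    _ ≤ ((5 / 4) ^ (17 * k))⁻¹ * (C * log x * 2 ^ (5 * k)) := by
        gcongr
        exact log_siftLevel_rpow_le (by norm_num) (by push_cast; linarith)
    _ = C * (((5 / 4) ^ 17)⁻¹ * 2 ^ 5) ^ k * log x := by
        rw [mul_pow, inv_pow, ← pow_mul, ← pow_mul]
        ring
    _ ≤ C * (3 / 4) ^ k * log x := by
        gcongr
        norm_num

theorem exists_harmonicSum_multiplesOf_block_le : ∃ C > 0, ∀ᶠ k in atTop, ∀ x,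
    harmonicSum (multiplesOf (shiftedPrimeBlock k)) x ≤ C * (3 / 4) ^ k * log x := by
  obtain ⟨C₁, hC₁, hlow⟩ := exists_harmonicSum_multiplesOf_block_low_le
  obtain ⟨C₂, hC₂, hhigh⟩ := exists_harmonicSum_setOf_lt_cardFactorsLE_siftLevel_le
  refine ⟨C₁ + C₂, by positivity, hlow.mono fun k hk x => ?_⟩
  rcases le_or_gt (siftLevel k) x with hx | hx
  · calc harmonicSum (multiplesOf (shiftedPrimeBlock k)) x
        ≤ harmonicSum ({n ∈ multiplesOf (shiftedPrimeBlock k) |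
            cardFactorsLE (siftLevel k) n ≤ 17 * k} ∪
              {n | 17 * k < cardFactorsLE (siftLevel k) n}) x :=
          harmonicSum_mono fun n _ hn => (le_or_gt _ _).imp (And.intro hn) id
      _ ≤ C₁ * (3 / 4) ^ k * log x + C₂ * (3 / 4) ^ k * log x :=
          (harmonicSum_union_le _ _ x).trans (add_le_add (hk x hx) (hhigh k x hx))
      _ = (C₁ + C₂) * (3 / 4) ^ k * log x := by ring
  · have hempty : ∀ n ∈ Icc 1 x, n ∈ multiplesOf (shiftedPrimeBlock k) → n ∈ (∅ : Set ℕ) := by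
      rintro n hn ⟨d, hd, hdn⟩
      obtain ⟨hn1, hnx⟩ := mem_Icc.1 hn
      have hwd : siftLevel k ≤ d := by
        refine le_trans ?_ (mem_Ico.1 (mem_filter.1 hd).1).1
        exact Nat.pow_le_pow_right two_pos (Nat.pow_le_pow_right two_pos (by omega))
      exact absurd (Nat.le_of_dvd hn1 hdn) (by omega)
    refine (harmonicSum_mono hempty).trans ?_
    simp only [harmonicSum, Set.indicator_empty, sum_const_zero]
    positivity

lemma exists_mem_shiftedPrimeBlock {K d x : ℕ} (hKd : 2 ^ 2 ^ (20 * K) ≤ d) (hdx : d ≤ x)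
    (hd : (d + 1).Prime) : ∃ k ∈ Ico K (K + x), d ∈ shiftedPrimeBlock k := by
  have hlt : d < 2 ^ 2 ^ (20 * (K + x)) := by
    have h1 : x < 2 ^ x := Nat.lt_two_pow_self
    have h2 : x < 2 ^ (20 * (K + x)) :=
      h1.trans_le (Nat.pow_le_pow_right two_pos (by omega))
    exact hdx.trans_lt (h1.trans (Nat.pow_lt_pow_right one_lt_two h2))
  have hmem := Ico_subset_biUnion_Ico x (fun i => 2 ^ 2 ^ (20 * (K + i))) ⟨hKd, hlt⟩
  obtain ⟨i, hi, hdi⟩ := Set.mem_iUnion₂.1 hmem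
  exact ⟨K + i, mem_Ico.2 ⟨by omega, by simpa using hi⟩, mem_filter.2 ⟨mem_Ico.2 hdi, hd⟩⟩

theorem exists_harmonicSum_multiplesOf_shiftedPrime_le {ε : ℝ} (hε : 0 < ε) : ∃ T, ∀ x,
    harmonicSum (multiplesOf {d | T ≤ d ∧ (d + 1).Prime}) x ≤ ε * log x := by
  obtain ⟨C, hC, hblock⟩ := exists_harmonicSum_multiplesOf_block_le
  have hgeom : Tendsto (fun K : ℕ => C * ((3 / 4 : ℝ) ^ K / (1 - 3 / 4))) atTop (𝓝 0) := by
    simpa using ((tendsto_pow_atTop_nhds_zero_of_lt_one (by norm_num)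
      (by norm_num : (3 / 4 : ℝ) < 1)).div_const (1 - 3 / 4)).const_mul C
  obtain ⟨K, hK, hblockK⟩ :=
    ((hgeom.eventually_le_const hε).and (eventually_forall_ge_atTop.2 hblock)).exists
  refine ⟨2 ^ 2 ^ (20 * K), fun x => ?_⟩
  have hcover : ∀ n ∈ Icc 1 x, n ∈ multiplesOf {d | 2 ^ 2 ^ (20 * K) ≤ d ∧ (d + 1).Prime} →
      n ∈ ⋃ k ∈ Ico K (K + x), multiplesOf (shiftedPrimeBlock k) := by
    rintro n hn ⟨d, ⟨hKd, hd⟩, hdn⟩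
    obtain ⟨hn1, hnx⟩ := mem_Icc.1 hn
    obtain ⟨k, hk, hdk⟩ :=
      exists_mem_shiftedPrimeBlock hKd ((Nat.le_of_dvd hn1 hdn).trans hnx) hd
    exact Set.mem_iUnion₂.2 ⟨k, hk, d, hdk, hdn⟩
  calc harmonicSum (multiplesOf {d | 2 ^ 2 ^ (20 * K) ≤ d ∧ (d + 1).Prime}) x
      ≤ ∑ k ∈ Ico K (K + x), harmonicSum (multiplesOf (shiftedPrimeBlock k)) x :=
        (harmonicSum_mono hcover).trans (harmonicSum_biUnion_le _ _ x)
    _ ≤ ∑ k ∈ Ico K (K + x), C * (3 / 4) ^ k * log x :=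
        sum_le_sum fun k hk => hblockK k (mem_Ico.1 hk).1 x
    _ = C * (∑ k ∈ Ico K (K + x), (3 / 4) ^ k) * log x := by rw [mul_sum, sum_mul]
    _ ≤ C * ((3 / 4) ^ K / (1 - 3 / 4)) * log x := by
        gcongr
        exact geom_sum_Ico_le_of_lt_one (by norm_num) (by norm_num)
    _ ≤ ε * log x := by gcongr

/-! ### Level sets of `omegaStar` -/

lemma one_le_omegaStar {n : ℕ} (hn : 0 < n) : 1 ≤ omegaStar n :=
  card_pos.2 ⟨1, by simp [hn.ne', Nat.prime_two]⟩

lemma mem_multiplesOf_shiftedPrime_of_lt_omegaStar {n T : ℕ} (h : T < omegaStar n) :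
    n ∈ multiplesOf {d | T ≤ d ∧ (d + 1).Prime} := by
  by_contra! hn
  have hsubset : {d ∈ n.divisors | (d + 1).Prime} ⊆ range T := fun d hd => by
    obtain ⟨hdn, hprime⟩ := mem_filter.1 hd
    exact mem_range.2 (not_le.1 fun hTd =>
      hn ⟨d, ⟨hTd, hprime⟩, Nat.dvd_of_mem_divisors hdn⟩)
  exact h.not_ge ((card_le_card hsubset).trans_eq (card_range T))

end

theorem level_set_densities_sum_to_one (δ : ℕ → ℝ)
    (hδ : ∀ k : ℕ, 0 < k →
      Tendsto (fun x : ℝ =>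
          (((Finset.Icc 1 ⌊x⌋₊).filter (fun n => omegaStar n = k)).card : ℝ) / x)
        atTop (nhds (δ k))) :
    HasSum (fun k : ℕ => δ (k + 1)) 1 := by
  refine hasSum_density_of_tight (f := fun n => omegaStar n - 1) (fun k => ?_) fun ε hε => ?_
  · have hlevel (N : ℕ) : {n ∈ Finset.Icc 1 N | omegaStar n - 1 = k} =
        {n ∈ Finset.Icc 1 N | omegaStar n = k + 1} := Finset.filter_congr fun n hn => by
      have := one_le_omegaStar (Finset.mem_Icc.1 hn).1
      omega
    simpa [hlevel, Function.comp_def] using (hδ (k + 1) k.succ_pos).comp tendsto_natCast_atTop_atTop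
  · obtain ⟨T, hT⟩ := exists_harmonicSum_multiplesOf_shiftedPrime_le hε
    refine ⟨T, Eventually.of_forall fun x => (harmonicSum_mono fun n hn h => ?_).trans (hT x)⟩
    change T ≤ omegaStar n - 1 at h
    have := one_le_omegaStar (Finset.mem_Icc.1 hn).1
    exact mem_multiplesOf_shiftedPrime_of_lt_omegaStar (by omega)
end

section
/- For every positive integer k there exists a positive integer n with ω*(n) = k; that is, the level set L_k = {n ∈ ℕ : ω*(n) = k} is nonempty. -/
open Filter Real

/-!
Since `ω*(1) = 1` and `ω*(2) = 2`, it is enough that every even `n` has a multiple `n * s` with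
`ω*(n * s) = ω*(n) + 1`. Suppose the multiples of `n` skip this value. If `n * m + 1` is prime and
`m > 1`, then passing from `n` to `n * m` creates new divisors `d` with `d + 1` prime; were they
created one at a time along the divisors of `m`, no value would be skipped. Hence some `s ∣ m`,
`s > 1`, is a *twin multiplier*: `d * s + 1` is prime for at least two divisors `d` of `n`.

As in Brun's theorem, Selberg's sieve shows that `∑ 1 / φ(s)` over the twin multipliers converges.
Take only `m ≡ c [MOD T!]` with `c` prime to `T!`, so that `s > T`. Splitting `m = s * b` according
to whether `b` is large or small, and sieving for `b` with `s` fixed or for `s` with `b` fixed,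
bounds the primes `n * m + 1 ≡ n * c + 1 [MOD n * T!]` by a small fraction of their expected number
as `T → ∞`. This contradicts the pole at `1` of the Dirichlet series attached to the progression,
which provides the expected order of magnitude on infinitely many dyadic blocks.
-/

open Finset
open scoped ArithmeticFunction.Moebius

section SelbergUpperBound

open BoundingSieve

theorem sum_divisors_dvd_moebius {l m : ℕ} (hm : Squarefree m) :
    ∑ d ∈ m.divisors with l ∣ d, μ d = if l = m then μ l else 0 := by
  have hm0 := hm.ne_zero
  by_cases hlm : l ∣ m
  · obtain ⟨k, rfl⟩ := hlm
    have hl0 : l ≠ 0 := left_ne_zero_of_mul hm0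
    have hk0 : k ≠ 0 := right_ne_zero_of_mul hm0
    have hfilter : {d ∈ (l * k).divisors | l ∣ d} = k.divisors.image (l * ·) := by
      ext d
      simp only [mem_filter, Nat.mem_divisors, mem_image]
      constructor
      · rintro ⟨⟨h, _⟩, e, rfl⟩
        exact ⟨e, ⟨Nat.dvd_of_mul_dvd_mul_left (Nat.pos_of_ne_zero hl0) h, hk0⟩, rfl⟩
      · rintro ⟨e, ⟨he, _⟩, rfl⟩
        exact ⟨⟨mul_dvd_mul_left l he, hm0⟩, dvd_mul_right _ _⟩
    have hmul : ∀ e ∈ k.divisors, μ (l * e) = μ l * μ e := fun e he ↦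
      ArithmeticFunction.isMultiplicative_moebius.map_mul_of_coprime
        ((Nat.coprime_of_squarefree_mul hm).coprime_dvd_right (Nat.dvd_of_mem_divisors he))
    have hone : ∑ e ∈ k.divisors, μ e = if k = 1 then 1 else 0 := by
      rw [← ArithmeticFunction.coe_zeta_mul_apply, ArithmeticFunction.coe_zeta_mul_moebius,
        ArithmeticFunction.one_apply]
    rw [hfilter, sum_image fun a _ b _ h ↦ mul_left_cancel₀ hl0 h, sum_congr rfl hmul,
      ← mul_sum, hone, mul_ite, mul_one, mul_zero]
    simp only [left_eq_mul₀ hl0]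
  · rw [if_neg fun h ↦ hlm h.dvd]
    refine sum_eq_zero fun d hd ↦ ?_
    obtain ⟨hd, hld⟩ := mem_filter.1 hd
    exact absurd (hld.trans (Nat.dvd_of_mem_divisors hd)) hlm

variable (s : BoundingSieve) (R : ℕ)

/-- The denominator `S` of Selberg's upper bound: the Selberg terms summed over the divisors of
the sifting product of size at most `R`. -/
noncomputable def selbergSum : ℝ :=
  ∑ l ∈ s.prodPrimes.divisors with l ≤ R, s.selbergTerms l

/-- Selberg's weights of level `R`: they minimise the main term of the `Λ²` sieve among the
weights supported on `d ≤ R` and normalised by `w 1 = 1`. -/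
noncomputable def selbergWeight (d : ℕ) : ℝ :=
  (s.nu d)⁻¹ * μ d * (selbergSum s R)⁻¹ *
    ∑ l ∈ s.prodPrimes.divisors with l ≤ R ∧ d ∣ l, s.selbergTerms l

variable {s R}

theorem selbergTerms_pos_of_mem {l : ℕ} (hl : l ∈ s.prodPrimes.divisors) :
    0 < s.selbergTerms l :=
  selbergTerms_pos (Nat.dvd_of_mem_divisors hl)

theorem selbergSum_pos (hR : 1 ≤ R) : 0 < selbergSum s R :=
  sum_pos (fun _ hl ↦ selbergTerms_pos_of_mem (mem_of_mem_filter _ hl))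
    ⟨1, by simpa [prodPrimes_ne_zero] using hR⟩

theorem selbergWeight_one (hR : 1 ≤ R) : selbergWeight s R 1 = 1 := by
  have h := (selbergSum_pos (s := s) hR).ne'
  simp only [selbergWeight, s.nu_mult.map_one, one_dvd, and_true]
  rw [← selbergSum, mul_assoc, inv_mul_cancel₀ h]
  simp

theorem selbergWeight_eq_zero {d : ℕ} (hd : R < d) : selbergWeight s R d = 0 := by
  have : {l ∈ s.prodPrimes.divisors | l ≤ R ∧ d ∣ l} = ∅ :=
    filter_eq_empty_iff.2 fun l hl h ↦
      (h.1.trans_lt hd).not_ge (Nat.le_of_dvd (Nat.pos_of_mem_divisors hl) h.2)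
  rw [selbergWeight, this, sum_empty, mul_zero]

theorem abs_selbergWeight_le {d : ℕ} (hR : 1 ≤ R) (hd : d ∣ s.prodPrimes) :
    |selbergWeight s R d| ≤ (s.nu d)⁻¹ := by
  set U := ∑ l ∈ s.prodPrimes.divisors with l ≤ R ∧ d ∣ l, s.selbergTerms l with hU
  have hS := selbergSum_pos (s := s) hR
  have hnu := nu_pos_of_dvd_prodPrimes hd
  have hU0 : 0 ≤ U := sum_nonneg fun l hl ↦ (selbergTerms_pos_of_mem (mem_of_mem_filter l hl)).le
  have hUS : U ≤ selbergSum s R :=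
    sum_le_sum_of_subset_of_nonneg (monotone_filter_right _ fun _ _ h ↦ h.1)
      fun l hl _ ↦ (selbergTerms_pos_of_mem (mem_of_mem_filter l hl)).le
  have hmu : |(μ d : ℝ)| ≤ 1 := mod_cast ArithmeticFunction.abs_moebius_le_one
  calc |selbergWeight s R d| = (s.nu d)⁻¹ * (|(μ d : ℝ)| * (U / selbergSum s R)) := by
        rw [selbergWeight, ← hU, abs_mul, abs_mul, abs_mul, abs_of_pos (inv_pos.2 hnu),
          abs_of_pos (inv_pos.2 hS), abs_of_nonneg hU0]
        ring
    _ ≤ (s.nu d)⁻¹ * 1 := by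
        gcongr
        exact mul_le_one₀ hmu (by positivity) (div_le_one_of_le₀ hUS hS.le)
    _ = (s.nu d)⁻¹ := mul_one _

theorem sum_nu_mul_selbergWeight {l : ℕ} (hl : l ∣ s.prodPrimes) :
    ∑ d ∈ s.prodPrimes.divisors, (if l ∣ d then s.nu d * selbergWeight s R d else 0) =
      if l ≤ R then μ l * s.selbergTerms l * (selbergSum s R)⁻¹ else 0 := by
  set D := s.prodPrimes.divisors with hD
  have hexpand : ∀ d ∈ D.filter (l ∣ ·), s.nu d * selbergWeight s R d =
      ∑ m ∈ D with m ≤ R ∧ d ∣ m, (selbergSum s R)⁻¹ * s.selbergTerms m * (μ d : ℝ) := by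
    intro d hd
    have := nu_ne_zero (Nat.dvd_of_mem_divisors (mem_of_mem_filter d hd))
    rw [selbergWeight, ← hD, ← sum_mul, ← mul_sum]
    field_simp
  have hswap (d m : ℕ) : d ∈ D.filter (l ∣ ·) ∧ m ∈ {m ∈ D | m ≤ R ∧ d ∣ m} ↔
      d ∈ m.divisors.filter (l ∣ ·) ∧ m ∈ {m ∈ D | m ≤ R} := by
    simp only [mem_filter, hD, Nat.mem_divisors]
    constructor
    · rintro ⟨⟨_, hld⟩, ⟨hm, hP⟩, hmR, hdm⟩
      exact ⟨⟨⟨hdm, ne_zero_of_dvd_ne_zero hP hm⟩, hld⟩, ⟨hm, hP⟩, hmR⟩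
    · rintro ⟨⟨⟨hdm, _⟩, hld⟩, ⟨hm, hP⟩, hmR⟩
      exact ⟨⟨⟨hdm.trans hm, hP⟩, hld⟩, ⟨hm, hP⟩, hmR, hdm⟩
  have hinner : ∀ m ∈ D.filter (· ≤ R),
      ∑ d ∈ m.divisors with l ∣ d, (selbergSum s R)⁻¹ * s.selbergTerms m * (μ d : ℝ) =
        if l = m then μ l * s.selbergTerms l * (selbergSum s R)⁻¹ else 0 := by
    intro m hm
    have hsq := squarefree_of_mem_divisors_prodPrimes (mem_of_mem_filter m hm)
    rw [← mul_sum, ← Int.cast_sum, sum_divisors_dvd_moebius hsq]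
    split_ifs with h
    · subst h; ring
    · simp
  rw [← sum_filter, sum_congr rfl hexpand, sum_comm' hswap, sum_congr rfl hinner, sum_ite_eq]
  simp [hD, hl, prodPrimes_ne_zero]

theorem mainSum_selbergWeight (hR : 1 ≤ R) :
    s.mainSum (lambdaSquared (selbergWeight s R)) = (selbergSum s R)⁻¹ := by
  have hS := (selbergSum_pos (s := s) hR).ne'
  have hterm : ∀ l ∈ s.prodPrimes.divisors, (s.selbergTerms l)⁻¹ *
      (∑ d ∈ s.prodPrimes.divisors, if l ∣ d then s.nu d * selbergWeight s R d else 0) ^ 2 =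
        if l ≤ R then s.selbergTerms l * (selbergSum s R)⁻¹ ^ 2 else 0 := by
    intro l hl
    have hg := (selbergTerms_pos_of_mem hl).ne'
    have hmu : (μ l : ℝ) ^ 2 = 1 := mod_cast
      ArithmeticFunction.moebius_sq_eq_one_of_squarefree (squarefree_of_mem_divisors_prodPrimes hl)
    rw [sum_nu_mul_selbergWeight (Nat.dvd_of_mem_divisors hl)]
    split_ifs
    · rw [mul_pow, mul_pow, hmu]; field_simp
    · simp
  rw [mainSum_lambdaSquared_eq_sum_mul_sum_sq, sum_congr rfl hterm, ← sum_filter, ← sum_mul,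
    ← selbergSum]
  field_simp

theorem errSum_lambdaSquared_le (w : ℕ → ℝ) :
    s.errSum (lambdaSquared w) ≤ ∑ d₁ ∈ s.prodPrimes.divisors, ∑ d₂ ∈ s.prodPrimes.divisors,
      |w d₁| * |w d₂| * |s.rem (d₁.lcm d₂)| := by
  set D := s.prodPrimes.divisors
  have habs : ∀ d ∈ D, |lambdaSquared w d| ≤
      ∑ d₁ ∈ D, ∑ d₂ ∈ D, if d = d₁.lcm d₂ then |w d₁| * |w d₂| else 0 := by
    intro d hd
    have hsub : d.divisors ⊆ D :=
      Nat.divisors_subset_of_dvd prodPrimes_ne_zero (Nat.dvd_of_mem_divisors hd)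
    have hnn (d₁ d₂ : ℕ) : 0 ≤ if d = d₁.lcm d₂ then |w d₁| * |w d₂| else 0 := by
      split_ifs <;> positivity
    calc |lambdaSquared w d|
        ≤ ∑ d₁ ∈ d.divisors, ∑ d₂ ∈ d.divisors, |if d = d₁.lcm d₂ then w d₁ * w d₂ else 0| :=
          (abs_sum_le_sum_abs _ _).trans (sum_le_sum fun _ _ ↦ abs_sum_le_sum_abs _ _)
      _ = ∑ d₁ ∈ d.divisors, ∑ d₂ ∈ d.divisors,
            if d = d₁.lcm d₂ then |w d₁| * |w d₂| else 0 := by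
          simp only [apply_ite abs, abs_mul, abs_zero]
      _ ≤ ∑ d₁ ∈ D, ∑ d₂ ∈ d.divisors, if d = d₁.lcm d₂ then |w d₁| * |w d₂| else 0 :=
          sum_le_sum_of_subset_of_nonneg hsub fun _ _ _ ↦ sum_nonneg fun _ _ ↦ hnn _ _
      _ ≤ ∑ d₁ ∈ D, ∑ d₂ ∈ D, if d = d₁.lcm d₂ then |w d₁| * |w d₂| else 0 :=
          sum_le_sum fun _ _ ↦ sum_le_sum_of_subset_of_nonneg hsub fun _ _ _ ↦ hnn _ _
  calc s.errSum (lambdaSquared w)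
      ≤ ∑ d ∈ D, ∑ d₁ ∈ D, ∑ d₂ ∈ D,
          if d = d₁.lcm d₂ then |w d₁| * |w d₂| * |s.rem d| else 0 := by
        refine sum_le_sum fun d hd ↦
          (mul_le_mul_of_nonneg_right (habs d hd) (abs_nonneg _)).trans_eq ?_
        simp only [sum_mul, ite_mul, zero_mul]
    _ = ∑ d₁ ∈ D, ∑ d₂ ∈ D, ∑ d ∈ D,
          if d = d₁.lcm d₂ then |w d₁| * |w d₂| * |s.rem d| else 0 := by
        rw [sum_comm]
        exact sum_congr rfl fun _ _ ↦ sum_comm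
    _ = ∑ d₁ ∈ D, ∑ d₂ ∈ D, |w d₁| * |w d₂| * |s.rem (d₁.lcm d₂)| :=
        sum_congr rfl fun d₁ h₁ ↦ sum_congr rfl fun d₂ h₂ ↦ sum_ite_eq_of_mem' _ _ _ <|
          Nat.mem_divisors.2 ⟨Nat.lcm_dvd (Nat.dvd_of_mem_divisors h₁)
            (Nat.dvd_of_mem_divisors h₂), prodPrimes_ne_zero⟩

theorem errSum_selbergWeight_le (hR : 1 ≤ R) (hnu : ∀ d, d ∣ s.prodPrimes → (s.nu d)⁻¹ ≤ d)
    (hrem : ∀ d, d ∣ s.prodPrimes → |s.rem d| ≤ d) :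
    s.errSum (lambdaSquared (selbergWeight s R)) ≤ (R : ℝ) ^ 6 := by
  set D := s.prodPrimes.divisors with hD
  set w := selbergWeight s R
  have hlevel : {d ∈ D | d ≤ R}.card ≤ R := by
    simpa using card_le_card (t := Finset.Icc 1 R) fun d hd ↦
      Finset.mem_Icc.2 ⟨Nat.pos_of_mem_divisors (mem_of_mem_filter d hd), (mem_filter.1 hd).2⟩
  have hw : ∀ d ∈ D, |w d| ≤ d := fun d hd ↦
    (abs_selbergWeight_le hR (Nat.dvd_of_mem_divisors hd)).trans
      (hnu d (Nat.dvd_of_mem_divisors hd))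
  have hterm : ∀ d₁ ∈ D, ∀ d₂ ∈ D, |w d₁| * |w d₂| * |s.rem (d₁.lcm d₂)| ≤
      (if d₁ ≤ R then (R : ℝ) ^ 2 else 0) * if d₂ ≤ R then (R : ℝ) ^ 2 else 0 := by
    intro d₁ h₁ d₂ h₂
    by_cases hR₁ : d₁ ≤ R
    · by_cases hR₂ : d₂ ≤ R
      · have hlcm : ((d₁.lcm d₂ : ℕ) : ℝ) ≤ d₁ * d₂ := mod_cast
          Nat.le_of_dvd (Nat.mul_pos (Nat.pos_of_mem_divisors h₁) (Nat.pos_of_mem_divisors h₂))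
            (Nat.lcm_dvd_mul d₁ d₂)
        have hr := (hrem _ (Nat.lcm_dvd (Nat.dvd_of_mem_divisors h₁)
          (Nat.dvd_of_mem_divisors h₂))).trans hlcm
        have c₁ : (d₁ : ℝ) ≤ R := mod_cast hR₁
        have c₂ : (d₂ : ℝ) ≤ R := mod_cast hR₂
        rw [if_pos hR₁, if_pos hR₂]
        calc |w d₁| * |w d₂| * |s.rem (d₁.lcm d₂)| ≤ R * R * (R * R) := by
              gcongr
              exacts [(hw d₁ h₁).trans c₁, (hw d₂ h₂).trans c₂, hr.trans (by gcongr)]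
          _ = (R : ℝ) ^ 2 * (R : ℝ) ^ 2 := by ring
      · simp [w, selbergWeight_eq_zero (not_le.1 hR₂), hR₂]
    · simp [w, selbergWeight_eq_zero (not_le.1 hR₁), hR₁]
  calc s.errSum (lambdaSquared w)
      ≤ ∑ d₁ ∈ D, ∑ d₂ ∈ D, (if d₁ ≤ R then (R : ℝ) ^ 2 else 0) *
          if d₂ ≤ R then (R : ℝ) ^ 2 else 0 :=
        (errSum_lambdaSquared_le w).trans
          (sum_le_sum fun d₁ h₁ ↦ sum_le_sum fun d₂ h₂ ↦ hterm d₁ h₁ d₂ h₂)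
    _ = ({d ∈ D | d ≤ R}.card * (R : ℝ) ^ 2) ^ 2 := by
        rw [← sum_mul_sum, ← sum_filter, sum_const, nsmul_eq_mul]; ring
    _ ≤ (R * (R : ℝ) ^ 2) ^ 2 := by gcongr
    _ = (R : ℝ) ^ 6 := by ring

theorem siftedSum_le_div_selbergSum (hR : 1 ≤ R) (hnu : ∀ d, d ∣ s.prodPrimes → (s.nu d)⁻¹ ≤ d)
    (hrem : ∀ d, d ∣ s.prodPrimes → |s.rem d| ≤ d) :
    s.siftedSum ≤ s.totalMass / selbergSum s R + (R : ℝ) ^ 6 := by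
  have h := siftedSum_le_mainSum_errSum_of_upperMoebius (s := s) _
    (upperMoebius_lambdaSquared (selbergWeight s R) (selbergWeight_one hR))
  rw [mainSum_selbergWeight hR, ← div_eq_mul_inv] at h
  exact h.trans (by gcongr; exact errSum_selbergWeight_le hR hnu hrem)

end SelbergUpperBound

section PolynomialSieve

open Polynomial

/-- The number of roots of `f` modulo `d`. -/
noncomputable def rootCount (f : ℕ[X]) (d : ℕ) : ℕ :=
  {x : ZMod d | aeval x f = 0}.ncard

theorem rootCount_eq_card (f : ℕ[X]) (d : ℕ) [NeZero d] :
    rootCount f d = #{x : ZMod d | aeval x f = 0} := by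
  rw [rootCount, ← Set.ncard_coe_finset, coe_filter_univ]

theorem rootCount_le (f : ℕ[X]) (d : ℕ) [NeZero d] : rootCount f d ≤ d :=
  (Set.ncard_le_card _).trans_eq (by simp)

theorem rootCount_one (f : ℕ[X]) : rootCount f 1 = 1 := by
  simp [rootCount_eq_card, Subsingleton.elim _ (0 : ZMod 1)]

theorem rootCount_mul (f : ℕ[X]) {a b : ℕ} (hab : a.Coprime b) :
    rootCount f (a * b) = rootCount f a * rootCount f b := by
  let e := ZMod.chineseRemainder hab
  have he (x : ZMod (a * b)) : e (aeval x f) = (aeval (e x).1 f, aeval (e x).2 f) := by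
    rw [← aeval_prod_apply]
    exact (aeval_algHom_apply (e : ZMod (a * b) →+* ZMod a × ZMod b).toNatAlgHom x f).symm
  have himage : e '' {x | aeval x f = 0} = {x | aeval x f = 0} ×ˢ {x | aeval x f = 0} := by
    ext y
    rw [e.image_eq_preimage_symm]
    simp [← map_eq_zero_iff e e.injective, he]
  rw [rootCount, rootCount, rootCount, ← Set.ncard_prod, ← himage,
    Set.ncard_image_of_injective _ e.injective]

theorem dvd_eval_iff_aeval_eq_zero (f : ℕ[X]) (d j : ℕ) :
    d ∣ f.eval j ↔ aeval (j : ZMod d) f = 0 := by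
  rw [← ZMod.natCast_eq_zero_iff, ← coe_aeval_eq_eval]
  exact (aeval_algebraMap_apply (ZMod d) j f) ▸ Iff.rfl

/-- The proportion of residue classes modulo `d` that consist of roots of `f`. -/
noncomputable def rootDensity (f : ℕ[X]) : ArithmeticFunction ℝ :=
  ⟨fun d ↦ rootCount f d / d, by simp⟩

theorem rootDensity_apply (f : ℕ[X]) (d : ℕ) : rootDensity f d = rootCount f d / d := rfl

theorem isMultiplicative_rootDensity (f : ℕ[X]) : (rootDensity f).IsMultiplicative := by
  refine ⟨by simp [rootDensity_apply, rootCount_one], fun hab ↦ ?_⟩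
  simp only [rootDensity_apply, rootCount_mul f hab, Nat.cast_mul, mul_div_mul_comm]

theorem abs_card_natCast_eq_sub_le (N : ℕ) {d : ℕ} [NeZero d] (x : ZMod d) :
    |(#{j ∈ range N | ((j : ℕ) : ZMod d) = x} : ℝ) - N / d| ≤ 1 := by
  have hd : (0 : ℝ) < d := mod_cast Nat.pos_of_neZero d
  have hcount := Nat.count_modEq_card N (Nat.pos_of_neZero d) x.val
  simp only [Nat.count_eq_card_filter_range, ← ZMod.natCast_eq_natCast_iff, ZMod.natCast_zmod_val]
    at hcount
  have hdiv : (N : ℝ) / d = (N / d : ℕ) + (N % d : ℕ) / (d : ℝ) := by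
    field_simp
    exact_mod_cast (Nat.div_add_mod N d).symm
  have hmod : ((N % d : ℕ) : ℝ) / d ≤ 1 :=
    (div_le_one hd).2 (mod_cast (Nat.mod_lt N (Nat.pos_of_neZero d)).le)
  have hmod0 : 0 ≤ ((N % d : ℕ) : ℝ) / d := by positivity
  rw [hcount, hdiv, abs_le]
  split_ifs <;> push_cast <;> constructor <;> linarith

theorem abs_card_dvd_eval_sub_le (f : ℕ[X]) (N d : ℕ) [NeZero d] :
    |(#{j ∈ range N | d ∣ f.eval j} : ℝ) - rootDensity f d * N| ≤ rootCount f d := by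
  set Z : Finset (ZMod d) := {x | aeval x f = 0} with hZ
  have hfiber : (#{j ∈ range N | d ∣ f.eval j} : ℝ) =
      ∑ x ∈ Z, (#{j ∈ range N | ((j : ℕ) : ZMod d) = x} : ℝ) := by
    have hmaps : Set.MapsTo (fun j : ℕ ↦ (j : ZMod d)) ↑{j ∈ range N | d ∣ f.eval j} (Z : Set _) :=
      fun j hj ↦ by
        simpa [hZ, dvd_eval_iff_aeval_eq_zero] using (mem_filter.1 hj).2
    rw [card_eq_sum_card_fiberwise hmaps, Nat.cast_sum]
    refine sum_congr rfl fun x hx ↦ ?_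
    rw [filter_filter]
    refine congrArg (fun s : Finset ℕ ↦ (#s : ℝ)) (filter_congr fun j _ ↦ ?_)
    simp only [dvd_eval_iff_aeval_eq_zero, and_iff_right_iff_imp]
    rintro rfl
    exact (mem_filter.1 hx).2
  calc |(#{j ∈ range N | d ∣ f.eval j} : ℝ) - rootDensity f d * N|
      = |∑ x ∈ Z, ((#{j ∈ range N | ((j : ℕ) : ZMod d) = x} : ℝ) - N / d)| := by
        rw [hfiber, sum_sub_distrib, sum_const, nsmul_eq_mul, rootDensity_apply,
          rootCount_eq_card, div_mul_eq_mul_div, mul_div_assoc]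
    _ ≤ ∑ _x ∈ Z, (1 : ℝ) :=
        (abs_sum_le_sum_abs _ _).trans (sum_le_sum fun x _ ↦ abs_card_natCast_eq_sub_le N x)
    _ = rootCount f d := by rw [sum_const, nsmul_one, rootCount_eq_card]

/-- The sieve that removes from `f(0), …, f(N - 1)` the values sharing a factor with `P`.
Values are counted with multiplicity. -/
noncomputable def polynomialSieve (f : ℕ[X]) (N : ℕ) {P : ℕ} (hP : Squarefree P)
    (hpos : ∀ p, p.Prime → p ∣ P → 0 < rootCount f p)
    (hlt : ∀ p, p.Prime → p ∣ P → rootCount f p < p) : BoundingSieve where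
  support := (range N).image (f.eval ·)
  prodPrimes := P
  prodPrimes_squarefree := hP
  weights n := #{j ∈ range N | f.eval j = n}
  weights_nonneg n := by positivity
  totalMass := N
  nu := rootDensity f
  nu_mult := isMultiplicative_rootDensity f
  nu_pos_of_prime p hp hpP :=
    div_pos (mod_cast hpos p hp hpP) (mod_cast hp.pos)
  nu_lt_one_of_prime p hp hpP :=
    (div_lt_one (mod_cast hp.pos)).2 (mod_cast hlt p hp hpP)

theorem sum_image_card_fiber (N : ℕ) (F : ℕ → ℕ) (q : ℕ → Prop) [DecidablePred q] :
    ∑ n ∈ (range N).image F, (if q n then (#{j ∈ range N | F j = n} : ℝ) else 0) =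
      #{j ∈ range N | q (F j)} := by
  have hmaps : Set.MapsTo F ↑{j ∈ range N | q (F j)} ↑((range N).image F) := fun j hj ↦
    mem_image_of_mem F (mem_of_mem_filter j hj)
  rw [card_eq_sum_card_fiberwise hmaps, Nat.cast_sum]
  refine sum_congr rfl fun n _ ↦ ?_
  rw [filter_filter]
  split_ifs with hq
  · congr 3 with j
    simp only [iff_and_self]
    rintro rfl
    exact hq
  · rw [eq_comm, Nat.cast_eq_zero, card_eq_zero, filter_eq_empty_iff]
    rintro j - ⟨h, rfl⟩
    exact hq h

theorem card_coprime_eval_le (f : ℕ[X]) (N : ℕ) {R P : ℕ} (hR : 1 ≤ R) (hP : Squarefree P)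
    (hpos : ∀ p, p.Prime → p ∣ P → 0 < rootCount f p)
    (hlt : ∀ p, p.Prime → p ∣ P → rootCount f p < p) :
    (#{j ∈ range N | P.Coprime (f.eval j)} : ℝ) ≤
      N / (∑ l ∈ P.divisors with l ≤ R,
        ∏ p ∈ l.primeFactors, (rootDensity f p * (1 - rootDensity f p)⁻¹)) + (R : ℝ) ^ 6 := by
  set s := polynomialSieve f N hP hpos hlt
  have hne (d : ℕ) (hd : d ∣ P) : NeZero d := ⟨ne_zero_of_dvd_ne_zero hP.ne_zero hd⟩
  have hsifted : s.siftedSum = #{j ∈ range N | P.Coprime (f.eval j)} :=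
    sum_image_card_fiber N (f.eval ·) P.Coprime
  have hsum : selbergSum s R = ∑ l ∈ P.divisors with l ≤ R,
      ∏ p ∈ l.primeFactors, (rootDensity f p * (1 - rootDensity f p)⁻¹) := by
    refine sum_congr rfl fun l hl ↦ ?_
    have hlP : l ∣ s.prodPrimes := Nat.dvd_of_mem_divisors (mem_of_mem_filter l hl)
    rw [BoundingSieve.selbergTerms_apply, ← BoundingSieve.prod_primeFactors_nu hlP,
      ← prod_mul_distrib]
    exact prod_congr rfl fun p _ ↦ rfl
  rw [← hsifted, ← hsum]
  refine siftedSum_le_div_selbergSum hR (fun d hd ↦ ?_) fun d hd ↦ ?_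
  · have hpos : 0 < rootDensity f d := BoundingSieve.nu_pos_of_dvd_prodPrimes (s := s) hd
    have h1 : (1 : ℝ) ≤ rootCount f d := by
      rw [Nat.one_le_cast, Nat.one_le_iff_ne_zero]
      rintro h
      simp [rootDensity_apply, h] at hpos
    change (rootDensity f d)⁻¹ ≤ d
    rw [rootDensity_apply, inv_div]
    exact div_le_self d.cast_nonneg h1
  · have := hne d hd
    have hrem : s.rem d = #{j ∈ range N | d ∣ f.eval j} - rootDensity f d * N :=
      congrArg (· - rootDensity f d * N) (sum_image_card_fiber N (f.eval ·) (d ∣ ·))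
    rw [hrem]
    exact (abs_card_dvd_eval_sub_le f N d).trans (mod_cast rootCount_le f d)

end PolynomialSieve

section SelbergSumLowerBound

open ArithmeticFunction (cardFactors)
open UniqueFactorizationMonoid (radical radical_dvd_self squarefree_radical)

theorem prod_one_sub_inv_eq_totient_div {H : ℕ} (hH : H ≠ 0) :
    ∏ p ∈ H.primeFactors, (1 - (p : ℝ)⁻¹) = H.totient / H := by
  have h := congrArg (Rat.cast : ℚ → ℝ) (Nat.totient_eq_mul_prod_factors H)
  push_cast at h
  rw [h, mul_div_cancel_left₀ _ (Nat.cast_ne_zero.2 hH)]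

theorem prod_one_sub_inv_mul_sum_inv_le {s : Finset ℕ} (hs : ∀ p ∈ s, p.Prime) (R : ℕ) :
    (∏ p ∈ s, (1 - (p : ℝ)⁻¹)) * ∑ n ∈ Icc 1 R, (n : ℝ)⁻¹ ≤
      ∑ n ∈ Icc 1 R with ∀ p ∈ s, ¬p ∣ n, (n : ℝ)⁻¹ := by
  induction s using Finset.induction_on with
  | empty => simp
  | insert p s hps ih =>
    have hp := hs p (mem_insert_self p s)
    have hp1 : (p : ℝ)⁻¹ ≤ 1 := inv_le_one_of_one_le₀ (mod_cast hp.one_lt.le)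
    specialize ih fun q hq ↦ hs q (mem_insert_of_mem hq)
    set A := {n ∈ Icc 1 R | ∀ q ∈ s, ¬q ∣ n} with hA
    have hmultiples : ∑ n ∈ A with p ∣ n, (n : ℝ)⁻¹ ≤ (p : ℝ)⁻¹ * ∑ n ∈ A, (n : ℝ)⁻¹ := by
      have hsub : A.filter (p ∣ ·) ⊆ A.image (p * ·) := by
        intro n hn
        simp only [hA, mem_filter, Finset.mem_Icc] at hn
        obtain ⟨⟨⟨hn1, hnR⟩, hns⟩, m, rfl⟩ := hn
        have hm : 1 ≤ m := Nat.pos_of_mul_pos_left hn1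
        exact mem_image_of_mem _ (mem_filter.2 ⟨Finset.mem_Icc.2
          ⟨hm, (Nat.le_mul_of_pos_left m hp.pos).trans hnR⟩, fun q hq h ↦ hns q hq (h.mul_left p)⟩)
      calc ∑ n ∈ A with p ∣ n, (n : ℝ)⁻¹ ≤ ∑ n ∈ A.image (p * ·), (n : ℝ)⁻¹ :=
            sum_le_sum_of_subset_of_nonneg hsub fun _ _ _ ↦ by positivity
        _ = (p : ℝ)⁻¹ * ∑ n ∈ A, (n : ℝ)⁻¹ := by
            rw [sum_image fun a _ b _ h ↦ mul_left_cancel₀ hp.ne_zero h, mul_sum]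
            simp only [Nat.cast_mul, mul_inv]
    have hsplit := sum_filter_not_add_sum_filter A (p ∣ ·) (fun n : ℕ ↦ (n : ℝ)⁻¹)
    have hfilter : {n ∈ Icc 1 R | ∀ q ∈ insert p s, ¬q ∣ n} = A.filter (¬p ∣ ·) := by
      simp only [hA, filter_filter, forall_mem_insert, and_comm]
    rw [prod_insert hps, mul_assoc, hfilter]
    linarith [mul_le_mul_of_nonneg_left ih (sub_nonneg.2 hp1)]

theorem forall_not_dvd_primeFactors_iff {H n : ℕ} (hH : H ≠ 0) :
    (∀ p ∈ H.primeFactors, ¬p ∣ n) ↔ n.Coprime H := by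
  rw [← not_iff_not, Nat.Prime.not_coprime_iff_dvd]
  simp only [not_forall, not_not, exists_prop, Nat.mem_primeFactors_of_ne_zero hH]
  exact exists_congr fun p ↦ by tauto

theorem totient_div_mul_log_le_sum_inv_coprime {H R : ℕ} (hH : H ≠ 0) (hR : 1 ≤ R) :
    H.totient / H * Real.log R ≤ ∑ n ∈ Icc 1 R with n.Coprime H, (n : ℝ)⁻¹ := by
  have hlog : Real.log R ≤ ∑ n ∈ Icc 1 R, (n : ℝ)⁻¹ := by
    have h := log_add_one_le_harmonic R
    rw [harmonic_eq_sum_Icc] at h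
    push_cast at h
    exact (Real.log_le_log (mod_cast hR) (by linarith)).trans h
  calc (H.totient : ℝ) / H * Real.log R ≤ H.totient / H * ∑ n ∈ Icc 1 R, (n : ℝ)⁻¹ := by gcongr
    _ ≤ ∑ n ∈ Icc 1 R with ∀ p ∈ H.primeFactors, ¬p ∣ n, (n : ℝ)⁻¹ := by
        rw [← prod_one_sub_inv_eq_totient_div hH]
        exact prod_one_sub_inv_mul_sum_inv_le (fun p hp ↦ Nat.prime_of_mem_primeFactors hp) R
    _ = ∑ n ∈ Icc 1 R with n.Coprime H, (n : ℝ)⁻¹ := by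
        simp only [forall_not_dvd_primeFactors_iff hH]

section EulerProductBound

variable {h : ℕ →* ℝ} (h_nonneg : ∀ n, 0 ≤ h n) (h_lt_one : ∀ p, p.Prime → h p < 1)
include h_nonneg h_lt_one

theorem sum_radical_eq_le_prod {s : Finset ℕ} (hs : 0 ∉ s) {l : ℕ} (hl : Squarefree l) :
    ∑ n ∈ s with radical n = l, h n ≤ ∏ p ∈ l.primeFactors, (h p * (1 - h p)⁻¹) := by
  have hdvd {n : ℕ} (hn : radical n = l) : l ∣ n := hn ▸ radical_dvd_self
  have hnorm {p : ℕ} (hp : p.Prime) : ‖h p‖ < 1 := by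
    rw [Real.norm_of_nonneg (h_nonneg p)]
    exact h_lt_one p hp
  have hsum := hasSum_subtype_iff_indicator.1
    (EulerProduct.summable_and_hasSum_factoredNumbers_prod_filter_prime_geometric
      (f := h) hnorm l.primeFactors).2
  rw [filter_true_of_mem fun p hp ↦ Nat.prime_of_mem_primeFactors hp] at hsum
  have hquot : ∀ n ∈ s.filter (radical · = l), n / l ∈ Nat.factoredNumbers l.primeFactors := by
    intro n hn
    obtain ⟨hns, hnl⟩ := mem_filter.1 hn
    have hn0 : n ≠ 0 := fun h ↦ hs (h ▸ hns)
    refine Nat.mem_factoredNumbers_of_primeFactors_subset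
      (Nat.div_ne_zero_iff_of_dvd (hdvd hnl) |>.2 ⟨hn0, hl.ne_zero⟩) ?_
    rw [← hnl, Nat.primeFactors_radical]
    exact Nat.primeFactors_mono (Nat.div_dvd_of_dvd radical_dvd_self) hn0
  have hinj : Set.InjOn (· / l) (s.filter (radical · = l)) := fun a ha b hb hab ↦
    (Nat.div_left_inj (hdvd (mem_filter.1 ha).2) (hdvd (mem_filter.1 hb).2)).1 hab
  calc ∑ n ∈ s with radical n = l, h n
      = h l * ∑ n ∈ s with radical n = l, h (n / l) := by
        rw [mul_sum]
        refine sum_congr rfl fun n hn ↦ ?_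
        rw [← map_mul, Nat.mul_div_cancel' (hdvd (mem_filter.1 hn).2)]
    _ = h l * ∑ m ∈ (s.filter (radical · = l)).image (· / l),
          (Nat.factoredNumbers l.primeFactors).indicator h m := by
        rw [sum_image hinj]
        exact congrArg _ (sum_congr rfl fun n hn ↦ (Set.indicator_of_mem (hquot n hn) _).symm)
    _ ≤ h l * ∏ p ∈ l.primeFactors, (1 - h p)⁻¹ := by
        refine mul_le_mul_of_nonneg_left (sum_le_hasSum _ (fun m _ ↦ ?_) hsum) (h_nonneg l)
        exact Set.indicator_nonneg (fun m _ ↦ h_nonneg m) m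
    _ = ∏ p ∈ l.primeFactors, (h p * (1 - h p)⁻¹) := by
        rw [prod_mul_distrib, ← map_prod, Nat.prod_primeFactors_of_squarefree hl]

theorem sum_le_sum_squarefree_prod (R : ℕ) :
    ∑ n ∈ Icc 1 R, h n ≤
      ∑ l ∈ Icc 1 R with Squarefree l, ∏ p ∈ l.primeFactors, (h p * (1 - h p)⁻¹) := by
  have hmaps : ∀ n ∈ Icc 1 R, radical n ∈ {l ∈ Icc 1 R | Squarefree l} := by
    intro n hn
    obtain ⟨hn1, hnR⟩ := Finset.mem_Icc.1 hn
    exact mem_filter.2 ⟨Finset.mem_Icc.2 ⟨Nat.radical_pos n,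
      (Nat.le_of_dvd hn1 radical_dvd_self).trans hnR⟩, squarefree_radical⟩
  rw [← sum_fiberwise_of_maps_to hmaps]
  exact sum_le_sum fun l hl ↦
    sum_radical_eq_le_prod h_nonneg h_lt_one (by simp) (mem_filter.1 hl).2

end EulerProductBound

/-- The completely multiplicative function `κ ^ Ω(n) / n`, restricted to `n` coprime to `H`. -/
noncomputable def omegaWeight (κ H : ℕ) : ℕ →* ℝ where
  toFun n := if n.Coprime H then (κ : ℝ) ^ cardFactors n / n else 0
  map_one' := by simp
  map_mul' a b := by
    rcases eq_or_ne a 0 with rfl | ha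
    · simp
    rcases eq_or_ne b 0 with rfl | hb
    · simp
    simp only [Nat.coprime_mul_iff_left, ArithmeticFunction.cardFactors_mul ha hb, pow_add,
      Nat.cast_mul, mul_div_mul_comm, ite_zero_mul_ite_zero]

theorem omegaWeight_apply (κ H n : ℕ) :
    omegaWeight κ H n = if n.Coprime H then (κ : ℝ) ^ cardFactors n / n else 0 := rfl

theorem omegaWeight_nonneg (κ H n : ℕ) : 0 ≤ omegaWeight κ H n := by
  rw [omegaWeight_apply]
  positivity

theorem omegaWeight_prime (κ H : ℕ) {p : ℕ} (hp : p.Prime) :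
    omegaWeight κ H p = if p ∣ H then 0 else (κ : ℝ) / p := by
  simp only [omegaWeight_apply, hp.coprime_iff_not_dvd,
    ArithmeticFunction.cardFactors_apply_prime hp, pow_one, ite_not]

theorem sum_omegaWeight_one (H R : ℕ) :
    ∑ n ∈ Icc 1 R, omegaWeight 1 H n = ∑ n ∈ Icc 1 R with n.Coprime H, (n : ℝ)⁻¹ := by
  simp only [sum_filter, omegaWeight_apply, Nat.cast_one, one_pow, one_div]

theorem sum_divisors_pow_cardFactors_le (κ : ℕ) {n : ℕ} (hn : n ≠ 0) :
    ∑ d ∈ n.divisors, κ ^ cardFactors d ≤ (κ + 1) ^ cardFactors n := by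
  induction n using induction_on_primes with
  | zero => exact absurd rfl hn
  | one => simp
  | prime_mul p n hp ih =>
    have hn0 : n ≠ 0 := right_ne_zero_of_mul hn
    have hsub : (p * n).divisors ⊆ n.divisors ∪ n.divisors.image (p * ·) := by
      intro d hd
      have hdpn := Nat.dvd_of_mem_divisors hd
      rw [mem_union, Nat.mem_divisors]
      by_cases hpd : p ∣ d
      · obtain ⟨e, rfl⟩ := hpd
        exact .inr (mem_image_of_mem _
          (Nat.mem_divisors.2 ⟨Nat.dvd_of_mul_dvd_mul_left hp.pos hdpn, hn0⟩))
      · exact .inl ⟨((hp.coprime_iff_not_dvd.2 hpd).symm).dvd_of_dvd_mul_left hdpn, hn0⟩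
    calc ∑ d ∈ (p * n).divisors, κ ^ cardFactors d
        ≤ ∑ d ∈ n.divisors, κ ^ cardFactors d +
            ∑ d ∈ n.divisors.image (p * ·), κ ^ cardFactors d :=
          (sum_le_sum_of_subset hsub).trans (sum_union_inter.le.trans' le_self_add)
      _ = (κ + 1) * ∑ d ∈ n.divisors, κ ^ cardFactors d := by
          rw [sum_image fun a _ b _ h ↦ mul_left_cancel₀ hp.ne_zero h, add_comm, add_one_mul,
            mul_sum]
          refine congrArg (· + _) (sum_congr rfl fun d hd ↦ ?_)
          rw [ArithmeticFunction.cardFactors_mul hp.ne_zero (Nat.pos_of_mem_divisors hd).ne',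
            ArithmeticFunction.cardFactors_apply_prime hp, pow_add, pow_one]
      _ ≤ (κ + 1) * (κ + 1) ^ cardFactors n := by gcongr; exact ih hn0
      _ = (κ + 1) ^ cardFactors (p * n) := by
          rw [ArithmeticFunction.cardFactors_mul hp.ne_zero hn0,
            ArithmeticFunction.cardFactors_apply_prime hp, pow_add, pow_one]

theorem sum_divisorsAntidiagonal_omegaWeight_le (κ H : ℕ) {n : ℕ} (hn : n ≠ 0) :
    ∑ x ∈ n.divisorsAntidiagonal, omegaWeight κ H x.1 * omegaWeight 1 H x.2 ≤
      omegaWeight (κ + 1) H n := by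
  have hterm : ∀ x ∈ n.divisorsAntidiagonal, omegaWeight κ H x.1 * omegaWeight 1 H x.2 =
      if n.Coprime H then (κ : ℝ) ^ cardFactors x.1 / n else 0 := by
    rintro ⟨a, b⟩ hab
    obtain ⟨rfl, -⟩ := Nat.mem_divisorsAntidiagonal.1 hab
    simp only [omegaWeight_apply, Nat.coprime_mul_iff_left, ite_zero_mul_ite_zero, Nat.cast_one,
      one_pow, Nat.cast_mul, div_mul_div_comm, mul_one]
  rw [sum_congr rfl hterm, omegaWeight_apply]
  split_ifs with hc
  · rw [← sum_div, Nat.sum_divisorsAntidiagonal (fun d _ ↦ (κ : ℝ) ^ cardFactors d)]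
    gcongr
    exact_mod_cast sum_divisors_pow_cardFactors_le κ hn
  · simp

theorem sum_omegaWeight_one_pow_le (κ H r : ℕ) :
    (∑ n ∈ Icc 1 r, omegaWeight 1 H n) ^ κ ≤ ∑ n ∈ Icc 1 (r ^ κ), omegaWeight κ H n := by
  induction κ with
  | zero => simp
  | succ κ ih =>
    have hmaps : ∀ x ∈ Icc 1 (r ^ κ) ×ˢ Icc 1 r, x.1 * x.2 ∈ Icc 1 (r ^ (κ + 1)) := by
      intro x hx
      simp only [mem_product, Finset.mem_Icc] at hx ⊢
      exact ⟨Nat.mul_pos hx.1.1 hx.2.1, Nat.mul_le_mul hx.1.2 hx.2.2⟩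
    calc (∑ n ∈ Icc 1 r, omegaWeight 1 H n) ^ (κ + 1)
        ≤ (∑ a ∈ Icc 1 (r ^ κ), omegaWeight κ H a) * ∑ b ∈ Icc 1 r, omegaWeight 1 H b := by
          rw [pow_succ]
          exact mul_le_mul_of_nonneg_right ih (sum_nonneg fun _ _ ↦ omegaWeight_nonneg _ _ _)
      _ = ∑ n ∈ Icc 1 (r ^ (κ + 1)), ∑ x ∈ Icc 1 (r ^ κ) ×ˢ Icc 1 r with x.1 * x.2 = n,
            omegaWeight κ H x.1 * omegaWeight 1 H x.2 := by
          rw [sum_mul_sum, ← sum_product', sum_fiberwise_of_maps_to hmaps]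
      _ ≤ ∑ n ∈ Icc 1 (r ^ (κ + 1)), ∑ x ∈ n.divisorsAntidiagonal,
            omegaWeight κ H x.1 * omegaWeight 1 H x.2 := by
          refine sum_le_sum fun n hn ↦ sum_le_sum_of_subset_of_nonneg (fun x hx ↦ ?_)
            fun _ _ _ ↦ mul_nonneg (omegaWeight_nonneg _ _ _) (omegaWeight_nonneg _ _ _)
          exact Nat.mem_divisorsAntidiagonal.2
            ⟨(mem_filter.1 hx).2, Nat.one_le_iff_ne_zero.1 (Finset.mem_Icc.1 hn).1⟩
      _ ≤ ∑ n ∈ Icc 1 (r ^ (κ + 1)), omegaWeight (κ + 1) H n :=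
          sum_le_sum fun n hn ↦ sum_divisorsAntidiagonal_omegaWeight_le κ H
            (Nat.one_le_iff_ne_zero.1 (Finset.mem_Icc.1 hn).1)

end SelbergSumLowerBound

section LinearForms

/-- The product of the primes up to `R` that do not divide `H`. -/
def sievePrimorial (H R : ℕ) : ℕ :=
  ∏ p ∈ Icc 1 R with p.Prime ∧ ¬p ∣ H, p

theorem prime_dvd_sievePrimorial_iff {H R p : ℕ} (hp : p.Prime) :
    p ∣ sievePrimorial H R ↔ p ≤ R ∧ ¬p ∣ H := by
  rw [sievePrimorial, hp.prime.dvd_finsetProd_iff]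
  refine ⟨?_, fun h ↦ ⟨p, by simp [hp, h, hp.one_lt.le]⟩⟩
  rintro ⟨q, hq, hpq⟩
  simp only [mem_filter, Finset.mem_Icc] at hq
  rw [(Nat.prime_dvd_prime_iff_eq hp hq.2.1).1 hpq]
  exact ⟨hq.1.2, hq.2.2⟩

theorem squarefree_sievePrimorial (H R : ℕ) : Squarefree (sievePrimorial H R) := by
  refine squarefree_prod_of_pairwise_isCoprime (fun p hp q hq hpq ↦ ?_) fun p hp ↦
    (mem_filter.1 hp).2.1.prime.squarefree
  exact Nat.coprime_iff_isRelPrime.1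
    ((Nat.coprime_primes (mem_filter.1 hp).2.1 (mem_filter.1 hq).2.1).2 hpq)

theorem dvd_sievePrimorial {H R l : ℕ} (hl : Squarefree l) (hlR : l ≤ R) (hlH : l.Coprime H) :
    l ∣ sievePrimorial H R := by
  rw [← Nat.prod_primeFactors_of_squarefree hl]
  refine prod_dvd_prod_of_subset _ _ _ fun p hp ↦ ?_
  have hprime := Nat.prime_of_mem_primeFactors hp
  have hpl := Nat.dvd_of_mem_primeFactors hp
  have hpR := (Nat.le_of_mem_primeFactors hp).trans hlR
  exact mem_filter.2 ⟨Finset.mem_Icc.2 ⟨hprime.one_lt.le, hpR⟩,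
    hprime, fun hpH ↦ Nat.not_coprime_of_dvd_of_dvd hprime.one_lt hpl hpH hlH⟩

theorem coprime_sievePrimorial_of_prime_gt {H R q : ℕ} (hq : q.Prime) (hqR : R < q) :
    (sievePrimorial H R).Coprime q := by
  rw [Nat.coprime_comm, hq.coprime_iff_not_dvd, prime_dvd_sievePrimorial_iff hq]
  exact fun h ↦ h.1.not_gt hqR

theorem sum_omegaWeight_le_sum_divisors_sievePrimorial {κ H : ℕ} (R : ℕ)
    (hκ : ∀ p, p.Prime → ¬p ∣ H → κ < p) :
    ∑ n ∈ Icc 1 R, omegaWeight κ H n ≤ ∑ l ∈ (sievePrimorial H R).divisors with l ≤ R,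
      ∏ p ∈ l.primeFactors, (κ / p * (1 - (κ / p : ℝ))⁻¹) := by
  have hdiv {p : ℕ} (hp : p.Prime) (hpH : ¬p ∣ H) : (κ : ℝ) / p < 1 :=
    (div_lt_one (mod_cast hp.pos)).2 (mod_cast hκ p hp hpH)
  have hlt (p : ℕ) (hp : p.Prime) : omegaWeight κ H p < 1 := by
    rw [omegaWeight_prime κ H hp]
    split_ifs with hpH
    exacts [zero_lt_one, hdiv hp hpH]
  set F : ℕ → ℝ := fun l ↦
    ∏ p ∈ l.primeFactors, (omegaWeight κ H p * (1 - omegaWeight κ H p)⁻¹)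
  have hcoprime {l : ℕ} (hl : Squarefree l) (hF : F l ≠ 0) : l.Coprime H := by
    refine Nat.coprime_of_dvd fun p hp hpl hpH ↦ prod_ne_zero_iff.1 hF p ?_ ?_
    · exact Nat.mem_primeFactors.2 ⟨hp, hpl, hl.ne_zero⟩
    · rw [omegaWeight_prime κ H hp, if_pos hpH, zero_mul]
  calc ∑ n ∈ Icc 1 R, omegaWeight κ H n ≤ ∑ l ∈ Icc 1 R with Squarefree l, F l :=
        sum_le_sum_squarefree_prod (omegaWeight_nonneg κ H) hlt R
    _ = ∑ l ∈ {l ∈ Icc 1 R | Squarefree l} with l.Coprime H, F l :=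
        (sum_filter_of_ne fun l hl ↦ hcoprime (mem_filter.1 hl).2).symm
    _ ≤ ∑ l ∈ (sievePrimorial H R).divisors with l ≤ R, F l := by
        refine sum_le_sum_of_subset_of_nonneg (fun l hl ↦ ?_) fun l _ _ ↦ prod_nonneg fun p hp ↦
          mul_nonneg (omegaWeight_nonneg κ H p)
            (inv_nonneg.2 (sub_nonneg.2 (hlt p (Nat.prime_of_mem_primeFactors hp)).le))
        simp only [mem_filter, Finset.mem_Icc] at hl
        exact mem_filter.2 ⟨Nat.mem_divisors.2 ⟨dvd_sievePrimorial hl.1.2 hl.1.1.2 hl.2,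
          (squarefree_sievePrimorial H R).ne_zero⟩, hl.1.1.2⟩
    _ = _ := by
        refine sum_congr rfl fun l hl ↦ prod_congr rfl fun p hp ↦ ?_
        have hprime := Nat.prime_of_mem_primeFactors hp
        have hpP := (Nat.dvd_of_mem_primeFactors hp).trans
          (Nat.dvd_of_mem_divisors (mem_filter.1 hl).1)
        rw [omegaWeight_prime κ H hprime, if_neg ((prime_dvd_sievePrimorial_iff hprime).1 hpP).2]

theorem card_coprime_sievePrimorial_le (f : Polynomial ℕ) (N : ℕ) {κ H r : ℕ} (hκ : 0 < κ)
    (hH : H ≠ 0) (hr : 2 ≤ r)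
    (hroots : ∀ p, p.Prime → ¬p ∣ H → κ < p ∧ rootCount f p = κ) :
    (#{j ∈ range N | (sievePrimorial H (r ^ κ)).Coprime (f.eval j)} : ℝ) ≤
      N * (H / H.totient) ^ κ / Real.log r ^ κ + (r ^ κ : ℕ) ^ 6 := by
  have hP {p : ℕ} (hp : p.Prime) (h : p ∣ sievePrimorial H (r ^ κ)) :=
    hroots p hp ((prime_dvd_sievePrimorial_iff hp).1 h).2
  have hlog : 0 < Real.log r := Real.log_pos (mod_cast hr)
  have : (0 : ℝ) < H.totient := mod_cast Nat.totient_pos.2 (Nat.pos_of_ne_zero hH)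
  have : (0 : ℝ) < H := mod_cast Nat.pos_of_ne_zero hH
  have hsum : (H.totient / H * Real.log r) ^ κ ≤
      ∑ l ∈ (sievePrimorial H (r ^ κ)).divisors with l ≤ r ^ κ,
        ∏ p ∈ l.primeFactors, (rootDensity f p * (1 - rootDensity f p)⁻¹) := by
    calc (H.totient / H * Real.log r) ^ κ ≤ (∑ n ∈ Icc 1 r, omegaWeight 1 H n) ^ κ := by
          rw [sum_omegaWeight_one]
          exact pow_le_pow_left₀ (by positivity)
            (totient_div_mul_log_le_sum_inv_coprime hH (by omega)) κ
      _ ≤ ∑ n ∈ Icc 1 (r ^ κ), omegaWeight κ H n := sum_omegaWeight_one_pow_le κ H r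
      _ ≤ _ := sum_omegaWeight_le_sum_divisors_sievePrimorial _
          fun p hp hpH ↦ (hroots p hp hpH).1
      _ = _ := by
          refine sum_congr rfl fun l hl ↦ prod_congr rfl fun p hp ↦ ?_
          have hpl := (Nat.dvd_of_mem_primeFactors hp).trans
            (Nat.dvd_of_mem_divisors (mem_filter.1 hl).1)
          rw [rootDensity_apply, (hP (Nat.prime_of_mem_primeFactors hp) hpl).2]
  refine (card_coprime_eval_le f N (R := r ^ κ) (Nat.pow_pos (by omega))
    (squarefree_sievePrimorial H _)
    (fun p hp h ↦ (hP hp h).2 ▸ hκ) (fun p hp h ↦ (hP hp h).2.trans_lt (hP hp h).1)).trans ?_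
  refine add_le_add_left ?_ _
  calc (N : ℝ) / _ ≤ N / (H.totient / H * Real.log r) ^ κ := by gcongr
    _ = N * (H / H.totient) ^ κ / Real.log r ^ κ := by
        rw [mul_pow, div_pow, div_pow]
        field_simp

variable {ι : Type*} [Fintype ι] (a b : ι → ℕ)

open Polynomial in
theorem rootCount_prod_linear {p : ℕ} (hp : p.Prime) (ha : ∀ i, ¬p ∣ a i)
    (hab : ∀ i j, i ≠ j → ¬a i * b j ≡ a j * b i [MOD p]) :
    rootCount (∏ i, (C (a i) * X + C (b i))) p = Fintype.card ι := by
  have := Fact.mk hp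
  have ha' (i : ι) : (a i : ZMod p) ≠ 0 := mt (ZMod.natCast_eq_zero_iff _ _).1 (ha i)
  let root (i : ι) : ZMod p := -b i / a i
  have hinj : Function.Injective root := by
    intro i j hij
    by_contra hne
    refine hab i j hne ((ZMod.natCast_eq_natCast_iff _ _ _).1 ?_)
    have h := (div_eq_div_iff (ha' i) (ha' j)).1 hij
    push_cast
    linear_combination h
  have hroots : {x : ZMod p | aeval x (∏ i, (C (a i) * X + C (b i))) = 0} = Set.range root := by
    ext x
    simp only [map_prod, map_add, map_mul, aeval_X, aeval_C, prod_eq_zero_iff, mem_univ, true_and,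
      Set.mem_ofPred_eq, Set.mem_range, root]
    refine exists_congr fun i ↦ ?_
    rw [div_eq_iff (ha' i), neg_eq_iff_add_eq_zero, add_comm, mul_comm]
    rfl
  rw [rootCount, hroots, ← Set.image_univ, Set.ncard_image_of_injective _ hinj, Set.ncard_univ,
    Nat.card_eq_fintype_card]

theorem card_linear_le {α R : ℕ} (hα : α ≠ 0) (N β : ℕ) :
    #{j ∈ range N | α * j + β ≤ R} ≤ R + 1 := by
  rw [← card_range (R + 1)]
  refine card_le_card fun j hj ↦ mem_range.2 (Nat.lt_succ_of_le ?_)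
  exact (Nat.le_mul_of_pos_left j (Nat.pos_of_ne_zero hα)).trans
    (le_self_add.trans (mem_filter.1 hj).2)

theorem card_forall_prime_linear_le [Nonempty ι] {H r : ℕ} (hH : H ≠ 0) (hr : 2 ≤ r)
    (hforms : ∀ p, p.Prime → ¬p ∣ H → Fintype.card ι < p ∧ (∀ i, ¬p ∣ a i) ∧
      ∀ i j, i ≠ j → ¬a i * b j ≡ a j * b i [MOD p]) (N : ℕ) :
    (#{j ∈ range N | ∀ i, (a i * j + b i).Prime} : ℝ) ≤
      N * (H / H.totient) ^ Fintype.card ι / Real.log r ^ Fintype.card ι +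
        (Fintype.card ι + 1) * r ^ (6 * Fintype.card ι) := by
  classical
  set κ := Fintype.card ι
  have hκ0 : 0 < κ := Fintype.card_pos
  let f : Polynomial ℕ := ∏ i, (.C (a i) * .X + .C (b i))
  have hsifted := card_coprime_sievePrimorial_le f N hκ0 hH hr fun p hp hpH ↦
    ⟨(hforms p hp hpH).1, rootCount_prod_linear a b hp (hforms p hp hpH).2.1 (hforms p hp hpH).2.2⟩
  have hsub : {j ∈ range N | ∀ i, (a i * j + b i).Prime} ⊆
      {j ∈ range N | (sievePrimorial H (r ^ κ)).Coprime (f.eval j)} ∪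
        univ.biUnion fun i ↦ {j ∈ range N | a i * j + b i ≤ r ^ κ} := by
    intro j hj
    obtain ⟨hjN, hprime⟩ := mem_filter.1 hj
    by_cases hsmall : ∃ i, a i * j + b i ≤ r ^ κ
    · exact mem_union_right _ (by simpa [mem_range.1 hjN] using hsmall)
    · push Not at hsmall
      refine mem_union_left _ (mem_filter.2 ⟨hjN, ?_⟩)
      simp only [f, Polynomial.eval_prod, Polynomial.eval_add, Polynomial.eval_mul,
        Polynomial.eval_C, Polynomial.eval_X]
      exact Nat.Coprime.prod_right fun i _ ↦
        coprime_sievePrimorial_of_prime_gt (hprime i) (hsmall i)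
  have ha (i : ι) : a i ≠ 0 := by
    obtain ⟨p, hpH, hp⟩ := Nat.exists_infinite_primes (H + 1)
    have hpH' := Nat.not_dvd_of_pos_of_lt (Nat.pos_of_ne_zero hH) hpH
    exact fun h ↦ (hforms p hp hpH').2.1 i (h ▸ dvd_zero p)
  have hsmall : #(univ.biUnion fun i ↦ {j ∈ range N | a i * j + b i ≤ r ^ κ}) ≤
      κ * (r ^ κ) ^ 6 := by
    have hR : r ^ κ + 1 ≤ (r ^ κ) ^ 6 := by
      have : 2 ≤ r ^ κ := hr.trans (Nat.le_self_pow hκ0.ne' r)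
      calc r ^ κ + 1 ≤ (r ^ κ) ^ 2 := by nlinarith
        _ ≤ (r ^ κ) ^ 6 := Nat.pow_le_pow_right (by omega) (by norm_num)
    exact (card_biUnion_le_card_mul _ _ _ fun i _ ↦ (card_linear_le (ha i) N (b i)).trans hR)
  have hcard := (card_le_card hsub).trans ((card_union_le _ _).trans (add_le_add_right hsmall _))
  rify at hcard hsifted
  rw [mul_comm 6 κ, pow_mul, add_one_mul]
  linarith

end LinearForms

section TwinMultipliers

/-- `t` is a twin multiplier for `n` if `d * t + 1` is prime for at least two divisors `d` of
`n`. -/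
def IsTwinMultiplier (n t : ℕ) : Prop :=
  1 < #{d ∈ n.divisors | (d * t + 1).Prime}

instance (n : ℕ) : DecidablePred (IsTwinMultiplier n) := fun _ ↦ Nat.decLt _ _

theorem omegaStar_mul_le_add_card {n s : ℕ} (hn : n ≠ 0) (hs : s ≠ 0)
    (hmin : ∀ r, r ∣ s → r < s → omegaStar (n * r) ≤ omegaStar n) :
    omegaStar (n * s) ≤ omegaStar n + #{d ∈ n.divisors | (d * s + 1).Prime} := by
  have hsub : {e ∈ (n * s).divisors | (e + 1).Prime} ⊆ {e ∈ n.divisors | (e + 1).Prime} ∪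
      {d ∈ n.divisors | (d * s + 1).Prime}.image (· * s) := by
    intro e he
    obtain ⟨he, hprime⟩ := mem_filter.1 he
    obtain ⟨d, r, hd, hr, rfl⟩ := Nat.dvd_mul.1 (Nat.dvd_of_mem_divisors he)
    have hdn : d ∈ n.divisors := Nat.mem_divisors.2 ⟨hd, hn⟩
    rcases (Nat.le_of_dvd (Nat.pos_of_ne_zero hs) hr).eq_or_lt with rfl | hlt
    · exact mem_union_right _ (mem_image_of_mem _ (mem_filter.2 ⟨hdn, hprime⟩))
    · have hnr : n * r ≠ 0 := mul_ne_zero hn (ne_zero_of_dvd_ne_zero hs hr)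
      have hmono : {e ∈ n.divisors | (e + 1).Prime} ⊆ {e ∈ (n * r).divisors | (e + 1).Prime} :=
        filter_subset_filter _ (Nat.divisors_subset_of_dvd hnr (dvd_mul_right n r))
      refine mem_union_left _ ?_
      rw [eq_of_subset_of_card_le hmono (hmin r hr hlt)]
      exact mem_filter.2 ⟨Nat.mem_divisors.2 ⟨Nat.mul_dvd_mul_right hd r, hnr⟩, hprime⟩
  exact (card_le_card hsub).trans ((card_union_le _ _).trans (add_le_add_right card_image_le _))

theorem exists_isTwinMultiplier_dvd {n t : ℕ} (hn : n ≠ 0) (ht : t ≠ 0)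
    (hskip : ∀ s, 0 < s → omegaStar (n * s) ≠ omegaStar n + 1)
    (hlt : omegaStar n < omegaStar (n * t)) : ∃ s, s ∣ t ∧ 1 < s ∧ IsTwinMultiplier n s := by
  have hex : ∃ s, s ∣ t ∧ omegaStar n < omegaStar (n * s) := ⟨t, dvd_rfl, hlt⟩
  obtain ⟨hst, hs⟩ := Nat.find_spec hex
  have hmin (r : ℕ) (hr : r ∣ Nat.find hex) (hlt : r < Nat.find hex) :
      omegaStar (n * r) ≤ omegaStar n :=
    not_lt.1 fun h ↦ Nat.find_min hex hlt ⟨hr.trans hst, h⟩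
  set s := Nat.find hex
  have hs0 : 0 < s := Nat.pos_of_ne_zero (ne_zero_of_dvd_ne_zero ht hst)
  have hs1 : s ≠ 1 := by
    rintro h
    simp [h] at hs
  refine ⟨s, hst, by omega, ?_⟩
  have hle := omegaStar_mul_le_add_card hn hs0.ne' hmin
  have hne := hskip s hs0
  rw [IsTwinMultiplier]
  omega

theorem omegaStar_lt_omegaStar_mul {n t : ℕ} (hn : n ≠ 0) (ht : 1 < t) (hp : (n * t + 1).Prime) :
    omegaStar n < omegaStar (n * t) := by
  have hnt : n * t ≠ 0 := mul_ne_zero hn (by omega)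
  refine card_lt_card ((ssubset_iff_of_subset (filter_subset_filter _
    (Nat.divisors_subset_of_dvd hnt (dvd_mul_right n t)))).2 ⟨n * t, ?_, fun h ↦ ?_⟩)
  · exact mem_filter.2 ⟨Nat.mem_divisors_self _ hnt, hp⟩
  · have hle := Nat.divisor_le (mem_of_mem_filter _ h)
    exact hle.not_gt (lt_mul_of_one_lt_right (Nat.pos_of_ne_zero hn) ht)

theorem card_two_primes_le {s H r d e : ℕ} (hH : H ≠ 0) (hr : 2 ≤ r) (hs : s ∣ H) (hde : d ≠ e)
    (hd : d ≠ 0) (he : e ≠ 0) (hlarge : ∀ p, p.Prime → ¬p ∣ H → 2 < p ∧ d < p ∧ e < p)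
    (c N : ℕ) :
    (#{j ∈ range N | (d * (s * j + c) + 1).Prime ∧ (e * (s * j + c) + 1).Prime} : ℝ) ≤
      N * (H / H.totient) ^ 2 / Real.log r ^ 2 + 3 * r ^ 12 := by
  have hndvd {p a : ℕ} (hp : p.Prime) (hpH : ¬p ∣ H) (ha : a ≠ 0) (hap : a < p) : ¬p ∣ a * s :=
    hp.not_dvd_mul (Nat.not_dvd_of_pos_of_lt (Nat.pos_of_ne_zero ha) hap) fun h ↦ hpH (h.trans hs)
  have hcross {p : ℕ} (hp : p.Prime) (hpH : ¬p ∣ H) {a b : ℕ} (hap : a < p) (hbp : b < p)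
      (hab : a ≠ b) : ¬a * s * (b * c + 1) ≡ b * s * (a * c + 1) [MOD p] := by
    have := Fact.mk hp
    intro h
    have hs0 : (s : ZMod p) ≠ 0 := mt (ZMod.natCast_eq_zero_iff _ _).1 fun h ↦ hpH (h.trans hs)
    rw [← ZMod.natCast_eq_natCast_iff] at h
    push_cast at h
    have hab' : (a : ZMod p) = b := mul_right_cancel₀ hs0 (by linear_combination h)
    exact hab (Nat.ModEq.eq_of_lt_of_lt ((ZMod.natCast_eq_natCast_iff _ _ _).1 hab') hap hbp)
  have h := card_forall_prime_linear_le ![d * s, e * s] ![d * c + 1, e * c + 1] hH hr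
    (fun p hp hpH ↦ ?_) N
  · simp only [Fin.forall_fin_two, Matrix.cons_val_zero, Matrix.cons_val_one, Fintype.card_fin] at h
    convert h using 5 <;> norm_num <;> ring_nf
  · obtain ⟨hp2, hdp, hep⟩ := hlarge p hp hpH
    simp [Fin.forall_fin_two, hp2, hndvd hp hpH hd hdp, hndvd hp hpH he hep,
      hcross hp hpH hdp hep hde, hcross hp hpH hep hdp hde.symm]

theorem card_isTwinMultiplier_le {n s H r : ℕ} (hH : H ≠ 0) (hr : 2 ≤ r) (hs : s ∣ H)
    (hlarge : ∀ p, p.Prime → ¬p ∣ H → 2 < p ∧ n < p) (c N : ℕ) :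
    (#{j ∈ range N | IsTwinMultiplier n (s * j + c)} : ℝ) ≤
      n ^ 2 * (N * (H / H.totient) ^ 2 / Real.log r ^ 2 + 3 * r ^ 12) := by
  have hsub : {j ∈ range N | IsTwinMultiplier n (s * j + c)} ⊆ n.divisors.offDiag.biUnion fun x ↦
      {j ∈ range N | (x.1 * (s * j + c) + 1).Prime ∧ (x.2 * (s * j + c) + 1).Prime} := by
    intro j hj
    obtain ⟨hjN, htwin⟩ := mem_filter.1 hj
    obtain ⟨d, hd, e, he, hde⟩ := one_lt_card.1 htwin
    rw [mem_filter] at hd he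
    exact mem_biUnion.2 ⟨(d, e), mem_offDiag.2 ⟨hd.1, he.1, hde⟩, mem_filter.2 ⟨hjN, hd.2, he.2⟩⟩
  have hpairs : #n.divisors.offDiag ≤ n ^ 2 := by
    rw [offDiag_card, ← sq]
    exact (Nat.sub_le _ _).trans (Nat.pow_le_pow_left n.card_divisors_le_self 2)
  have hbound : ∀ x ∈ n.divisors.offDiag,
      (#{j ∈ range N | (x.1 * (s * j + c) + 1).Prime ∧ (x.2 * (s * j + c) + 1).Prime} : ℝ) ≤
        N * (H / H.totient) ^ 2 / Real.log r ^ 2 + 3 * r ^ 12 := by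
    intro x hx
    obtain ⟨hd, he, hne⟩ := mem_offDiag.1 hx
    exact card_two_primes_le hH hr hs hne (Nat.pos_of_mem_divisors hd).ne'
      (Nat.pos_of_mem_divisors he).ne' (fun p hp hpH ↦ ⟨(hlarge p hp hpH).1,
        (Nat.divisor_le hd).trans_lt (hlarge p hp hpH).2,
        (Nat.divisor_le he).trans_lt (hlarge p hp hpH).2⟩) c N
  calc (#{j ∈ range N | IsTwinMultiplier n (s * j + c)} : ℝ)
      ≤ ∑ x ∈ n.divisors.offDiag,
          (#{j ∈ range N | (x.1 * (s * j + c) + 1).Prime ∧ (x.2 * (s * j + c) + 1).Prime} : ℝ) :=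
        mod_cast (card_le_card hsub).trans card_biUnion_le
    _ ≤ #n.divisors.offDiag * (N * (H / H.totient) ^ 2 / Real.log r ^ 2 + 3 * r ^ 12) := by
        rw [← nsmul_eq_mul]
        exact sum_le_card_nsmul _ _ _ hbound
    _ ≤ n ^ 2 * (N * (H / H.totient) ^ 2 / Real.log r ^ 2 + 3 * r ^ 12) := by
        gcongr
        exact_mod_cast hpairs

end TwinMultipliers

section BrunConvergence

theorem sum_Ico_one_two_pow_eq (f : ℕ → ℝ) (n : ℕ) :
    ∑ t ∈ Ico 1 (2 ^ n), f t = ∑ i ∈ range n, ∑ t ∈ Ico (2 ^ i) (2 ^ (i + 1)), f t := by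
  induction n with
  | zero => simp
  | succ n ih =>
    rw [sum_range_succ, ← ih, sum_Ico_consecutive f Nat.one_le_two_pow
      (Nat.pow_le_pow_right two_pos n.le_succ)]

theorem summable_and_tsum_le_of_dyadic {f g : ℕ → ℝ} (hf : ∀ t, 0 ≤ f t) (hg : Summable g)
    (hfg : ∀ i, ∑ t ∈ Ico (2 ^ i) (2 ^ (i + 1)), f t ≤ g i) :
    Summable f ∧ ∑' t, f t ≤ f 0 + ∑' i, g i := by
  have hg0 (i : ℕ) : 0 ≤ g i := (sum_nonneg fun t _ ↦ hf t).trans (hfg i)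
  have hbound (n : ℕ) : ∑ t ∈ range n, f t ≤ f 0 + ∑' i, g i := by
    calc ∑ t ∈ range n, f t ≤ ∑ t ∈ range (2 ^ n), f t :=
          sum_le_sum_of_subset_of_nonneg (range_subset_range.2 Nat.lt_two_pow_self.le)
            fun t _ _ ↦ hf t
      _ ≤ f 0 + ∑ i ∈ range n, g i := by
          rw [sum_range_eq_add_Ico f (Nat.two_pow_pos n), sum_Ico_one_two_pow_eq]
          gcongr with i
          exact hfg i
      _ ≤ f 0 + ∑' i, g i := by
          gcongr
          exact hg.sum_le_tsum _ fun i _ ↦ hg0 i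
  exact ⟨summable_of_sum_range_le hf hbound, Real.tsum_le_of_sum_range_le hf hbound⟩

theorem card_le_div_two_of_primes_lt {S : Finset ℕ} {a : ℕ} (hS : ∀ p ∈ S, p.Prime ∧ p < a)
    (ha : Odd a) : #S ≤ a / 2 := by
  have hmaps : Set.MapsTo (fun p ↦ (p + 1) / 2) ↑S ↑(Icc 1 (a / 2)) := by
    intro p hp
    have h := hS p hp
    have h2 := h.1.two_le
    obtain ⟨b, rfl⟩ := ha
    rcases h.1.eq_two_or_odd with rfl | hodd <;> simp only [coe_Icc, Set.mem_Icc] <;> omega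
  have hinj : Set.InjOn (fun p ↦ (p + 1) / 2) (S : Set ℕ) := by
    intro p hp q hq hpq
    have := (hS p hp).1.eq_two_or_odd
    have := (hS q hq).1.eq_two_or_odd
    have := (hS p hp).1.two_le
    have := (hS q hq).1.two_le
    dsimp only at hpq
    omega
  simpa using card_le_card_of_injOn _ hmaps hinj

-- An elementary substitute for Mertens' theorem: the `k`-th odd prime is at least `2 * k + 1`, and
-- `∏ (1 - 1 / (2 * k + 1)) ^ 2` decays only like the reciprocal of the number of factors.
theorem three_le_mul_prod_one_sub_inv_sq {S : Finset ℕ} (hS : ∀ p ∈ S, p.Prime)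
    (hne : S.Nonempty) :
    3 ≤ 4 * (4 * #S - 1) * (∏ p ∈ S, (1 - (p : ℝ)⁻¹)) ^ 2 := by
  induction S using Finset.induction_on_max with
  | empty => simp at hne
  | insert a S hmax ih =>
    have ha := hS a (mem_insert_self a S)
    have haS : a ∉ S := fun h ↦ (hmax a h).false
    rw [prod_insert haS, card_insert_of_notMem haS, mul_pow]
    rcases S.eq_empty_or_nonempty with rfl | hSne
    · have ha2 : (a : ℝ)⁻¹ ≤ 2⁻¹ := inv_anti₀ two_pos (mod_cast ha.two_le)
      norm_num
      nlinarith
    · have hprimes (p : ℕ) (hp : p ∈ S) : p.Prime := hS p (mem_insert_of_mem hp)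
      have hcard : 2 * #S + 1 ≤ a := by
        obtain ⟨p, hp⟩ := hSne
        have hodd := ha.eq_two_or_odd'.resolve_left
          ((hprimes p hp).two_le.trans_lt (hmax p hp)).ne'
        have := card_le_div_two_of_primes_lt (fun p hp ↦ ⟨hprimes p hp, hmax p hp⟩) hodd
        obtain ⟨b, rfl⟩ := hodd
        omega
      have hk : (1 : ℝ) ≤ #S := mod_cast hSne.card_pos
      have hfactor : (2 * #S / (2 * #S + 1) : ℝ) ≤ 1 - (a : ℝ)⁻¹ := by
        have hinv : (a : ℝ)⁻¹ ≤ (2 * #S + 1 : ℝ)⁻¹ := inv_anti₀ (by positivity) (mod_cast hcard)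
        have hsplit : (2 * #S / (2 * #S + 1) : ℝ) = 1 - (2 * #S + 1 : ℝ)⁻¹ := by
          field_simp
          ring
        linarith
      have hratio : (4 * #S - 1 : ℝ) ≤ (4 * (#S + 1) - 1) * (1 - (a : ℝ)⁻¹) ^ 2 := by
        refine LE.le.trans ?_ (mul_le_mul_of_nonneg_left
          (pow_le_pow_left₀ (by positivity) hfactor 2) (by linarith))
        rw [div_pow, ← mul_div_assoc, le_div_iff₀ (by positivity)]
        nlinarith
      calc (3 : ℝ) ≤ 4 * (4 * #S - 1) * (∏ p ∈ S, (1 - (p : ℝ)⁻¹)) ^ 2 := ih hprimes hSne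
        _ ≤ 4 * ((4 * (#S + 1) - 1) * (1 - (a : ℝ)⁻¹) ^ 2) *
              (∏ p ∈ S, (1 - (p : ℝ)⁻¹)) ^ 2 := by gcongr
        _ = _ := by push_cast; ring

theorem sq_div_totient_le {t : ℕ} (ht : t ≠ 0) :
    ((t : ℝ) / t.totient) ^ 2 ≤ 9 * (#t.primeFactors + 1) := by
  have hφ : (0 : ℝ) < t.totient := mod_cast Nat.totient_pos.2 (Nat.pos_of_ne_zero ht)
  have ht' : (0 : ℝ) < t := mod_cast Nat.pos_of_ne_zero ht
  rcases t.primeFactors.eq_empty_or_nonempty with h | h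
  · obtain rfl : t = 1 := by simpa [ht] using h
    norm_num
  · have hprod := three_le_mul_prod_one_sub_inv_sq
      (fun p hp ↦ Nat.prime_of_mem_primeFactors hp) h
    rw [prod_one_sub_inv_eq_totient_div ht, div_pow, ← mul_div_assoc,
      le_div_iff₀ (by positivity)] at hprod
    rw [div_pow, div_le_iff₀ (by positivity)]
    nlinarith [sq_pos_of_pos hφ]

theorem card_primeFactors_le_of_lt_two_pow {t i : ℕ} (ht : t ≠ 0) (hi : t < 2 ^ (i + 1)) :
    #t.primeFactors ≤ i := by
  have hpow : 2 ^ #t.primeFactors ≤ t :=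
    (pow_card_le_prod _ _ _ fun p hp ↦ (Nat.prime_of_mem_primeFactors hp).two_le).trans
      (Nat.le_of_dvd (Nat.pos_of_ne_zero ht) (Nat.prod_primeFactors_dvd t))
  exact Nat.lt_succ_iff.1 ((Nat.pow_lt_pow_iff_right one_lt_two).1 (hpow.trans_lt hi))

theorem inv_totient_le_of_mem_Ico {t i : ℕ} (ht : t ∈ Ico (2 ^ i) (2 ^ (i + 1))) :
    (t.totient : ℝ)⁻¹ ≤ 3 * √(i + 1) / 2 ^ i := by
  obtain ⟨hit, hti⟩ := Finset.mem_Ico.1 ht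
  have ht0 : t ≠ 0 := (Nat.two_pow_pos i |>.trans_le hit).ne'
  have hω : (#t.primeFactors : ℝ) ≤ i := mod_cast card_primeFactors_le_of_lt_two_pow ht0 hti
  have hquot : (t : ℝ) / t.totient ≤ 3 * √(i + 1) := by
    refine (sq_le_sq₀ (by positivity) (by positivity)).1 ?_
    rw [mul_pow, Real.sq_sqrt (by positivity)]
    linarith [sq_div_totient_le ht0]
  rw [le_div_iff₀ (by positivity)]
  calc (t.totient : ℝ)⁻¹ * 2 ^ i ≤ (t.totient : ℝ)⁻¹ * t := by gcongr; exact_mod_cast hit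
    _ = t / t.totient := inv_mul_eq_div _ _
    _ ≤ 3 * √(i + 1) := hquot

theorem two_pow_pow_twelve_mul_sq_le {m i : ℕ} (hm : 24 * m ≤ i + 24) :
    ((2 : ℝ) ^ m) ^ 12 * m ^ 2 ≤ 2 ^ 24 * 2 ^ i := by
  have hlt : (m : ℝ) ≤ 2 ^ m := mod_cast Nat.lt_two_pow_self.le
  calc ((2 : ℝ) ^ m) ^ 12 * m ^ 2 ≤ (2 ^ m) ^ 12 * (2 ^ m) ^ 2 := by gcongr
    _ = 2 ^ (14 * m) := by ring
    _ ≤ 2 ^ (24 + i) := pow_le_pow_right₀ one_le_two (by omega)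
    _ = 2 ^ 24 * 2 ^ i := pow_add _ _ _

theorem two_pow_mul_div_log_sq_add_le (K : ℝ) {m i : ℕ} (hm : m ≠ 0) (him : 24 * m ≤ i + 24) :
    2 ^ (i + 1) * K / Real.log (2 ^ m) ^ 2 + 3 * (2 ^ m) ^ 12 ≤
      (2 * K / Real.log 2 ^ 2 + 3 * 2 ^ 24) * 2 ^ i / m ^ 2 := by
  have : 0 < Real.log 2 := Real.log_pos one_lt_two
  have : (0 : ℝ) < m := mod_cast Nat.pos_of_ne_zero hm
  have hmain : 2 ^ (i + 1) * K / Real.log (2 ^ m) ^ 2 * m ^ 2 =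
      2 * K / Real.log 2 ^ 2 * 2 ^ i := by
    rw [Real.log_pow, pow_succ (2 : ℝ) i]
    field_simp
  rw [le_div_iff₀ (by positivity), add_mul, hmain]
  linarith [two_pow_pow_twelve_mul_sq_le him]

theorem exists_card_isTwinMultiplier_le (n : ℕ) : ∃ C : ℝ, 0 ≤ C ∧ ∀ i : ℕ,
    (#{t ∈ range (2 ^ (i + 1)) | IsTwinMultiplier n t} : ℝ) ≤ C * 2 ^ i / (i + 1) ^ 2 := by
  set H := (max n 2).factorial with hH
  set A : ℝ := 2 * (H / H.totient) ^ 2 / Real.log 2 ^ 2 + 3 * 2 ^ 24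
  have hlarge (p : ℕ) (hp : p.Prime) (hpH : ¬p ∣ H) : 2 < p ∧ n < p := by
    rw [hH, hp.dvd_factorial, not_le, max_lt_iff] at hpH
    exact hpH.symm
  refine ⟨576 * (n ^ 2 * A), by positivity, fun i ↦ ?_⟩
  set m := i / 24 + 1
  have him : (i : ℝ) + 1 ≤ 24 * m := mod_cast (show i + 1 ≤ 24 * m by omega)
  have hcount := card_isTwinMultiplier_le (H := H) (Nat.factorial_ne_zero _)
    (Nat.le_self_pow (show m ≠ 0 by omega) 2) (one_dvd H) hlarge 0 (2 ^ (i + 1))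
  simp only [one_mul, add_zero, Nat.cast_pow, Nat.cast_ofNat] at hcount
  calc (#{t ∈ range (2 ^ (i + 1)) | IsTwinMultiplier n t} : ℝ)
      ≤ n ^ 2 * (A * 2 ^ i / m ^ 2) := hcount.trans (by
        gcongr
        exact two_pow_mul_div_log_sq_add_le _ (by omega) (by omega))
    _ = 576 * (n ^ 2 * A) * 2 ^ i / (24 * m) ^ 2 := by field_simp; ring
    _ ≤ 576 * (n ^ 2 * A) * 2 ^ i / (i + 1) ^ 2 := by gcongr

/-- The reciprocal of Euler's totient, restricted to the twin multipliers for `n`. -/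
noncomputable def twinWeight (n t : ℕ) : ℝ :=
  if IsTwinMultiplier n t then (t.totient : ℝ)⁻¹ else 0

theorem summable_twinWeight (n : ℕ) : Summable (twinWeight n) := by
  obtain ⟨C, _, hcount⟩ := exists_card_isTwinMultiplier_le n
  have hg : Summable fun i : ℕ ↦ 3 * C * ((i + 1 : ℕ) : ℝ) ^ (-(3 / 2) : ℝ) :=
    ((summable_nat_add_iff 1).2 (Real.summable_nat_rpow.2 (by norm_num))).mul_left _
  refine (summable_and_tsum_le_of_dyadic (fun t ↦ ?_) hg fun i ↦ ?_).1
  · unfold twinWeight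
    positivity
  have hi : (0 : ℝ) < i + 1 := by positivity
  have hsub : {t ∈ Ico (2 ^ i) (2 ^ (i + 1)) | IsTwinMultiplier n t} ⊆
      {t ∈ range (2 ^ (i + 1)) | IsTwinMultiplier n t} :=
    filter_subset_filter _ fun t ht ↦ mem_range.2 (Finset.mem_Ico.1 ht).2
  calc ∑ t ∈ Ico (2 ^ i) (2 ^ (i + 1)), twinWeight n t
      = ∑ t ∈ Ico (2 ^ i) (2 ^ (i + 1)) with IsTwinMultiplier n t, (t.totient : ℝ)⁻¹ :=
        (sum_filter _ _).symm
    _ ≤ #{t ∈ Ico (2 ^ i) (2 ^ (i + 1)) | IsTwinMultiplier n t} * (3 * √(i + 1) / 2 ^ i) := by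
        rw [← nsmul_eq_mul]
        exact sum_le_card_nsmul _ _ _ fun t ht ↦ inv_totient_le_of_mem_Ico (mem_filter.1 ht).1
    _ ≤ C * 2 ^ i / (i + 1) ^ 2 * (3 * √(i + 1) / 2 ^ i) := by
        gcongr
        exact (Nat.cast_le.2 (card_le_card hsub)).trans (hcount i)
    _ = 3 * C * ((i + 1 : ℕ) : ℝ) ^ (-(3 / 2) : ℝ) := by
        rw [Nat.cast_add_one, show (-(3 / 2) : ℝ) = 1 / 2 - 2 by norm_num, Real.rpow_sub hi,
          ← Real.sqrt_eq_rpow, Real.rpow_two]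
        field_simp

end BrunConvergence

section MultiplesInProgressions

theorem exists_eq_mul_div_add_of_mul_modEq {Q t : ℕ} (ht : t.Coprime Q) (c : ℕ) :
    ∃ c', ∀ b, t * b ≡ c [MOD Q] → b = Q * (b / Q) + c' := by
  by_cases h : ∃ b₀, t * b₀ ≡ c [MOD Q]
  · obtain ⟨b₀, hb₀⟩ := h
    refine ⟨b₀ % Q, fun b hb ↦ ?_⟩
    have hmod : b ≡ b₀ [MOD Q] :=
      Nat.ModEq.cancel_left_of_coprime ht.symm.gcd_eq_one (hb.trans hb₀.symm)
    rw [← show b % Q = b₀ % Q from hmod, Nat.div_add_mod]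
  · exact ⟨0, fun b hb ↦ absurd ⟨b, hb⟩ h⟩

theorem exists_card_multiples_le {Q t : ℕ} (hQ : Q ≠ 0) (ht : t ≠ 0) (htQ : t.Coprime Q)
    (c X : ℕ) (P : ℕ → Prop) [DecidablePred P] :
    ∃ c', #{m ∈ range X | m ≡ c [MOD Q] ∧ t ∣ m ∧ P m} ≤
      #{j ∈ range (X / (Q * t) + 1) | P (t * (Q * j + c'))} := by
  obtain ⟨c', hc'⟩ := exists_eq_mul_div_add_of_mul_modEq htQ c
  have hQt : 0 < Q * t := Nat.pos_of_ne_zero (mul_ne_zero hQ ht)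
  refine ⟨c', (card_le_card fun m hm ↦ ?_).trans
    (card_image_le (f := fun j ↦ t * (Q * j + c')))⟩
  obtain ⟨hmX, hmc, ⟨b, rfl⟩, hP⟩ := mem_filter.1 hm
  have hb := hc' b hmc
  refine mem_image.2 ⟨b / Q, mem_filter.2 ⟨?_, by rwa [← hb]⟩, by rw [← hb]⟩
  rw [mem_range, Nat.lt_succ_iff, Nat.le_div_iff_mul_le hQt]
  calc b / Q * (Q * t) = t * (b / Q * Q) := by ring
    _ ≤ t * b := by gcongr; exact Nat.div_mul_le_self b Q
    _ ≤ X := (mem_range.1 hmX).le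

theorem cast_div_add_one_le {a X : ℕ} (ha : a ≠ 0) (haX : a ≤ X) :
    ((X / a + 1 : ℕ) : ℝ) ≤ 2 * X / a := by
  have ha' : (0 : ℝ) < a := mod_cast Nat.pos_of_ne_zero ha
  have hone : (1 : ℝ) ≤ X / a := (one_le_div ha').2 (mod_cast haX)
  have hdiv : ((X / a : ℕ) : ℝ) ≤ X / a := Nat.cast_div_le
  rw [mul_div_assoc]
  push_cast
  linarith

theorem card_prime_linear_le {a b H r : ℕ} (hH : H ≠ 0) (hr : 2 ≤ r)
    (ha : ∀ p, p.Prime → ¬p ∣ H → ¬p ∣ a) (N : ℕ) :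
    (#{j ∈ range N | (a * j + b).Prime} : ℝ) ≤
      N * (H / H.totient) / Real.log r + 2 * r ^ 6 := by
  have h := card_forall_prime_linear_le (fun _ : Unit ↦ a) (fun _ ↦ b) hH hr
    (fun p hp hpH ↦ by simp [hp.one_lt, ha p hp hpH]) N
  norm_num at h
  exact h

theorem card_multiples_prime_le {n Q t X R : ℕ} (hQ : Q ≠ 0) (hn : n ∣ Q) (ht : t ≠ 0)
    (htQ : t.Coprime Q) (hX : Q * t ≤ X) (hR : 2 ≤ R) (c : ℕ) :
    (#{m ∈ range X | m ≡ c [MOD Q] ∧ t ∣ m ∧ (n * m + 1).Prime} : ℝ) ≤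
      2 * X / (Q.totient * Real.log R) * (t.totient : ℝ)⁻¹ + 2 * R ^ 6 := by
  have hQt : Q * t ≠ 0 := mul_ne_zero hQ ht
  have : (0 : ℝ) < Q * t := mod_cast Nat.pos_of_ne_zero hQt
  have hlog : 0 < Real.log R := Real.log_pos (mod_cast hR)
  obtain ⟨c', hc'⟩ := exists_card_multiples_le hQ ht htQ c X fun m ↦ (n * m + 1).Prime
  have hcoeff (p : ℕ) (hp : p.Prime) (hpH : ¬p ∣ Q * t) : ¬p ∣ n * (t * Q) := by
    rw [mul_comm t]
    exact hp.not_dvd_mul (fun h ↦ hpH ((h.trans hn).mul_right t)) hpH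
  have hsieve := card_prime_linear_le (b := n * (t * c') + 1) hQt hR hcoeff (X / (Q * t) + 1)
  have hform (j : ℕ) : n * (t * (Q * j + c')) + 1 = n * (t * Q) * j + (n * (t * c') + 1) := by ring
  simp only [hform] at hc'
  calc (#{m ∈ range X | m ≡ c [MOD Q] ∧ t ∣ m ∧ (n * m + 1).Prime} : ℝ)
      ≤ (X / (Q * t) + 1 : ℕ) * ((Q * t : ℕ) / (Q * t).totient) / Real.log R + 2 * R ^ 6 :=
        (Nat.cast_le.2 hc').trans hsieve
    _ ≤ 2 * X / (Q * t : ℕ) * ((Q * t : ℕ) / (Q * t).totient) / Real.log R + 2 * R ^ 6 := by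
        gcongr
        exact cast_div_add_one_le hQt hX
    _ = 2 * X / (Q.totient * Real.log R) * (t.totient : ℝ)⁻¹ + 2 * R ^ 6 := by
        rw [Nat.totient_mul htQ.symm]
        push_cast
        field_simp

theorem card_multiples_isTwinMultiplier_le {n Q b X r : ℕ} (hQ : Q ≠ 0)
    (hlarge : ∀ p, p.Prime → ¬p ∣ Q → 2 < p ∧ n < p) (hb : b ≠ 0) (hbQ : b.Coprime Q)
    (hX : Q * b ≤ X) (hr : 2 ≤ r) (c : ℕ) :
    (#{m ∈ range X | m ≡ c [MOD Q] ∧ b ∣ m ∧ IsTwinMultiplier n (m / b)} : ℝ) ≤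
      n ^ 2 * (2 * X * Q / (Q.totient * Real.log r) ^ 2 * (b : ℝ)⁻¹ + 3 * r ^ 12) := by
  have : (0 : ℝ) < Q := mod_cast Nat.pos_of_ne_zero hQ
  have : (0 : ℝ) < b := mod_cast Nat.pos_of_ne_zero hb
  obtain ⟨c', hc'⟩ := exists_card_multiples_le hQ hb hbQ c X fun m ↦ IsTwinMultiplier n (m / b)
  simp only [Nat.mul_div_cancel_left _ (Nat.pos_of_ne_zero hb)] at hc'
  calc (#{m ∈ range X | m ≡ c [MOD Q] ∧ b ∣ m ∧ IsTwinMultiplier n (m / b)} : ℝ)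
      ≤ n ^ 2 * ((X / (Q * b) + 1 : ℕ) * (Q / Q.totient) ^ 2 / Real.log r ^ 2 + 3 * r ^ 12) :=
        (Nat.cast_le.2 hc').trans (card_isTwinMultiplier_le hQ hr dvd_rfl hlarge c' _)
    _ ≤ n ^ 2 * (2 * X / (Q * b : ℕ) * (Q / Q.totient) ^ 2 / Real.log r ^ 2 + 3 * r ^ 12) := by
        gcongr
        exact cast_div_add_one_le (mul_ne_zero hQ hb) hX
    _ = n ^ 2 * (2 * X * Q / (Q.totient * Real.log r) ^ 2 * (b : ℝ)⁻¹ + 3 * r ^ 12) := by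
        push_cast
        field_simp

end MultiplesInProgressions

section HarmonicCoprime

theorem card_coprime_Ico_two_pow_le {Q : ℕ} (hQ : Q ≠ 0) (k : ℕ) :
    (#{t ∈ Ico (2 ^ k) (2 ^ (k + 1)) | t.Coprime Q} : ℝ) ≤ Q.totient * (2 ^ k / Q + 1) := by
  have hcard : #{t ∈ Ico (2 ^ k) (2 ^ (k + 1)) | t.Coprime Q} ≤ Q.totient * (2 ^ k / Q + 1) := by
    simpa only [← mul_two, ← pow_succ, Nat.coprime_comm] using
      Nat.Ico_filter_coprime_le (a := Q) (2 ^ k) (2 ^ k) hQ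
  refine (Nat.cast_le (α := ℝ).2 hcard).trans ?_
  push_cast
  gcongr
  simpa using Nat.cast_div_le (α := ℝ) (m := 2 ^ k) (n := Q)

theorem sum_inv_coprime_Ico_two_pow_le {Q : ℕ} (hQ : Q ≠ 0) (k : ℕ) :
    ∑ t ∈ Ico (2 ^ k) (2 ^ (k + 1)) with Nat.Coprime t Q, (t : ℝ)⁻¹ ≤
      Q.totient / Q + Q.totient * (1 / 2) ^ k := by
  calc ∑ t ∈ Ico (2 ^ k) (2 ^ (k + 1)) with Nat.Coprime t Q, (t : ℝ)⁻¹
      ≤ #{t ∈ Ico (2 ^ k) (2 ^ (k + 1)) | t.Coprime Q} * ((2 : ℝ) ^ k)⁻¹ := by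
        rw [← nsmul_eq_mul]
        refine sum_le_card_nsmul _ _ _ fun t ht ↦ inv_anti₀ (by positivity) ?_
        exact_mod_cast (Finset.mem_Ico.1 (mem_of_mem_filter t ht)).1
    _ ≤ Q.totient * (2 ^ k / Q + 1) * ((2 : ℝ) ^ k)⁻¹ := by
        gcongr
        exact card_coprime_Ico_two_pow_le hQ k
    _ = Q.totient / Q + Q.totient * (1 / 2) ^ k := by
        rw [one_div, inv_pow]
        field_simp

theorem sum_inv_coprime_le {Q : ℕ} (hQ : Q ≠ 0) (K : ℕ) :
    ∑ t ∈ Ico 1 (2 ^ K) with Nat.Coprime t Q, (t : ℝ)⁻¹ ≤ Q.totient / Q * (K + 2 * Q) := by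
  have : (0 : ℝ) < Q := mod_cast Nat.pos_of_ne_zero hQ
  calc ∑ t ∈ Ico 1 (2 ^ K) with Nat.Coprime t Q, (t : ℝ)⁻¹
      = ∑ k ∈ range K, ∑ t ∈ Ico (2 ^ k) (2 ^ (k + 1)) with Nat.Coprime t Q, (t : ℝ)⁻¹ := by
        simp only [sum_filter]
        exact sum_Ico_one_two_pow_eq _ K
    _ ≤ ∑ k ∈ range K, (Q.totient / Q + Q.totient * (1 / 2 : ℝ) ^ k) :=
        sum_le_sum fun k _ ↦ sum_inv_coprime_Ico_two_pow_le hQ k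
    _ = K * (Q.totient / Q) + Q.totient * ∑ k ∈ range K, (1 / 2 : ℝ) ^ k := by
        rw [sum_add_distrib, sum_const, card_range, nsmul_eq_mul, mul_sum]
    _ ≤ K * (Q.totient / Q) + Q.totient * 2 := by
        gcongr
        exact sum_geometric_two_le K
    _ = Q.totient / Q * (K + 2 * Q) := by field_simp

end HarmonicCoprime

section SkippedValue

theorem lt_of_coprime_factorial {T t : ℕ} (ht : 1 < t) (h : t.Coprime T.factorial) : T < t := by
  by_contra! hle
  exact ht.ne' (h.eq_one_of_dvd (Nat.dvd_factorial (by omega) hle))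

theorem filter_prime_subset_of_skip {n T c : ℕ} (hn : n ≠ 0) (hc : c.Coprime T.factorial)
    (hskip : ∀ s, 0 < s → omegaStar (n * s) ≠ omegaStar n + 1) (X : ℕ) {z : ℕ} (hz : z ≠ 0) :
    {m ∈ Ico 2 X | m ≡ c [MOD T.factorial] ∧ (n * m + 1).Prime} ⊆
      ({t ∈ Icc 1 (X / z) | t.Coprime T.factorial ∧ T < t ∧ IsTwinMultiplier n t}.biUnion fun t ↦
        {m ∈ range X | m ≡ c [MOD T.factorial] ∧ t ∣ m ∧ (n * m + 1).Prime}) ∪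
      {b ∈ Ico 1 z | b.Coprime T.factorial}.biUnion fun b ↦
        {m ∈ range X | m ≡ c [MOD T.factorial] ∧ b ∣ m ∧ IsTwinMultiplier n (m / b)} := by
  intro m hm
  obtain ⟨hmX, hmc, hp⟩ := mem_filter.1 hm
  obtain ⟨hm2, hmX⟩ := Finset.mem_Ico.1 hmX
  obtain ⟨s, ⟨b, rfl⟩, hs1, hs⟩ := exists_isTwinMultiplier_dvd hn (by omega) hskip
    (omegaStar_lt_omegaStar_mul hn hm2 hp)
  have hcop : (s * b).Coprime T.factorial := hmc.gcd_eq.trans hc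
  have hb : 0 < b := Nat.pos_of_ne_zero (by rintro rfl; simp at hm2)
  rcases le_or_gt s (X / z) with hsz | hsz
  · refine mem_union_left _ (mem_biUnion.2 ⟨s, mem_filter.2 ⟨Finset.mem_Icc.2 ⟨hs1.le, hsz⟩,
      hcop.coprime_mul_right, lt_of_coprime_factorial hs1 hcop.coprime_mul_right, hs⟩, ?_⟩)
    exact mem_filter.2 ⟨mem_range.2 hmX, hmc, dvd_mul_right s b, hp⟩
  · rw [Nat.div_lt_iff_lt_mul (Nat.pos_of_ne_zero hz)] at hsz
    have hbz : b < z := lt_of_mul_lt_mul_left (hmX.trans hsz) (Nat.zero_le s)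
    refine mem_union_right _ (mem_biUnion.2 ⟨b, mem_filter.2 ⟨Finset.mem_Ico.2 ⟨hb, hbz⟩,
      hcop.coprime_mul_left⟩, ?_⟩)
    exact mem_filter.2 ⟨mem_range.2 hmX, hmc, dvd_mul_left b s,
      by rwa [Nat.mul_div_cancel _ hb]⟩

theorem sum_card_multiples_prime_le {n Q X z R : ℕ} (hQ : Q ≠ 0) (hn : n ∣ Q) (hQz : Q ≤ z)
    (hR : 2 ≤ R) (c : ℕ) {S : Finset ℕ} (hS : ∀ t ∈ S, t ∈ Icc 1 (X / z) ∧ t.Coprime Q) :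
    ∑ t ∈ S, (#{m ∈ range X | m ≡ c [MOD Q] ∧ t ∣ m ∧ (n * m + 1).Prime} : ℝ) ≤
      2 * X / (Q.totient * Real.log R) * ∑ t ∈ S, (t.totient : ℝ)⁻¹ + X / z * (2 * R ^ 6) := by
  have hz : 0 < z := (Nat.pos_of_ne_zero hQ).trans_le hQz
  have hcard : (#S : ℝ) ≤ X / z := by
    refine le_trans (Nat.cast_le.2 ?_) (Nat.cast_div_le (m := X) (n := z))
    simpa using card_le_card (fun t ht ↦ (hS t ht).1 : S ⊆ Icc 1 (X / z))
  refine (sum_le_sum fun t ht ↦ ?_).trans (b := ∑ t ∈ S, (2 * X / (Q.totient * Real.log R) *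
    (t.totient : ℝ)⁻¹ + 2 * R ^ 6)) ?_
  · obtain ⟨htX, htQ⟩ := hS t ht
    obtain ⟨ht, htX⟩ := Finset.mem_Icc.1 htX
    have htz : Q * t ≤ X := by
      rw [Nat.le_div_iff_mul_le hz, mul_comm] at htX
      exact (Nat.mul_le_mul_right t hQz).trans htX
    exact card_multiples_prime_le hQ hn (Nat.pos_iff_ne_zero.1 ht) htQ htz hR c
  · rw [sum_add_distrib, ← mul_sum, sum_const, nsmul_eq_mul]
    gcongr

theorem sum_card_multiples_isTwinMultiplier_le {n Q X K r : ℕ} (hQ : Q ≠ 0)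
    (hlarge : ∀ p, p.Prime → ¬p ∣ Q → 2 < p ∧ n < p) (hX : Q * 2 ^ K ≤ X) (hr : 2 ≤ r) (c : ℕ) :
    ∑ b ∈ Ico 1 (2 ^ K) with Nat.Coprime b Q,
      (#{m ∈ range X | m ≡ c [MOD Q] ∧ b ∣ m ∧ IsTwinMultiplier n (m / b)} : ℝ) ≤
      n ^ 2 * (2 * X / (Q.totient * Real.log r ^ 2) * (K + 2 * Q) + 2 ^ K * (3 * r ^ 12)) := by
  have : (0 : ℝ) < Q := mod_cast Nat.pos_of_ne_zero hQ
  have hcard : (#{b ∈ Ico 1 (2 ^ K) | b.Coprime Q} : ℝ) ≤ 2 ^ K := by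
    exact_mod_cast (card_filter_le _ _).trans (by simp)
  calc ∑ b ∈ Ico 1 (2 ^ K) with Nat.Coprime b Q,
        (#{m ∈ range X | m ≡ c [MOD Q] ∧ b ∣ m ∧ IsTwinMultiplier n (m / b)} : ℝ)
      ≤ ∑ b ∈ Ico 1 (2 ^ K) with Nat.Coprime b Q,
          n ^ 2 * (2 * X * Q / (Q.totient * Real.log r) ^ 2 * (b : ℝ)⁻¹ + 3 * r ^ 12) := by
        refine sum_le_sum fun b hb ↦ ?_
        obtain ⟨hb, hbQ⟩ := mem_filter.1 hb
        obtain ⟨hb1, hbK⟩ := Finset.mem_Ico.1 hb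
        exact card_multiples_isTwinMultiplier_le hQ hlarge (Nat.pos_iff_ne_zero.1 hb1) hbQ
          ((Nat.mul_le_mul_left Q hbK.le).trans hX) hr c
    _ = n ^ 2 * (2 * X * Q / (Q.totient * Real.log r) ^ 2 *
          ∑ b ∈ Ico 1 (2 ^ K) with Nat.Coprime b Q, (b : ℝ)⁻¹ +
          #{b ∈ Ico 1 (2 ^ K) | b.Coprime Q} * (3 * r ^ 12)) := by
        rw [← mul_sum, sum_add_distrib, ← mul_sum, sum_const, nsmul_eq_mul]
    _ ≤ n ^ 2 * (2 * X * Q / (Q.totient * Real.log r) ^ 2 * (Q.totient / Q * (K + 2 * Q)) +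
          2 ^ K * (3 * r ^ 12)) := by
        gcongr
        exact sum_inv_coprime_le hQ K
    _ = n ^ 2 * (2 * X / (Q.totient * Real.log r ^ 2) * (K + 2 * Q) + 2 ^ K * (3 * r ^ 12)) := by
        field_simp

theorem card_prime_le_of_skip {n T c X K R r : ℕ} {τ : ℝ} (hn : n ≠ 0) (hT : max n 2 ≤ T)
    (hc : c.Coprime T.factorial) (hskip : ∀ s, 0 < s → omegaStar (n * s) ≠ omegaStar n + 1)
    (hτ : ∀ S : Finset ℕ, (∀ t ∈ S, T < t) → ∑ t ∈ S, twinWeight n t ≤ τ)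
    (hK : T.factorial ≤ 2 ^ K) (hX : T.factorial * 2 ^ K ≤ X) (hR : 2 ≤ R) (hr : 2 ≤ r) :
    (#{m ∈ Ico 2 X | m ≡ c [MOD T.factorial] ∧ (n * m + 1).Prime} : ℝ) ≤
      2 * X / T.factorial.totient *
        (τ / Real.log R + n ^ 2 * (K + 2 * T.factorial) / Real.log r ^ 2) +
      (X / 2 ^ K * (2 * R ^ 6) + n ^ 2 * (2 ^ K * (3 * r ^ 12))) := by
  set Q := T.factorial
  have hQ : Q ≠ 0 := Nat.factorial_ne_zero T
  have hnQ : n ∣ Q := Nat.dvd_factorial (Nat.pos_of_ne_zero hn) (by omega)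
  have hlarge (p : ℕ) (hp : p.Prime) (hpQ : ¬p ∣ Q) : 2 < p ∧ n < p := by
    rw [hp.dvd_factorial] at hpQ
    omega
  set S := {t ∈ Icc 1 (X / 2 ^ K) | t.Coprime Q ∧ T < t ∧ IsTwinMultiplier n t}
  have hmem {t : ℕ} (ht : t ∈ S) : t ∈ Icc 1 (X / 2 ^ K) ∧ t.Coprime Q ∧ T < t ∧
      IsTwinMultiplier n t := mem_filter.1 ht
  have hlog : 0 < Real.log R := Real.log_pos (mod_cast hR)
  have hS_sum : ∑ t ∈ S, (t.totient : ℝ)⁻¹ ≤ τ := by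
    refine le_of_eq_of_le (sum_congr rfl fun t ht ↦ ?_) (hτ S fun t ht ↦ (hmem ht).2.2.1)
    rw [twinWeight, if_pos (hmem ht).2.2.2]
  have hlow := sum_card_multiples_prime_le hQ hnQ hK hR c (S := S)
    fun t ht ↦ ⟨(hmem ht).1, (hmem ht).2.1⟩
  have hhigh := sum_card_multiples_isTwinMultiplier_le hQ hlarge hX hr c
  have hcover := (card_le_card (filter_prime_subset_of_skip hn hc hskip X
    (pow_ne_zero K two_ne_zero))).trans ((card_union_le _ _).trans
      (add_le_add card_biUnion_le card_biUnion_le))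
  calc (#{m ∈ Ico 2 X | m ≡ c [MOD Q] ∧ (n * m + 1).Prime} : ℝ)
      ≤ (2 * X / (Q.totient * Real.log R) * ∑ t ∈ S, (t.totient : ℝ)⁻¹ +
          X / (2 ^ K : ℕ) * (2 * R ^ 6)) +
        n ^ 2 * (2 * X / (Q.totient * Real.log r ^ 2) * (K + 2 * Q) + 2 ^ K * (3 * r ^ 12)) :=
        (by exact_mod_cast hcover : _ ≤ _).trans (add_le_add hlow hhigh)
    _ ≤ (2 * X / (Q.totient * Real.log R) * τ + X / (2 ^ K : ℕ) * (2 * R ^ 6)) +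
        n ^ 2 * (2 * X / (Q.totient * Real.log r ^ 2) * (K + 2 * Q) + 2 ^ K * (3 * r ^ 12)) := by
        gcongr
    _ = _ := by
        push_cast
        field_simp
        ring

end SkippedValue
section AdmissibleResidue

theorem coprime_factorial_of_coprime_sievePrimorial {H T a : ℕ} (hH : a.Coprime H)
    (hprim : a.Coprime (sievePrimorial H T)) : a.Coprime T.factorial := by
  refine Nat.Coprime.symm (Nat.coprime_of_dvd fun p hp hpT hpa ↦ ?_)
  rw [hp.dvd_factorial] at hpT
  by_cases hpH : p ∣ H
  · exact Nat.not_coprime_of_dvd_of_dvd hp.one_lt hpa hpH hH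
  · exact Nat.not_coprime_of_dvd_of_dvd hp.one_lt hpa
      ((prime_dvd_sievePrimorial_iff hp).2 ⟨hpT, hpH⟩) hprim

theorem exists_coprime_factorial {n : ℕ} (hn : Even n) (T : ℕ) :
    ∃ c, c.Coprime T.factorial ∧ (n * c + 1).Coprime (n * T.factorial) := by
  set B := sievePrimorial (n + 1) T
  have hB : (n + 1).Coprime B := Nat.Coprime.symm (Nat.coprime_of_dvd fun p hp hpB ↦
    ((prime_dvd_sievePrimorial_iff hp).1 hpB).2)
  have hn2 : Nat.Coprime 2 (n + 1) := Nat.coprime_two_left.2 hn.add_one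
  -- `c ≡ n` makes `n * c + 1 ≡ 2` modulo the primes dividing `n + 1`, where `c ≡ 1` would fail.
  obtain ⟨c, hcn, hcB⟩ := Nat.chineseRemainder hB n 1
  have hnn : n * n + 1 ≡ 2 [MOD n + 1] :=
    Nat.modEq_iff_dvd.2 ⟨1 - n, by push_cast; ring⟩
  have hleft : (n * c + 1).Coprime (n + 1) :=
    (((hcn.mul_left n).add_right 1).trans hnn).gcd_eq.trans hn2
  have hright : (n * c + 1).Coprime B := by
    have h : n * c + 1 ≡ n + 1 [MOD B] := by simpa using (hcB.mul_left n).add_right 1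
    exact h.gcd_eq.trans hB
  refine ⟨c, coprime_factorial_of_coprime_sievePrimorial (hcn.gcd_eq.trans (by simp))
    (hcB.gcd_eq.trans (Nat.gcd_one_left B)), Nat.Coprime.mul_right (by simp)
      (coprime_factorial_of_coprime_sievePrimorial hleft hright)⟩

end AdmissibleResidue
section PrimesInDyadicBlocks

open ArithmeticFunction.vonMangoldt

/-- The `k`-th term of the Dirichlet series `∑ log p / p ^ x` over the primes `p ≡ a [MOD m]`. -/
noncomputable def primeSeriesTerm (m a : ℕ) (x : ℝ) (k : ℕ) : ℝ :=
  if k.Prime ∧ k ≡ a [MOD m] then Real.log k / (k : ℝ) ^ x else 0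

theorem primeSeriesTerm_nonneg (m a : ℕ) (x : ℝ) (k : ℕ) : 0 ≤ primeSeriesTerm m a x k := by
  have := Real.log_natCast_nonneg k
  unfold primeSeriesTerm
  positivity

theorem residueClass_div_rpow_le (m a : ℕ) {x : ℝ} (hx : 1 ≤ x) (k : ℕ) :
    residueClass (a : ZMod m) k / (k : ℝ) ^ x ≤
      primeSeriesTerm m a x k + (if k.Prime then 0 else residueClass (a : ZMod m) k) / k := by
  have hnonneg := residueClass_nonneg (a : ZMod m) k
  rcases Nat.eq_zero_or_pos k with rfl | hk
  · simp [primeSeriesTerm]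
  by_cases hp : k.Prime
  · by_cases hka : k ≡ a [MOD m]
    · have hΛ := (residueClass_le (a : ZMod m) k).trans_eq
        (ArithmeticFunction.vonMangoldt_apply_prime hp)
      simp only [primeSeriesTerm, hp, hka, and_self, if_true, zero_div, add_zero]
      gcongr
    · have hzero : residueClass (a : ZMod m) k = 0 := by
        apply Set.indicator_of_notMem
        exact fun h ↦ hka ((ZMod.natCast_eq_natCast_iff k a m).1 h)
      simp [primeSeriesTerm, hka, hzero]
  · have hle : (k : ℝ) ≤ (k : ℝ) ^ x := Real.self_le_rpow_of_one_le (mod_cast hk) hx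
    simp only [primeSeriesTerm, hp, false_and, if_false, zero_add]
    gcongr

theorem exists_inv_totient_div_sub_le_tsum_primeSeriesTerm {m a : ℕ} (hm : m ≠ 0)
    (ha : a.Coprime m) : ∃ C : ℝ, ∀ ε, 0 < ε → ε ≤ 1 → Summable (primeSeriesTerm m a (1 + ε)) →
      (m.totient : ℝ)⁻¹ / ε - C ≤ ∑' k, primeSeriesTerm m a (1 + ε) k := by
  have := NeZero.mk hm
  obtain ⟨C, hC⟩ := LSeries_residueClass_lower_bound ((ZMod.isUnit_iff_coprime a m).2 ha)
  have hnp := summable_residueClass_non_primes_div (a : ZMod m)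
  refine ⟨C + ∑' k : ℕ, (if k.Prime then 0 else residueClass (a : ZMod m) k) / k,
    fun ε hε hε1 hsum ↦ ?_⟩
  have hlower := hC (x := 1 + ε) ⟨by linarith, by linarith⟩
  have hupper : ∑' k : ℕ, residueClass (a : ZMod m) k / (k : ℝ) ^ (1 + ε) ≤
      ∑' k : ℕ, (primeSeriesTerm m a (1 + ε) k +
        (if k.Prime then 0 else residueClass (a : ZMod m) k) / k) := by
    have hle := residueClass_div_rpow_le m a (x := 1 + ε) (by linarith)
    have hbound := hsum.add hnp
    refine Summable.tsum_le_tsum hle (hbound.of_nonneg_of_le (fun k ↦ ?_) hle) hbound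
    exact div_nonneg (residueClass_nonneg _ k) (by positivity)
  rw [hsum.tsum_add hnp] at hupper
  rw [add_sub_cancel_left] at hlower
  linarith

theorem primeSeriesTerm_le_of_mem_Ico {m a i k : ℕ} {ε : ℝ} (hε : 0 ≤ ε)
    (hk : k ∈ Ico (2 ^ i) (2 ^ (i + 1))) :
    primeSeriesTerm m a (1 + ε) k ≤
      if k.Prime ∧ k ≡ a [MOD m] then ((i : ℝ) + 1) / 2 ^ i * ((1 / 2) ^ ε) ^ i else 0 := by
  obtain ⟨hik, hki⟩ := Finset.mem_Ico.1 hk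
  have hik' : (2 : ℝ) ^ i ≤ k := mod_cast hik
  have hk0 : (0 : ℝ) < k := (by positivity : (0 : ℝ) < 2 ^ i).trans_le hik'
  have hlog : Real.log k ≤ i + 1 := by
    calc Real.log k ≤ Real.log (2 ^ (i + 1)) := Real.log_le_log hk0 (mod_cast hki.le)
      _ = (i + 1) * Real.log 2 := by rw [Real.log_pow]; push_cast; rfl
      _ ≤ i + 1 := mul_le_of_le_one_right (by positivity) (by linarith [Real.log_two_lt_d9])
  have hsplit : ((i : ℝ) + 1) / 2 ^ i * ((1 / 2) ^ ε) ^ i = (i + 1) / ((2 : ℝ) ^ i) ^ (1 + ε) := by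
    rw [Real.rpow_add (by positivity), Real.rpow_one, one_div, Real.inv_rpow two_pos.le, inv_pow,
      ← Real.rpow_mul_natCast two_pos.le, ← Real.rpow_natCast_mul two_pos.le, mul_comm ε,
      div_mul_eq_div_div, div_eq_mul_inv (_ / _)]
  unfold primeSeriesTerm
  split_ifs
  · rw [hsplit]
    gcongr
  · exact le_rfl

theorem sum_Ico_primeSeriesTerm_le (m a i : ℕ) {ε : ℝ} (hε : 0 ≤ ε) :
    ∑ k ∈ Ico (2 ^ i) (2 ^ (i + 1)), primeSeriesTerm m a (1 + ε) k ≤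
      #{p ∈ Ico (2 ^ i) (2 ^ (i + 1)) | p.Prime ∧ p ≡ a [MOD m]} *
        (((i : ℝ) + 1) / 2 ^ i * ((1 / 2) ^ ε) ^ i) := by
  refine (sum_le_sum fun k hk ↦ primeSeriesTerm_le_of_mem_Ico hε hk).trans_eq ?_
  rw [← sum_filter, sum_const, nsmul_eq_mul]

theorem sum_Ico_primeSeriesTerm_le_add {m a i₀ : ℕ} {ε : ℝ} (hε : 0 ≤ ε) (hi₀ : i₀ ≠ 0)
    (hfew : ∀ i ≥ i₀, (#{p ∈ Ico (2 ^ i) (2 ^ (i + 1)) | p.Prime ∧ p ≡ a [MOD m]} : ℝ) ≤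
      2 ^ i / (8 * i * m.totient)) (i : ℕ) :
    ∑ k ∈ Ico (2 ^ i) (2 ^ (i + 1)), primeSeriesTerm m a (1 + ε) k ≤
      (if i ∈ range i₀ then (i : ℝ) + 1 else 0) + (4 * (m.totient : ℝ))⁻¹ * ((1 / 2) ^ ε) ^ i := by
  refine (sum_Ico_primeSeriesTerm_le m a i hε).trans ?_
  have hpow : ((1 / 2 : ℝ) ^ ε) ^ i ≤ 1 :=
    pow_le_one₀ (by positivity) (Real.rpow_le_one (by norm_num) (by norm_num) hε)
  rcases lt_or_ge i i₀ with hi | hi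
  · have hcard : (#{p ∈ Ico (2 ^ i) (2 ^ (i + 1)) | p.Prime ∧ p ≡ a [MOD m]} : ℝ) ≤ 2 ^ i := by
      have h : #{p ∈ Ico (2 ^ i) (2 ^ (i + 1)) | p.Prime ∧ p ≡ a [MOD m]} ≤ 2 ^ i :=
        (card_filter_le _ _).trans (by rw [Nat.card_Ico, pow_succ]; lia)
      exact_mod_cast h
    rw [if_pos (mem_range.2 hi)]
    calc (#{p ∈ Ico (2 ^ i) (2 ^ (i + 1)) | p.Prime ∧ p ≡ a [MOD m]} : ℝ) *
          (((i : ℝ) + 1) / 2 ^ i * ((1 / 2) ^ ε) ^ i)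
        ≤ 2 ^ i * (((i : ℝ) + 1) / 2 ^ i * 1) := by gcongr
      _ = (i : ℝ) + 1 := by field_simp
      _ ≤ (i : ℝ) + 1 + (4 * (m.totient : ℝ))⁻¹ * ((1 / 2) ^ ε) ^ i :=
        le_add_of_nonneg_right (by positivity)
  · have hi1 : (1 : ℝ) ≤ i := mod_cast (Nat.one_le_iff_ne_zero.2 hi₀).trans hi
    rw [if_neg (by simpa using hi), zero_add]
    calc (#{p ∈ Ico (2 ^ i) (2 ^ (i + 1)) | p.Prime ∧ p ≡ a [MOD m]} : ℝ) *
          (((i : ℝ) + 1) / 2 ^ i * ((1 / 2) ^ ε) ^ i)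
        ≤ 2 ^ i / (8 * i * m.totient) * ((i + i) / 2 ^ i * ((1 / 2) ^ ε) ^ i) := by
          gcongr
          exact hfew i hi
      _ = (4 * (m.totient : ℝ))⁻¹ * ((1 / 2) ^ ε) ^ i := by
          field_simp
          norm_num

theorem summable_and_tsum_half_rpow_pow_le {ε : ℝ} (hε : 0 < ε) (hε1 : ε ≤ 1) :
    Summable (fun i : ℕ ↦ ((1 / 2 : ℝ) ^ ε) ^ i) ∧ ∑' i : ℕ, ((1 / 2 : ℝ) ^ ε) ^ i ≤ 2 / ε := by
  have hratio : (1 / 2 : ℝ) ^ ε ≤ 1 - ε / 2 := by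
    have h := rpow_one_add_le_one_add_mul_self (s := -(1 / 2)) (by norm_num) hε.le hε1
    norm_num at h ⊢
    linarith
  have hnonneg : 0 ≤ (1 / 2 : ℝ) ^ ε := by positivity
  refine ⟨summable_geometric_of_lt_one hnonneg (by linarith), ?_⟩
  rw [tsum_geometric_of_lt_one hnonneg (by linarith), ← inv_div ε 2]
  exact inv_anti₀ (by positivity) (by linarith)

theorem exists_le_of_card_primes_le {m a i₀ : ℕ} (hm : m ≠ 0) (ha : a.Coprime m) (hi₀ : i₀ ≠ 0)
    (hfew : ∀ i ≥ i₀, (#{p ∈ Ico (2 ^ i) (2 ^ (i + 1)) | p.Prime ∧ p ≡ a [MOD m]} : ℝ) ≤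
      2 ^ i / (8 * i * m.totient)) :
    ∃ C : ℝ, ∀ ε, 0 < ε → ε ≤ 1 → (2 * (m.totient : ℝ))⁻¹ / ε ≤ C := by
  obtain ⟨C, hC⟩ := exists_inv_totient_div_sub_le_tsum_primeSeriesTerm hm ha
  refine ⟨C + ∑ i ∈ range i₀, if i ∈ range i₀ then (i : ℝ) + 1 else 0, fun ε hε hε1 ↦ ?_⟩
  obtain ⟨hgeom, hgeom_le⟩ := summable_and_tsum_half_rpow_pow_le hε hε1
  have hgeom' := hgeom.mul_left (4 * (m.totient : ℝ))⁻¹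
  have hinit := hasSum_sum_of_ne_finset_zero (f := fun i : ℕ ↦
    if i ∈ range i₀ then (i : ℝ) + 1 else 0) (s := range i₀)
    (L := .unconditional ℕ) fun i hi ↦ if_neg hi
  obtain ⟨hsum, hupper⟩ := summable_and_tsum_le_of_dyadic (primeSeriesTerm_nonneg m a (1 + ε))
    (hinit.summable.add hgeom') (sum_Ico_primeSeriesTerm_le_add hε.le hi₀ hfew)
  have hzero : primeSeriesTerm m a (1 + ε) 0 = 0 := by simp [primeSeriesTerm]
  rw [hzero, zero_add, hinit.summable.tsum_add hgeom', hinit.tsum_eq, tsum_mul_left] at hupper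
  have htail : (4 * (m.totient : ℝ))⁻¹ * ∑' i : ℕ, ((1 / 2 : ℝ) ^ ε) ^ i ≤
      (2 * (m.totient : ℝ))⁻¹ / ε := by
    refine (mul_le_mul_of_nonneg_left hgeom_le (by positivity)).trans_eq ?_
    field_simp
    norm_num
  have hdouble : (m.totient : ℝ)⁻¹ / ε =
      (2 * (m.totient : ℝ))⁻¹ / ε + (2 * (m.totient : ℝ))⁻¹ / ε := by
    field_simp
    norm_num
  linarith [hC ε hε hε1 hsum]

theorem frequently_two_pow_div_lt_card_primes {m a : ℕ} (hm : m ≠ 0) (ha : a.Coprime m) :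
    ∃ᶠ i : ℕ in atTop, (2 : ℝ) ^ i / (8 * i * m.totient) <
      #{p ∈ Ico (2 ^ i) (2 ^ (i + 1)) | p.Prime ∧ p ≡ a [MOD m]} := by
  by_contra hfew
  rw [not_frequently] at hfew
  obtain ⟨i₀, hi₀⟩ := (hfew.and (eventually_ne_atTop 0)).exists_forall_of_atTop
  obtain ⟨C, hC⟩ := exists_le_of_card_primes_le hm ha (hi₀ i₀ le_rfl).2
    fun i hi ↦ not_lt.1 (hi₀ i hi).1
  have hφ : (0 : ℝ) < (2 * (m.totient : ℝ))⁻¹ := by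
    have := Nat.totient_pos.2 (Nat.pos_of_ne_zero hm)
    positivity
  have hlim : Tendsto (fun ε : ℝ ↦ (2 * (m.totient : ℝ))⁻¹ / ε) (nhdsWithin 0 (Set.Ioi 0)) atTop :=
    tendsto_inv_nhdsGT_zero.const_mul_atTop hφ
  obtain ⟨ε, hε, hε0, hε1⟩ :=
    ((hlim.eventually_gt_atTop C).and (Ioc_mem_nhdsGT zero_lt_one)).exists
  exact (hC ε hε0 hε1).not_gt hε

end PrimesInDyadicBlocks
section DyadicUpperBound

theorem eventually_sum_twinWeight_le (n : ℕ) {τ : ℝ} (hτ : 0 < τ) :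
    ∀ᶠ T in atTop, ∀ S : Finset ℕ, (∀ t ∈ S, T < t) → ∑ t ∈ S, twinWeight n t ≤ τ := by
  obtain ⟨s, hs⟩ := summable_iff_vanishing_norm.1 (summable_twinWeight n) τ hτ
  filter_upwards [eventually_ge_atTop (s.sup id)] with T hT S hS
  have hdisj : Disjoint S s := disjoint_left.2 fun t htS hts ↦
    ((hS t htS).trans_le ((le_sup (f := id) hts).trans hT)).false
  exact (le_abs_self _).trans (hs S hdisj).le

theorem card_primes_modEq_le {n Y : ℕ} (hn : n ≠ 0) (hY : n + 1 < Y) (c Q X : ℕ) :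
    #{q ∈ Ico Y X | q.Prime ∧ q ≡ n * c + 1 [MOD n * Q]} ≤
      #{m ∈ Ico 2 X | m ≡ c [MOD Q] ∧ (n * m + 1).Prime} := by
  refine (card_le_card fun q hq ↦ ?_).trans (card_image_le (f := fun m ↦ n * m + 1))
  obtain ⟨hqYX, hq, hmod⟩ := mem_filter.1 hq
  obtain ⟨hqY, hqX⟩ := Finset.mem_Ico.1 hqYX
  obtain ⟨m, hm⟩ : n ∣ q - 1 := by
    have h1 : 1 ≡ q [MOD n] := by
      simpa using ((hmod.of_mul_right Q).trans ((Nat.modEq_zero_iff_dvd.2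
        (dvd_mul_right n c)).add_right 1)).symm
    exact (Nat.modEq_iff_dvd' hq.one_le).1 h1
  obtain rfl : q = n * m + 1 := by have := hq.one_le; lia
  have hmc : m ≡ c [MOD Q] := Nat.ModEq.mul_left_cancel' hn (Nat.ModEq.add_right_cancel' 1 hmod)
  have hm2 : 2 ≤ m := by
    by_contra! h
    have : n * m ≤ n * 1 := Nat.mul_le_mul_left n (by lia)
    lia
  have hmX : m < X := by
    have := Nat.le_mul_of_pos_left m (Nat.pos_of_ne_zero hn)
    lia
  exact mem_image.2 ⟨m, mem_filter.2 ⟨Finset.mem_Ico.2 ⟨hm2, hmX⟩, hmc, hq⟩, rfl⟩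

theorem card_prime_lt_two_pow_le_of_skip {n T c i u v : ℕ} {τ : ℝ} (hn : n ≠ 0)
    (hT : max n 2 ≤ T) (hc : c.Coprime T.factorial)
    (hskip : ∀ s, 0 < s → omegaStar (n * s) ≠ omegaStar n + 1)
    (hτ : ∀ S : Finset ℕ, (∀ t ∈ S, T < t) → ∑ t ∈ S, twinWeight n t ≤ τ)
    (hu : T.factorial ≤ u) (hv : v ≠ 0) (hi : 8 * u + 12 * v ≤ i) :
    (#{m ∈ Ico 2 (2 ^ (i + 1)) | m ≡ c [MOD T.factorial] ∧ (n * m + 1).Prime} : ℝ) ≤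
      4 * 2 ^ i / T.factorial.totient *
        (τ / (u * Real.log 2) + 9 * n ^ 2 * u / (v * Real.log 2) ^ 2) +
      (4 + 3 * n ^ 2) * (2 ^ i / 2 ^ u) := by
  set Q := T.factorial
  have hQ : 0 < Q := T.factorial_pos
  have hQu : Q ≤ 2 ^ u := hu.trans Nat.lt_two_pow_self.le
  have hK : Q ≤ 2 ^ (7 * u) := hQu.trans (pow_le_pow_right₀ one_le_two (by lia))
  have hX : Q * 2 ^ (7 * u) ≤ 2 ^ (i + 1) := by
    calc Q * 2 ^ (7 * u) ≤ 2 ^ u * 2 ^ (7 * u) := by gcongr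
      _ = 2 ^ (8 * u) := by ring
      _ ≤ 2 ^ (i + 1) := pow_le_pow_right₀ one_le_two (by lia)
  have hbound := card_prime_le_of_skip hn hT hc hskip hτ hK hX
    (Nat.le_self_pow (by lia) 2 : 2 ≤ 2 ^ u) (Nat.le_self_pow hv 2)
  have hlow : (2 : ℝ) ^ (i + 1) / 2 ^ (7 * u) * (2 * (2 ^ u) ^ 6) = 4 * (2 ^ i / 2 ^ u) := by
    field_simp
    ring
  have hhigh : (2 : ℝ) ^ (7 * u) * (3 * (2 ^ v) ^ 12) ≤ 3 * (2 ^ i / 2 ^ u) := by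
    rw [mul_left_comm]
    gcongr
    rw [le_div_iff₀ (by positivity), ← pow_mul, ← pow_add, ← pow_add]
    exact pow_le_pow_right₀ one_le_two (by lia)
  have hsum : ((7 * u : ℕ) : ℝ) + 2 * Q ≤ 9 * u := by
    have : (Q : ℝ) ≤ u := mod_cast hu
    push_cast
    linarith
  push_cast [Real.log_pow] at hbound hsum
  refine hbound.trans (add_le_add ?_ ?_)
  · rw [pow_succ, show (2 : ℝ) * (2 ^ i * 2) = 4 * 2 ^ i by ring, mul_assoc 9, mul_left_comm 9]
    gcongr
  · rw [hlow, add_mul, mul_right_comm 3, mul_comm (3 * _)]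
    gcongr

theorem le_two_mul_mul_div {E i : ℕ} (hE : E ≠ 0) (hi : E ≤ i) : i ≤ 2 * E * (i / E) := by
  have hlt := Nat.lt_mul_div_succ i (Nat.pos_of_ne_zero hE)
  have hle : E * 1 ≤ E * (i / E) :=
    Nat.mul_le_mul_left E (Nat.div_pos hi (Nat.pos_of_ne_zero hE))
  lia

theorem eventually_mul_le_two_pow_div (A : ℕ) {E : ℕ} (hE : E ≠ 0) :
    ∀ᶠ i in atTop, A * i ≤ 2 ^ (i / E) := by
  have hlim := (tendsto_pow_const_div_const_pow_of_one_lt 1 (one_lt_two : (1 : ℝ) < 2)).comp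
    (Nat.tendsto_div_const_atTop hE)
  have hpos : (0 : ℝ) < ((A * (2 * E) + 1 : ℕ) : ℝ)⁻¹ := by positivity
  filter_upwards [hlim.eventually_lt_const hpos, eventually_ge_atTop E] with i hlt hi
  rw [Function.comp_apply, pow_one, div_lt_iff₀ (by positivity), inv_mul_eq_div,
    lt_div_iff₀ (by positivity)] at hlt
  norm_cast at hlt
  calc A * i ≤ A * (2 * E * (i / E)) := Nat.mul_le_mul_left A (le_two_mul_mul_div hE hi)
    _ ≤ i / E * (A * (2 * E) + 1) := by lia
    _ ≤ 2 ^ (i / E) := hlt.le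

theorem mul_main_term_le {n E i u v τ : ℝ} (hE : 0 < E) (hu : 0 < u) (hv : 0 < v)
    (hτ : 0 ≤ τ) (huE : u * E ≤ i) (hiu : i ≤ 2 * E * u) (hiv : i ≤ 48 * v) :
    i * (τ / (u * Real.log 2) + 9 * n ^ 2 * u / (v * Real.log 2) ^ 2) ≤
      4 * E * τ + 82944 * n ^ 2 / E := by
  have hlog : 1 / 2 ≤ Real.log 2 := by linarith [Real.log_two_gt_d9]
  have hfirst : i * (τ / (u * Real.log 2)) ≤ 4 * E * τ := by
    rw [← mul_div_assoc, div_le_iff₀ (by positivity)]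
    calc i * τ ≤ 2 * E * u * τ := by gcongr
      _ = 4 * E * τ * (u * (1 / 2)) := by ring
      _ ≤ 4 * E * τ * (u * Real.log 2) := by gcongr
  have hsecond : i * (9 * n ^ 2 * u / (v * Real.log 2) ^ 2) ≤ 82944 * n ^ 2 / E := by
    rw [← mul_div_assoc, div_le_div_iff₀ (by positivity) hE]
    calc i * (9 * n ^ 2 * u) * E = 9 * n ^ 2 * (i * (u * E)) := by ring
      _ ≤ 9 * n ^ 2 * ((48 * v) * (48 * v)) :=
        mul_le_mul_of_nonneg_left
          (mul_le_mul hiv (huE.trans hiv) (by positivity) (by positivity)) (by positivity)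
      _ = 82944 * n ^ 2 * (v * (1 / 2)) ^ 2 := by ring
      _ ≤ 82944 * n ^ 2 * (v * Real.log 2) ^ 2 := by gcongr
  rw [mul_add]
  exact add_le_add hfirst hsecond

theorem main_term_add_error_le {n φ i M P W : ℝ} (hn : 0 < n) (hφ : 0 < φ) (hi : 0 < i) (hP : 0 ≤ P)
    (hW : 0 < W) (hmain : i * M ≤ (64 * n)⁻¹) (herror : 16 * (4 + 3 * n ^ 2) * (n * φ) * i ≤ W) :
    4 * P / φ * M + (4 + 3 * n ^ 2) * (P / W) ≤ P / (8 * i * (n * φ)) := by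
  calc 4 * P / φ * M + (4 + 3 * n ^ 2) * (P / W)
      = 4 * P / (φ * i) * (i * M) + P / (W / (4 + 3 * n ^ 2)) := by field_simp
    _ ≤ 4 * P / (φ * i) * (64 * n)⁻¹ + P / (16 * (n * φ) * i) := by
        gcongr
        rw [le_div_iff₀ (by positivity)]
        linarith
    _ = P / (8 * i * (n * φ)) := by
        field_simp
        ring

end DyadicUpperBound
section Contradiction

theorem totient_mul_of_dvd {n Q : ℕ} (hn : n ≠ 0) (hnQ : n ∣ Q) :
    (n * Q).totient = n * Q.totient := by
  have h := Nat.totient_gcd_mul_totient_mul n Q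
  rw [Nat.gcd_eq_left hnQ, mul_assoc, mul_comm Q.totient] at h
  exact Nat.eq_of_mul_eq_mul_left (Nat.totient_pos.2 (Nat.pos_of_ne_zero hn)) h

theorem eventually_card_primes_le_of_skip {n T c : ℕ} (hn : n ≠ 0) (hT : max n 2 ≤ T)
    (hc : c.Coprime T.factorial) (hskip : ∀ s, 0 < s → omegaStar (n * s) ≠ omegaStar n + 1)
    (hτ : ∀ S : Finset ℕ, (∀ t ∈ S, T < t) → ∑ t ∈ S, twinWeight n t ≤ (2 ^ 33 * n ^ 4 : ℝ)⁻¹) :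
    ∀ᶠ i : ℕ in atTop,
      (#{p ∈ Ico (2 ^ i) (2 ^ (i + 1)) | p.Prime ∧ p ≡ n * c + 1 [MOD n * T.factorial]} : ℝ) ≤
        2 ^ i / (8 * i * (n * T.factorial.totient)) := by
  have : 0 < n := Nat.pos_of_ne_zero hn
  have : 0 < T.factorial.totient := Nat.totient_pos.2 T.factorial_pos
  -- The sieve levels are `2 ^ (i / E)` for `b` and `2 ^ (i / 24)` for `s`. The second sieve
  -- contributes `O(n ^ 3 / E)` of the expected count, which dictates `E`; the first contributes
  -- `O(n * E)` times the tail of the twin multipliers, which dictates the bound in `hτ`.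
  obtain ⟨E, hE⟩ : ∃ E, E = 2 ^ 24 * n ^ 3 := ⟨_, rfl⟩
  have hE0 : E ≠ 0 := by rw [hE]; positivity
  have hE28 : 28 ≤ E := by
    have : 0 < n ^ 3 := by positivity
    lia
  filter_upwards [eventually_mul_le_two_pow_div (16 * (4 + 3 * n ^ 2) * (n * T.factorial.totient))
    hE0, (Nat.tendsto_div_const_atTop hE0).eventually_ge_atTop T.factorial,
    eventually_ge_atTop (n + 1), eventually_ge_atTop E] with i herror hu hni hEi
  have hu0 : 0 < i / E := T.factorial_pos.trans_le hu
  have hv0 : 0 < i / 24 := Nat.div_pos (by lia) (by norm_num)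
  have huE : i / E * E ≤ i := Nat.div_mul_le_self i E
  have hu28 : i / E * 28 ≤ i := (Nat.mul_le_mul_left _ hE28).trans huE
  have htransfer := card_primes_modEq_le hn (hni.trans_lt Nat.lt_two_pow_self) c T.factorial
    (2 ^ (i + 1))
  have hbound := card_prime_lt_two_pow_le_of_skip hn hT hc hskip hτ hu hv0.ne'
    (by lia : 8 * (i / E) + 12 * (i / 24) ≤ i)
  refine (Nat.cast_le.2 htransfer).trans (hbound.trans (main_term_add_error_le (by positivity)
    (by positivity) (mod_cast (by lia : 0 < i)) (by positivity) (by positivity) ?_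
    (mod_cast herror)))
  refine (mul_main_term_le (E := E) (by positivity)
    (by positivity) (by positivity) (by positivity) (mod_cast huE)
    (mod_cast le_two_mul_mul_div hE0 hEi)
    (mod_cast le_two_mul_mul_div (by norm_num : 24 ≠ 0) (by lia))).trans ?_
  have hE' : (E : ℝ) = 2 ^ 24 * n ^ 3 := mod_cast hE
  rw [hE']
  field_simp
  norm_num

theorem exists_omegaStar_mul_eq_add_one {n : ℕ} (hn : n ≠ 0) (heven : Even n) :
    ∃ s, 0 < s ∧ omegaStar (n * s) = omegaStar n + 1 := by
  by_contra! hskip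
  have hτ0 : (0 : ℝ) < (2 ^ 33 * n ^ 4 : ℝ)⁻¹ := by positivity
  obtain ⟨T, hτ, hT⟩ :=
    ((eventually_sum_twinWeight_le n hτ0).and (eventually_ge_atTop (max n 2))).exists
  obtain ⟨c, hc, hc'⟩ := exists_coprime_factorial heven T
  obtain ⟨i, hlower, hupper⟩ := ((frequently_two_pow_div_lt_card_primes
    (mul_ne_zero hn T.factorial_ne_zero) hc').and_eventually
      (eventually_card_primes_le_of_skip hn hT hc hskip hτ)).exists
  have hnT : n ∣ T.factorial := Nat.dvd_factorial (Nat.pos_of_ne_zero hn) (by lia)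
  rw [totient_mul_of_dvd hn hnT, Nat.cast_mul] at hlower
  exact hupper.not_gt hlower

theorem omegaStar_le_one_of_odd {n : ℕ} (hn : Odd n) : omegaStar n ≤ 1 := by
  have hsub : {d ∈ n.divisors | (d + 1).Prime} ⊆ {1} := by
    intro d hd
    obtain ⟨hdn, hp⟩ := mem_filter.1 hd
    have hodd := hn.of_dvd_nat (Nat.dvd_of_mem_divisors hdn)
    have := hp.even_iff.1 hodd.add_one
    simpa using this
  exact card_le_card hsub

end Contradiction

theorem level_set_nonempty (k : ℕ) (hk : 0 < k) :
    ∃ n : ℕ, 0 < n ∧ omegaStar n = k := by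
  induction k, hk using Nat.le_induction with
  | base => exact ⟨1, one_pos, by decide⟩
  | succ k hk ih =>
    obtain rfl | hk := hk.eq_or_lt
    · exact ⟨2, two_pos, by decide⟩
    obtain ⟨n, hn, rfl⟩ := ih
    have heven : Even n := by
      by_contra hodd
      exact (omegaStar_le_one_of_odd (Nat.not_even_iff_odd.1 hodd)).not_gt hk
    obtain ⟨s, hs, hns⟩ := exists_omegaStar_mul_eq_add_one hn.ne' heven
    exact ⟨n * s, Nat.mul_pos hn hs, hns⟩
end
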